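/- arXiv:2201.10631 — 4 statements merged into one kernel-verified Lean document; each statement's English description precedes it below -/
import Mathlib

section
/- Let k ≥ 1 be an integer and let n be a positive integer with k ≤ n/2. For every similarity matrix S ∈ [0,1]^{n×n}, there exist a partition of [n] into 2k+1 pairwise disjoint subsets covering [n], each of size ⌊n/(2k+1)⌋ or ⌈n/(2k+1)⌉, and an assignment M with loads k whose similarity equals Opt_S, such that for every (i,j) ∈ M the indices i and j lie in different subsets of the partition. -/
/-- An assignment with loads `k`: each agent reviews exactly `k` submissions,
each submission receives exactly `k` reviews, and no agent reviews their own submission. -/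
def IsAssignment (n k : ℕ) (M : Finset (Fin n × Fin n)) : Prop :=
  (∀ i : Fin n, (M.filter fun p => p.1 = i).card = k) ∧
  (∀ j : Fin n, (M.filter fun p => p.2 = j).card = k) ∧
  ∀ i : Fin n, (i, i) ∉ M

/-- The total similarity of an assignment. -/
noncomputable def simVal {n : ℕ} (S : Fin n → Fin n → ℝ) (M : Finset (Fin n × Fin n)) : ℝ :=
  ∑ p ∈ M, S p.1 p.2

/-- The optimum similarity over all assignments with loads `k`. -/
noncomputable def OptSim (n k : ℕ) (S : Fin n → Fin n → ℝ) : ℝ :=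
  sSup {x : ℝ | ∃ M : Finset (Fin n × Fin n), IsAssignment n k M ∧ simVal S M = x}

/-- `M` respects the partition `(A₁, A₂)`: each assigned pair is split across the two subsets. -/
def Respects {n : ℕ} (A₁ A₂ : Finset (Fin n)) (M : Finset (Fin n × Fin n)) : Prop :=
  ∀ p ∈ M, (p.1 ∈ A₁ ∧ p.2 ∈ A₂) ∨ (p.1 ∈ A₂ ∧ p.2 ∈ A₁)

namespace EquitableColoring

open Finset Relation
open scoped Classical

variable {V C : Type}

/-- `f` is a proper colouring of `G`. -/
def Proper (G : SimpleGraph V) (f : V → C) : Prop :=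
  ∀ x y, G.Adj x y → f x ≠ f y

/-- All colour classes of `f` have size `s`, except that class `a` misses one vertex and
class `b` has one extra vertex (these cancel when `a = b`). -/
def NearEq [Fintype V] (s : ℕ) (f : V → C) (a b : C) : Prop :=
  ∀ c, #{x | f x = c} + (if c = a then 1 else 0) = s + if c = b then 1 else 0

/-- Some vertex of colour `c` has no neighbour of colour `d`. -/
def Movable (G : SimpleGraph V) (f : V → C) (c d : C) : Prop :=
  ∃ x, f x = c ∧ ∀ y, G.Adj x y → f y ≠ d

/-- The colour `a` can be reached from `c` in the digraph of movable pairs. -/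
def Accessible (G : SimpleGraph V) (f : V → C) (a c : C) : Prop :=
  ReflTransGen (Movable G f) c a

/-- The colour `a` can be reached from `c` without touching the colour `w`. -/
def AccAvoid (G : SimpleGraph V) (f : V → C) (a w c : C) : Prop :=
  ReflTransGen (fun c d => Movable G f c d ∧ c ≠ w ∧ d ≠ w) c a

lemma AccAvoid.acc {G : SimpleGraph V} {f : V → C} {a w c : C} (h : AccAvoid G f a w c) :
    Accessible G f a c :=
  ReflTransGen.mono (fun _ _ h => h.1) _ _ h

lemma card_update [Fintype V] (f : V → C) (u : V) (d c : C) :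
    #{x | Function.update f u d x = c} + (if c = f u then 1 else 0)
      = #{x | f x = c} + if c = d then 1 else 0 := by
  simp only [card_filter]
  rw [← add_sum_erase univ _ (mem_univ u), ← add_sum_erase univ (fun x => if f x = c then 1 else 0)
    (mem_univ u)]
  have : ∑ x ∈ univ.erase u, (if Function.update f u d x = c then 1 else 0)
      = ∑ x ∈ univ.erase u, (if f x = c then 1 else 0) := by
    refine sum_congr rfl fun x hx => ?_
    rw [Function.update_of_ne (ne_of_mem_erase hx)]
  rw [this, Function.update_self]
  simp only [eq_comm (a := c)]
  omega

lemma NearEq.update [Fintype V] {s : ℕ} {f : V → C} {a : C} {u : V}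
    (h : NearEq s f a (f u)) (d : C) :
    NearEq s (Function.update f u d) a d := by
  intro c
  have h1 := card_update f u d c
  have h2 := h c
  omega

lemma Proper.update {G : SimpleGraph V} {f : V → C} (h : Proper G f) {u : V} {d : C}
    (hd : ∀ y, G.Adj u y → f y ≠ d) : Proper G (Function.update f u d) := by
  intro x y hxy
  by_cases hx : x = u
  · subst hx
    rw [Function.update_self, Function.update_of_ne hxy.ne']
    exact (hd y hxy).symm
  · rw [Function.update_of_ne hx]
    by_cases hy : y = u
    · subst hy
      rw [Function.update_self]
      exact hd x hxy.symm
    · rw [Function.update_of_ne hy]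
      exact h x y hxy

/-- A rank function witnessing reachability of `a`. -/
lemma exists_rank (R : C → C → Prop) (a : C) :
    ∃ ρ : C → ℕ, ∀ c, ReflTransGen R c a → c ≠ a →
      ∃ d, R c d ∧ ReflTransGen R d a ∧ ρ d < ρ c := by
  let S : ℕ → C → Prop := fun n => Nat.rec (fun c => c = a) (fun _ T c => ∃ d, R c d ∧ T d) n
  have hS0 : ∀ c, S 0 c ↔ c = a := fun c => Iff.rfl
  have hS : ∀ n c, S (n + 1) c ↔ ∃ d, R c d ∧ S n d := fun n c => Iff.rfl
  have hreach : ∀ n c, S n c → ReflTransGen R c a := by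
    intro n
    induction n with
    | zero => intro c hc; rw [(hS0 c).1 hc]
    | succ n ih =>
      intro c hc
      obtain ⟨d, hd, hn⟩ := (hS n c).1 hc
      exact ReflTransGen.head hd (ih d hn)
  have hex : ∀ c, ReflTransGen R c a → ∃ n, S n c := by
    intro c hc
    induction hc using ReflTransGen.head_induction_on with
    | refl => exact ⟨0, rfl⟩
    | head h _ ih =>
      obtain ⟨n, hn⟩ := ih
      exact ⟨n + 1, _, h, hn⟩
  refine ⟨fun c => sInf {n | S n c}, fun c hc hca => ?_⟩
  have hmem : S (sInf {n | S n c}) c := Nat.sInf_mem (s := {n | S n c}) (hex c hc)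
  obtain ⟨n, hn⟩ : ∃ n, sInf {n | S n c} = n + 1 := by
    refine Nat.exists_eq_succ_of_ne_zero fun h0 => hca ?_
    rw [h0] at hmem
    exact hmem
  rw [hn] at hmem
  obtain ⟨d, hd, hnd⟩ := (hS n c).1 hmem
  refine ⟨d, hd, hreach n d hnd, ?_⟩
  have : sInf {n | S n d} ≤ n := Nat.sInf_le hnd
  show sInf {n | S n d} < sInf {n | S n c}
  omega

/-- Shifting one vertex along each edge of a path from the large class to the small class. -/
lemma exists_equitable_of_rank [Fintype V] {G : SimpleGraph V} {s : ℕ} {a : C}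
    (ρ : C → ℕ) (P : C → Prop) :
    ∀ (n : ℕ) (f : V → C) (b : C), ρ b ≤ n → P b → Proper G f → NearEq s f a b →
      (∀ c, P c → ρ c ≤ ρ b → c ≠ a → ∃ d, Movable G f c d ∧ P d ∧ ρ d < ρ c) →
      ∃ f' : V → C, Proper G f' ∧ NearEq s f' a a := by
  intro n
  induction n with
  | zero =>
    intro f b hb hPb hf hs hstep
    by_cases hba : b = a
    · exact ⟨f, hf, hba ▸ hs⟩
    · obtain ⟨d, -, -, hd⟩ := hstep b hPb le_rfl hba
      omega
  | succ n ih =>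
    intro f b hb hPb hf hs hstep
    by_cases hba : b = a
    · exact ⟨f, hf, hba ▸ hs⟩
    obtain ⟨d, ⟨x, hx, hfree⟩, hPd, hd⟩ := hstep b hPb le_rfl hba
    subst hx
    refine ih (Function.update f x d) d (by omega) hPd (hf.update hfree) (hs.update d) ?_
    intro c hPc hc hca
    obtain ⟨e, ⟨w, hw, hwfree⟩, hPe, he⟩ := hstep c hPc (by omega) hca
    refine ⟨e, ⟨w, ?_, fun v hv => ?_⟩, hPe, he⟩
    · rw [Function.update_of_ne, hw]
      rintro rfl
      rw [hw] at hd
      omega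
    · by_cases hvx : v = x
      · subst hvx
        rw [Function.update_self]
        rintro rfl
        omega
      · rw [Function.update_of_ne hvx]
        exact hwfree v hv

/-- An accessible colour `u ≠ a` has a step into a colour that reaches `a` avoiding `u`. -/
lemma exists_movable_accAvoid {G : SimpleGraph V} {f : V → C} {a u : C} (hu : Accessible G f a u)
    (hua : u ≠ a) : ∃ d, Movable G f u d ∧ d ≠ u ∧ AccAvoid G f a u d := by
  have key : ∀ c, Accessible G f a c → (c ≠ u ∧ AccAvoid G f a u c) ∨
      ∃ d, Movable G f u d ∧ d ≠ u ∧ AccAvoid G f a u d := by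
    intro c hc
    induction hc using ReflTransGen.head_induction_on with
    | refl => exact Or.inl ⟨hua.symm, ReflTransGen.refl⟩
    | @head c d h _ ih =>
      rcases ih with ⟨hd, hacc⟩ | h'
      · by_cases hcu : c = u
        · subst hcu
          exact Or.inr ⟨d, h, hd, hacc⟩
        · exact Or.inl ⟨hcu, ReflTransGen.head ⟨h, hcu, hd⟩ hacc⟩
      · exact Or.inr h'
  rcases key u hu with h | h
  · exact absurd rfl h.1
  · exact h

/-- A nonempty family `T` of accessible colours, each of which is avoidable by all the other
accessible colours, with movable pairs leaving `T` only towards a single colour `u`. -/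
lemma exists_terminal_family [Fintype C] {G : SimpleGraph V} {f : V → C} {a : C}
    (hne : ∃ c, Accessible G f a c ∧ c ≠ a) :
    ∃ (T : Finset C) (u : C), T.Nonempty ∧ (∀ c ∈ T, Accessible G f a c) ∧ a ∉ T ∧
      Accessible G f a u ∧ u ∉ T ∧
      (∀ w ∈ T, ∀ c, Accessible G f a c → c ≠ w → AccAvoid G f a w c) ∧
      (∀ w ∈ T, ∀ d, Accessible G f a d → d ∉ T → d ≠ u → ¬ Movable G f w d) := by
  let T : C → Finset C := fun u => {c | Accessible G f a c ∧ c ≠ u ∧ ¬ AccAvoid G f a u c}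
  have hT : ∀ u c, c ∈ T u ↔ Accessible G f a c ∧ c ≠ u ∧ ¬ AccAvoid G f a u c := by
    intro u c; simp [T]
  have haT : ∀ u, a ∉ T u := fun u h => ((hT u a).1 h).2.2 ReflTransGen.refl
  obtain ⟨c₀, hc₀, hc₀a⟩ := hne
  have hTa : c₀ ∈ T a := by
    refine (hT a c₀).2 ⟨hc₀, hc₀a, fun h => ?_⟩
    rcases ReflTransGen.cases_tail h with h | ⟨d, -, hd⟩
    · exact hc₀a h.symm
    · exact hd.2.2 rfl
  obtain ⟨u, hu, hmin⟩ := exists_min_image ({u | Accessible G f a u ∧ (T u).Nonempty} : Finset C)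
    (fun u => #(T u)) ⟨a, by simpa using ⟨ReflTransGen.refl, c₀, hTa⟩⟩
  simp only [mem_filter, mem_univ, true_and] at hu hmin
  refine ⟨T u, u, hu.2, fun c hc => ((hT u c).1 hc).1, haT u, hu.1,
    fun h => ((hT u u).1 h).2.1 rfl, ?_, ?_⟩
  · intro w hw c hc hcw
    obtain ⟨hwacc, hwu, hwav⟩ := (hT u w).1 hw
    by_contra hcon
    have avoid : ∀ c, AccAvoid G f a u c → c ≠ w ∧ AccAvoid G f a w c := by
      intro c hc
      induction hc using ReflTransGen.head_induction_on with
      | refl => exact ⟨fun h => haT u (h ▸ hw), ReflTransGen.refl⟩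
      | @head c d h h' ih =>
        have hcw : c ≠ w := by
          rintro rfl
          exact hwav (ReflTransGen.head h h')
        exact ⟨hcw, ReflTransGen.head ⟨h.1, hcw, ih.1⟩ ih.2⟩
    have hsub : T w ⊂ T u := by
      refine (ssubset_iff_of_subset fun d hd => ?_).2 ⟨w, hw, fun h => ((hT w w).1 h).2.1 rfl⟩
      obtain ⟨hdacc, hdw, hdav⟩ := (hT w d).1 hd
      refine (hT u d).2 ⟨hdacc, ?_, fun h => hdav (avoid d h).2⟩
      rintro rfl
      by_cases hda : d = a
      · exact hdav (hda ▸ ReflTransGen.refl)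
      · obtain ⟨e, he, -, heav⟩ := exists_movable_accAvoid hdacc hda
        exact hdav (ReflTransGen.head ⟨he, hdw, (avoid e heav).1⟩ (avoid e heav).2)
    exact absurd (card_lt_card hsub)
      (not_lt.2 (hmin w ⟨hwacc, c, (hT w c).2 ⟨hc, hcw, hcon⟩⟩))
  · intro w hw d hd hdT hdu hmov
    obtain ⟨hwacc, hwu, hwav⟩ := (hT u w).1 hw
    have : AccAvoid G f a u d := by
      by_contra h
      exact hdT ((hT u d).2 ⟨hd, hdu, h⟩)
    exact hwav (ReflTransGen.head ⟨hmov, hwu, hdu⟩ this)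


/-- Put `y` into the class of its unique neighbour `z` there, recolour `z` with `c`, and recolour
the remaining vertices whose colour is not in `A` by `g`. -/
noncomputable def swap (f g : V → C) (A : Finset C) (y z : V) (c : C) : V → C := fun x =>
  if x = z then c else if x = y then f z else if f x ∈ A then f x else g x

lemma swap_proper {G : SimpleGraph V} {f g : V → C} {A : Finset C} {y z : V} {c : C}
    (hf : Proper G f) (hz : f z ∈ A)
    (hgA : ∀ x, f x ∉ A → x ≠ y → g x ∉ A)
    (hg : ∀ x x', f x ∉ A → x ≠ y → f x' ∉ A → x' ≠ y → G.Adj x x' → g x ≠ g x')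
    (hsolo : ∀ w, G.Adj y w → f w = f z → w = z) (hc : c ≠ f z)
    (hfreeA : ∀ x, G.Adj z x → f x ∈ A → f x ≠ c)
    (hfreeB : ∀ x, G.Adj z x → f x ∉ A → x ≠ y → g x ≠ c) :
    Proper G (swap f g A y z c) := by
  have hzc : ∀ x, x ≠ z → G.Adj z x → swap f g A y z c x ≠ c := by
    intro x hx hadj
    unfold swap
    rw [if_neg hx]
    split_ifs with h1 h2
    · exact hc.symm
    · exact hfreeA x hadj h2
    · exact hfreeB x hadj h2 h1
  have hyc : ∀ x, x ≠ z → x ≠ y → G.Adj y x → swap f g A y z c x ≠ f z := by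
    intro x hx hxy hadj
    unfold swap
    rw [if_neg hx, if_neg hxy]
    split_ifs with h2
    · exact fun h => hx (hsolo x hadj h)
    · exact fun h => hgA x h2 hxy (h ▸ hz)
  have hsz : swap f g A y z c z = c := by simp [swap]
  have hsy : y ≠ z → swap f g A y z c y = f z := fun h => by simp [swap, h]
  intro x x' hadj
  by_cases hx : x = z
  · subst hx
    rw [hsz]
    exact (hzc x' hadj.ne' hadj).symm
  by_cases hx' : x' = z
  · subst hx'
    rw [hsz]
    exact hzc x hx hadj.symm
  by_cases hxy : x = y
  · subst hxy
    rw [hsy hx]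
    exact (hyc x' hx' hadj.ne' hadj).symm
  by_cases hxy' : x' = y
  · subst hxy'
    rw [hsy hx']
    exact hyc x hx hxy hadj.symm
  simp only [swap, if_neg hx, if_neg hx', if_neg hxy, if_neg hxy']
  split_ifs with h h' h'
  · exact hf x x' hadj
  · exact fun h1 => hgA x' h' hxy' (h1 ▸ h)
  · exact fun h1 => hgA x h hxy (h1 ▸ h')
  · exact hg x x' h hxy h' hxy' hadj

lemma swap_nearEq [Fintype V] {f g : V → C} {A : Finset C} {y z : V} {a b c : C} {s : ℕ}
    (hs : NearEq s f a b) (haA : a ∈ A) (hbA : b ∉ A) (hz : f z ∈ A) (hy : f y ∉ A)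
    (hgA : ∀ x, f x ∉ A → x ≠ y → g x ∉ A)
    (hgs : ∀ d ∉ A, #{x | (f x ∉ A ∧ x ≠ y) ∧ g x = d} = s) :
    NearEq s (swap f g A y z c) a c := by
  let f₀ : V → C := fun x => if x = y then f z else if f x ∈ A then f x else g x
  have hzy : z ≠ y := by rintro rfl; exact hy hz
  have hf₀z : f₀ z = f z := by simp [f₀, hzy, hz]
  have heq : swap f g A y z c = Function.update f₀ z c := by
    funext x
    by_cases hx : x = z
    · subst hx; simp [swap]
    · rw [Function.update_of_ne hx]; simp [swap, hx, f₀]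
  rw [heq]
  refine NearEq.update ?_ c
  rw [hf₀z]
  intro d
  by_cases hd : d ∈ A
  · have h1 : #{x | f₀ x = d} = #{x | Function.update f y (f z) x = d} := by
      congr 1
      ext x
      simp only [mem_filter, mem_univ, true_and]
      by_cases hx : x = y
      · subst hx; simp [f₀]
      · rw [Function.update_of_ne hx]
        simp only [f₀, if_neg hx]
        split_ifs with h
        · rfl
        · exact ⟨fun h1 => absurd hd (h1 ▸ hgA x h hx), fun h1 => absurd hd (h1 ▸ h)⟩
    have h2 := card_update f y (f z) d
    rw [if_neg (show d ≠ f y from fun h => hy (h ▸ hd))] at h2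
    have h3 := hs d
    rw [if_neg (show d ≠ b from fun h => hbA (h ▸ hd))] at h3
    omega
  · have h1 : #{x | f₀ x = d} = #{x | (f x ∉ A ∧ x ≠ y) ∧ g x = d} := by
      congr 1
      ext x
      simp only [mem_filter, mem_univ, true_and]
      by_cases hx : x = y
      · subst hx
        simp only [f₀, if_true]
        exact ⟨fun h => absurd (h ▸ hz) hd, fun h => absurd rfl h.1.2⟩
      · simp only [f₀, if_neg hx]
        split_ifs with h
        · exact ⟨fun h1 => absurd (h1 ▸ h) hd, fun h1 => absurd h h1.1.1⟩
        · exact ⟨fun h1 => ⟨⟨h, hx⟩, h1⟩, fun h1 => h1.2⟩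
    rw [h1, hgs d hd, if_neg (show d ≠ a from fun h => hd (h ▸ haA)),
      if_neg (show d ≠ f z from fun h => hd (h ▸ hz))]

/-- Vertices coloured in `A` keep their admissible moves into classes unaffected by `swap`. -/
lemma swap_movable {G : SimpleGraph V} {f g : V → C} {A : Finset C} {y z x : V} {c d : C}
    (hy : f y ∉ A) (hgA : ∀ x, f x ∉ A → x ≠ y → g x ∉ A)
    (hxA : f x ∈ A) (hxz : x ≠ z) (hdA : d ∈ A) (hdz : d ≠ f z) (hdc : d ≠ c)
    (hfree : ∀ w, G.Adj x w → f w ≠ d) : Movable G (swap f g A y z c) (f x) d := by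
  have hxy : x ≠ y := by rintro rfl; exact hy hxA
  refine ⟨x, by simp [swap, hxz, hxy, hxA], fun w hw => ?_⟩
  unfold swap
  split_ifs with h1 h2 h3
  · exact hdc.symm
  · exact hdz.symm
  · exact hfree w hw
  · exact fun h => hgA w h3 h2 (h ▸ hdA)

/-- Splitting the neighbourhood of `x` by the colour classes. -/
lemma degree_split [Fintype V] (G : SimpleGraph V) (f : V → C) (A : Finset C) (x : V) :
    #{w | G.Adj x w ∧ f w ∉ A} + ∑ c ∈ A, #{w | G.Adj x w ∧ f w = c} = #{w | G.Adj x w} := by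
  rw [← card_filter_add_card_filter_not (s := ({w | G.Adj x w} : Finset V)) (fun w => f w ∈ A),
    card_eq_sum_card_fiberwise (f := f) (t := A)
      (s := ({w | G.Adj x w} : Finset V).filter (fun w => f w ∈ A)) (fun w hw => by simp_all),
    add_comm]
  simp only [filter_filter]
  congr 1
  refine sum_congr rfl fun c hc => ?_
  congr 1
  ext w
  simp only [mem_filter, mem_univ, true_and]
  constructor
  · rintro ⟨h1, rfl⟩
    exact ⟨⟨h1, hc⟩, rfl⟩
  · rintro ⟨⟨h1, -⟩, h2⟩
    exact ⟨h1, h2⟩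

lemma degree_lower [Fintype V] {G : SimpleGraph V} {f : V → C} {A S : Finset C} {x : V}
    (hSA : S ⊆ A) (h : ∀ c ∈ S, ∃ w, G.Adj x w ∧ f w = c) :
    #{w | G.Adj x w ∧ f w ∉ A} + #S ≤ #{w | G.Adj x w} := by
  rw [← degree_split G f A x, card_eq_sum_ones S]
  refine Nat.add_le_add_left (le_trans (sum_le_sum fun c hc => ?_) (sum_le_sum_of_subset hSA)) _
  obtain ⟨w, hw⟩ := h c hc
  exact card_pos.2 ⟨w, by simpa using hw⟩

/-- `z` is the only neighbour of `y` in its colour class. -/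
def Solo (G : SimpleGraph V) (f : V → C) (y z : V) : Prop :=
  G.Adj y z ∧ ∀ w, G.Adj y w → f w = f z → w = z

/-- If solo vertices in the classes of `T` cannot move, then `T` has more classes than there are
inaccessible ones. -/
lemma lt_card_of_solo_stuck [Fintype V] {G : SimpleGraph V} {f : V → C} {A T : Finset C}
    {u : C} {s r q : ℕ} (hdeg : ∀ x, #{w | G.Adj x w} ≤ r) (hq : #A + q = r + 1) (hTA : T ⊆ A)
    (huA : u ∈ A) (huT : u ∉ T) (hTne : T.Nonempty) (hTs : ∀ c ∈ T, #{x | f x = c} = s)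
    (hBs : #{x | f x ∉ A} = q * s + 1)
    (hB : ∀ y, f y ∉ A → ∀ c ∈ A, ∃ w, G.Adj y w ∧ f w = c)
    (hT : ∀ x, f x ∈ T → ∀ c ∈ A, c ∉ T → c ≠ u → ∃ w, G.Adj x w ∧ f w = c)
    (hstuck : ∀ y z, f z ∈ T → f y ∉ A → Solo G f y z →
      ∀ c ∈ A, c ≠ f z → ∃ w, G.Adj z w ∧ f w = c) :
    q < #T := by
  by_contra hcon
  obtain ⟨W, hW⟩ := hTne
  let wt : V → ℕ := fun z => if ∃ y, f y ∉ A ∧ Solo G f y z then 2 else 1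
  have hwt : ∀ z, 1 ≤ wt z := fun z => by simp only [wt]; split_ifs <;> omega
  have hlow : ∀ y ∈ ({x | f x ∉ A} : Finset V),
      2 ≤ ∑ z ∈ ({z | f z = W} : Finset V), if G.Adj y z then wt z else 0 := by
    intro y hy
    have hyA : f y ∉ A := by simpa using hy
    obtain ⟨z₀, hz₀, hz₀W⟩ := hB y hyA W (hTA hW)
    by_cases hall : ∀ w, G.Adj y w → f w = W → w = z₀
    · have h2 : wt z₀ = 2 := if_pos ⟨y, hyA, hz₀, by rwa [hz₀W]⟩
      calc 2 = if G.Adj y z₀ then wt z₀ else 0 := by rw [if_pos hz₀, h2]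
        _ ≤ _ := single_le_sum (f := fun z => if G.Adj y z then wt z else 0)
          (fun _ _ => Nat.zero_le _) (by simpa using hz₀W)
    · push Not at hall
      obtain ⟨z₁, hz₁, hz₁W, hne⟩ := hall
      calc 2 ≤ wt z₁ + wt z₀ := by have := hwt z₀; have := hwt z₁; omega
        _ = ∑ z ∈ ({z₁, z₀} : Finset V), if G.Adj y z then wt z else 0 := by
          rw [sum_pair hne, if_pos hz₀, if_pos hz₁]
        _ ≤ _ := sum_le_sum_of_subset (by
          intro z hz
          rcases mem_insert.1 hz with rfl | hz
          · simpa using hz₁W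
          · rw [mem_singleton.1 hz]; simpa using hz₀W)
  have hup : ∀ z ∈ ({z | f z = W} : Finset V),
      (∑ y ∈ ({x | f x ∉ A} : Finset V), if G.Adj y z then wt z else 0) ≤ 2 * q := by
    intro z hz
    have hzW : f z = W := by simpa using hz
    have hcard : (∑ y ∈ ({x | f x ∉ A} : Finset V), if G.Adj y z then wt z else 0)
        = #{w | G.Adj z w ∧ f w ∉ A} * wt z := by
      rw [← sum_filter, sum_const, smul_eq_mul, filter_filter]
      congr 2
      ext w
      simp only [mem_filter, mem_univ, true_and, G.adj_comm, and_comm]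
    rw [hcard]
    have hd := hdeg z
    by_cases hsol : ∃ y, f y ∉ A ∧ Solo G f y z
    · obtain ⟨y, hy, hyz⟩ := hsol
      have h2 : wt z = 2 := if_pos ⟨y, hy, hyz⟩
      have h1 := degree_lower (G := G) (f := f) (x := z) (erase_subset W A) (fun c hc =>
        hstuck y z (hzW ▸ hW) hy hyz c (mem_of_mem_erase hc) (hzW ▸ ne_of_mem_erase hc))
      have h3 := card_erase_add_one (hTA hW)
      rw [h2]
      omega
    · have h2 : wt z = 1 := if_neg hsol
      have h1 := degree_lower (G := G) (f := f) (x := z) (S := (A \ T).erase u)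
        ((erase_subset _ _).trans sdiff_subset) (fun c hc => by
          have hc' := mem_sdiff.1 (mem_of_mem_erase hc)
          exact hT z (hzW ▸ hW) c hc'.1 hc'.2 (ne_of_mem_erase hc))
      have h3 := card_erase_add_one (mem_sdiff.2 ⟨huA, huT⟩)
      have h4 := card_sdiff_add_card_eq_card hTA
      rw [h2]
      omega
  have h1 := sum_le_sum hlow
  have h2 := sum_le_sum hup
  rw [sum_comm] at h1
  have h3 := h1.trans h2
  rw [sum_const, sum_const, hBs, hTs W hW, smul_eq_mul, smul_eq_mul] at h3
  nlinarith

/-- If solo vertices in the classes of `T` cannot move, then one of them has two nonadjacent solo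
neighbours. -/
lemma exists_two_solo [Fintype V] {G : SimpleGraph V} {f : V → C} {A T : Finset C}
    {u : C} {s r q : ℕ} (hdeg : ∀ x, #{w | G.Adj x w} ≤ r) (hq : #A + q = r + 1) (hTA : T ⊆ A)
    (huA : u ∈ A) (huT : u ∉ T) (hTne : T.Nonempty) (hTs : ∀ c ∈ T, #{x | f x = c} = s)
    (hBs : #{x | f x ∉ A} = q * s + 1)
    (hB : ∀ y, f y ∉ A → ∀ c ∈ A, ∃ w, G.Adj y w ∧ f w = c)
    (hT : ∀ x, f x ∈ T → ∀ c ∈ A, c ∉ T → c ≠ u → ∃ w, G.Adj x w ∧ f w = c)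
    (hstuck : ∀ y z, f z ∈ T → f y ∉ A → Solo G f y z →
      ∀ c ∈ A, c ≠ f z → ∃ w, G.Adj z w ∧ f w = c) :
    ∃ z y₁ y₂, f z ∈ T ∧ f y₁ ∉ A ∧ f y₂ ∉ A ∧ Solo G f y₁ z ∧ Solo G f y₂ z ∧ y₁ ≠ y₂ ∧
      ¬ G.Adj y₁ y₂ := by
  have htq := lt_card_of_solo_stuck hdeg hq hTA huA huT hTne hTs hBs hB hT hstuck
  have hsolo : ∀ y, f y ∉ A →
      #T + 1 + #{w | G.Adj y w ∧ f w ∉ A} ≤ q + #{z | f z ∈ T ∧ Solo G f y z} := by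
    intro y hy
    have h1 : #{c ∈ T | #{w | G.Adj y w ∧ f w = c} = 1} ≤ #{z | f z ∈ T ∧ Solo G f y z} := by
      refine card_le_card_of_surjOn f fun c hc => ?_
      simp only [coe_filter, Set.mem_ofPred_eq, card_eq_one] at hc
      obtain ⟨hcT, z, hz⟩ := hc
      have hmem : ∀ w, (G.Adj y w ∧ f w = c) ↔ w = z := fun w => by
        simpa using Finset.ext_iff.1 hz w
      obtain ⟨hyz, rfl⟩ := (hmem z).2 rfl
      exact ⟨z, by simpa using ⟨hcT, hyz, fun w h h' => (hmem w).1 ⟨h, h'⟩⟩, rfl⟩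
    have h2 : #A + #{c ∈ T | ¬ #{w | G.Adj y w ∧ f w = c} = 1}
        ≤ ∑ c ∈ A, #{w | G.Adj y w ∧ f w = c} := by
      have h3 : #{c ∈ T | ¬ #{w | G.Adj y w ∧ f w = c} = 1}
          ≤ #{c ∈ A | ¬ #{w | G.Adj y w ∧ f w = c} = 1} :=
        card_le_card (filter_subset_filter _ hTA)
      refine (Nat.add_le_add_left h3 _).trans ?_
      rw [card_eq_sum_ones A, card_filter, ← sum_add_distrib]
      refine sum_le_sum fun c hc => ?_
      obtain ⟨w, hw⟩ := hB y hy c hc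
      have : 0 < #{w | G.Adj y w ∧ f w = c} := card_pos.2 ⟨w, by simpa using hw⟩
      split_ifs <;> omega
    have h3 := card_filter_add_card_filter_not (s := T) (fun c => #{w | G.Adj y w ∧ f w = c} = 1)
    have h4 := degree_split G f A y
    have h5 := hdeg y
    omega
  obtain ⟨I, hI, hmax⟩ := exists_max_image
    ({I | (∀ y ∈ I, f y ∉ A) ∧ ∀ y ∈ I, ∀ y' ∈ I, ¬ G.Adj y y'} : Finset (Finset V)) card
    ⟨∅, by simp⟩
  simp only [mem_filter, mem_univ, true_and] at hI hmax
  obtain ⟨hIA, hind⟩ := hI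
  have hcover : ({x | f x ∉ A} : Finset V) ⊆
      I.biUnion fun y => insert y ({w | G.Adj y w ∧ f w ∉ A} : Finset V) := by
    intro v hv
    have hvA : f v ∉ A := by simpa using hv
    by_contra hnot
    simp only [mem_biUnion, mem_insert, mem_filter, mem_univ, true_and, not_exists, not_and,
      not_or] at hnot
    have hvI : v ∉ I := fun h => (hnot v h).1 rfl
    have hadj : ∀ y ∈ I, ¬ G.Adj y v := fun y hy h => (hnot y hy).2 h hvA
    have := hmax (insert v I) ⟨?_, ?_⟩
    · rw [card_insert_of_notMem hvI] at this
      omega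
    · intro y hy
      rcases mem_insert.1 hy with rfl | hy
      exacts [hvA, hIA y hy]
    · intro y hy y' hy'
      rcases mem_insert.1 hy with h1 | h1 <;> rcases mem_insert.1 hy' with h2 | h2
      · rw [h1, h2]; exact G.irrefl
      · rw [h1]; exact fun h => hadj y' h2 h.symm
      · rw [h2]; exact hadj y h1
      · exact hind y h1 y' h2
  have hcard : q * s + 1 ≤ ∑ y ∈ I, (#{w | G.Adj y w ∧ f w ∉ A} + 1) := by
    rw [← hBs]
    exact (card_le_card hcover).trans
      (card_biUnion_le.trans (sum_le_sum fun y _ => card_insert_le _ _))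
  have hIq : ∑ y ∈ I, (#{w | G.Adj y w ∧ f w ∉ A} + 1) ≤ #I * q := by
    rw [← smul_eq_mul, ← sum_const]
    refine sum_le_sum fun y hy => ?_
    have h1 := degree_lower (G := G) (f := f) (x := y) Subset.rfl (hB y (hIA y hy))
    have h2 := hdeg y
    omega
  by_contra hcon
  have hone : ∀ z ∈ ({z | f z ∈ T} : Finset V), #{y ∈ I | Solo G f y z} ≤ 1 := by
    intro z hz
    refine card_le_one.2 fun y₁ h₁ y₂ h₂ => ?_
    rw [mem_filter] at h₁ h₂
    by_contra hne
    exact hcon ⟨z, y₁, y₂, by simpa using hz, hIA _ h₁.1, hIA _ h₂.1, h₁.2, h₂.2, hne,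
      hind _ h₁.1 _ h₂.1⟩
  have hA' : #{z | f z ∈ T} = #T * s := by
    rw [card_eq_sum_card_fiberwise (f := f) (t := T) (fun w hw => by simpa using hw),
      ← smul_eq_mul, ← sum_const]
    refine sum_congr rfl fun c hc => ?_
    rw [← hTs c hc, filter_filter]
    congr 1
    ext w
    simp only [mem_filter, mem_univ, true_and]
    exact ⟨fun h => h.2, fun h => ⟨h ▸ hc, h⟩⟩
  have hdouble : ∑ y ∈ I, #{z | f z ∈ T ∧ Solo G f y z} ≤ #T * s := by
    rw [← hA', card_eq_sum_ones]
    refine le_trans (le_of_eq ?_) (sum_le_sum hone)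
    simp only [← filter_filter, card_filter (Solo G f _), card_filter (fun y => Solo G f y _)]
    exact sum_comm
  have hsum := sum_le_sum fun y hy => hsolo y (hIA y hy)
  simp only [sum_add_distrib, sum_const, smul_eq_mul] at hsum
  rw [sum_add_distrib, sum_const, smul_eq_mul] at hcard hIq
  have hIs : s < #I := by
    by_contra h
    have := Nat.mul_le_mul_right q (not_lt.1 h)
    nlinarith
  obtain ⟨e, he⟩ := Nat.exists_eq_add_of_lt htq
  obtain ⟨j, hj⟩ := Nat.exists_eq_add_of_lt hIs
  rw [he, hj] at hsum
  rw [he] at hdouble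
  rw [hj] at hcard
  nlinarith [Nat.zero_le (e * j)]


/-- Equitable colourings with classes of size `s` exist on every proper subset of the vertices of
small enough maximum degree. -/
def SmallerEquitable [Fintype V] (G : SimpleGraph V) (C : Type) (s : ℕ) : Prop :=
  ∀ (X : Finset V) (K : Finset C), #X < Fintype.card V → #X = s * #K →
    (∀ x ∈ X, #{w ∈ X | G.Adj x w} < #K) →
    ∃ g : V → C, (∀ x ∈ X, g x ∈ K) ∧ (∀ x ∈ X, ∀ x' ∈ X, G.Adj x x' → g x ≠ g x') ∧
      ∀ c ∈ K, #{x ∈ X | g x = c} = s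

/-- If the large class is inaccessible, then either there is an equitable colouring or there is a
nearly equitable colouring with fewer inaccessible classes. -/
lemma equitable_or_improve [Fintype V] [Fintype C] {G : SimpleGraph V} {s r : ℕ}
    (hC : Fintype.card C = r + 1) (hdeg : ∀ x, #{w | G.Adj x w} ≤ r)
    (hsmall : SmallerEquitable G C s) {f : V → C} {a b : C} (hf : Proper G f)
    (hs : NearEq s f a b) (hb : ¬ Accessible G f a b) :
    (∃ f' : V → C, Proper G f' ∧ NearEq s f' a a) ∨
      ∃ (f' : V → C) (b' : C), Proper G f' ∧ NearEq s f' a b' ∧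
        #{c | ¬ Accessible G f' a c} < #{c | ¬ Accessible G f a c} := by
  obtain ⟨A, hA⟩ : ∃ A : Finset C, ∀ c, c ∈ A ↔ Accessible G f a c :=
    ⟨({c | Accessible G f a c} : Finset C), fun c => by simp⟩
  have haA : a ∈ A := (hA a).2 ReflTransGen.refl
  have hbA : b ∉ A := fun h => hb ((hA b).1 h)
  have hab : a ≠ b := fun h => hbA (h ▸ haA)
  have hq : #A + #Aᶜ = r + 1 := by rw [card_add_card_compl, hC]
  have hB : ∀ y, f y ∉ A → ∀ c ∈ A, ∃ w, G.Adj y w ∧ f w = c := by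
    intro y hy c hc
    by_contra hcon
    push Not at hcon
    exact hy ((hA _).2 (ReflTransGen.head ⟨y, rfl, hcon⟩ ((hA c).1 hc)))
  have hBs : #{x | f x ∉ A} = #Aᶜ * s + 1 := by
    rw [card_eq_sum_card_fiberwise (f := f) (t := Aᶜ) (fun w hw => by simpa using hw)]
    have h1 : ∀ c ∈ Aᶜ, #{x ∈ ({x | f x ∉ A} : Finset V) | f x = c}
        = s + if c = b then 1 else 0 := by
      intro c hc
      rw [mem_compl] at hc
      rw [← hs c, if_neg (show c ≠ a from fun h => hc (h ▸ haA)), filter_filter, add_zero]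
      congr 1
      ext w
      simp only [mem_filter, mem_univ, true_and]
      exact ⟨fun h => h.2, fun h => ⟨h ▸ hc, h⟩⟩
    rw [sum_congr rfl h1, sum_add_distrib, sum_const, smul_eq_mul, sum_ite_eq',
      if_pos (mem_compl.2 hbA)]
  have hsa : #{x | f x = a} + 1 = s := by simpa [hab] using hs a
  have hne : ∃ c, Accessible G f a c ∧ c ≠ a := by
    by_contra hcon
    push Not at hcon
    have hAa : A = {a} := by
      ext c
      rw [mem_singleton]
      exact ⟨fun h => hcon c ((hA c).1 h), fun h => h ▸ haA⟩
    have hsub : ({x | f x ∉ A} : Finset V) ⊆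
        ({x | f x = a} : Finset V).biUnion fun z => ({w | G.Adj z w} : Finset V) := by
      intro y hy
      obtain ⟨w, hw, hwa⟩ := hB y (by simpa using hy) a haA
      exact mem_biUnion.2 ⟨w, by simpa using hwa, by simpa using hw.symm⟩
    have h1 := (card_le_card hsub).trans
      (card_biUnion_le_card_mul _ _ r fun z _ => hdeg z)
    have h2 : #A = 1 := by rw [hAa, card_singleton]
    have h3 : #Aᶜ = r := by omega
    rw [hBs, h3] at h1
    nlinarith
  obtain ⟨T, u, hTne, hTacc, haT, huacc, huT, hterm, hleave⟩ := exists_terminal_family hne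
  have hTA : T ⊆ A := fun c hc => (hA c).2 (hTacc c hc)
  have hTs : ∀ c ∈ T, #{x | f x = c} = s := by
    intro c hc
    have := hs c
    rwa [if_neg (show c ≠ a from fun h => haT (h ▸ hc)),
      if_neg (show c ≠ b from fun h => hbA (h ▸ hTA hc))] at this
  have hT : ∀ x, f x ∈ T → ∀ c ∈ A, c ∉ T → c ≠ u → ∃ w, G.Adj x w ∧ f w = c := by
    intro x hx c hc hcT hcu
    by_contra hcon
    push Not at hcon
    exact hleave _ hx c ((hA c).1 hc) hcT hcu ⟨x, rfl, hcon⟩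
  have hg : ∀ y, f y ∉ A → ∃ g : V → C, (∀ x, f x ∉ A → x ≠ y → g x ∉ A) ∧
      (∀ x x', f x ∉ A → x ≠ y → f x' ∉ A → x' ≠ y → G.Adj x x' → g x ≠ g x') ∧
      ∀ d ∉ A, #{x | (f x ∉ A ∧ x ≠ y) ∧ g x = d} = s := by
    intro y hy
    have hyB : y ∈ ({x | f x ∉ A} : Finset V) := by simpa using hy
    have hcard := card_erase_add_one hyB
    have hle : #{x | f x ∉ A} ≤ Fintype.card V := card_le_univ _
    obtain ⟨g, h1, h2, h3⟩ := hsmall (({x | f x ∉ A} : Finset V).erase y) Aᶜ (by omega)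
      (by rw [mul_comm]; omega) (by
        intro x hx
        have hxA : f x ∉ A := by simpa using mem_of_mem_erase hx
        have h1 := degree_lower (G := G) (f := f) (x := x) Subset.rfl (hB x hxA)
        have h2 := hdeg x
        have h3 : #{w ∈ ({x | f x ∉ A} : Finset V).erase y | G.Adj x w}
            ≤ #{w | G.Adj x w ∧ f w ∉ A} := by
          refine card_le_card fun w hw => ?_
          simp only [mem_filter, mem_erase, mem_univ, true_and] at hw ⊢
          exact ⟨hw.2, hw.1.2⟩
        omega)
    have hmem : ∀ x, x ∈ ({x | f x ∉ A} : Finset V).erase y ↔ f x ∉ A ∧ x ≠ y := by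
      intro x; simp [and_comm]
    refine ⟨g, fun x hx hxy => mem_compl.1 (h1 x ((hmem x).2 ⟨hx, hxy⟩)),
      fun x x' hx hxy hx' hxy' => h2 x ((hmem x).2 ⟨hx, hxy⟩) x' ((hmem x').2 ⟨hx', hxy'⟩),
      fun d hd => ?_⟩
    rw [← h3 d (mem_compl.2 hd)]
    congr 1
    ext x
    simp only [mem_filter, mem_univ, true_and, hmem]
  by_cases hcase : ∃ y z c, f z ∈ T ∧ f y ∉ A ∧ Solo G f y z ∧ c ∈ A ∧ c ≠ f z ∧
      ∀ w, G.Adj z w → f w ≠ c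
  · left
    obtain ⟨y, z, c, hz, hy, hyz, hcA, hcz, hfree⟩ := hcase
    obtain ⟨g, hgA, hgp, hgs⟩ := hg y hy
    have hzA := hTA hz
    have hp : Proper G (swap f g A y z c) := swap_proper hf hzA hgA hgp hyz.2 hcz
      (fun x hx _ => hfree x hx) (fun x _ hx hxy h => hgA x hx hxy (h ▸ hcA))
    have hn : NearEq s (swap f g A y z c) a c := swap_nearEq hs haA hbA hzA hy hgA hgs
    obtain ⟨ρ, hρ⟩ := exists_rank (fun c d => Movable G f c d ∧ c ≠ f z ∧ d ≠ f z) a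
    refine exists_equitable_of_rank ρ (AccAvoid G f a (f z)) (ρ c) _ c le_rfl
      (hterm _ hz c ((hA c).1 hcA) hcz) hp hn ?_
    intro d hd hdc hda
    obtain ⟨e, ⟨⟨x, hx, hxfree⟩, hdz, hez⟩, heacc, hlt⟩ := hρ d hd hda
    refine ⟨e, ?_, heacc, hlt⟩
    subst hx
    exact swap_movable hy hgA ((hA _).2 hd.acc) (fun h => hdz (h ▸ rfl))
      ((hA e).2 (AccAvoid.acc heacc)) hez (by rintro rfl; omega) hxfree
  · right
    have hstuck : ∀ y z, f z ∈ T → f y ∉ A → Solo G f y z →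
        ∀ c ∈ A, c ≠ f z → ∃ w, G.Adj z w ∧ f w = c := by
      intro y z hz hy hyz c hcA hcz
      by_contra hcon
      push Not at hcon
      exact hcase ⟨y, z, c, hz, hy, hyz, hcA, hcz, hcon⟩
    obtain ⟨z, y₁, y₂, hz, hy₁, hy₂, hs₁, hs₂, hne, hnadj⟩ :=
      exists_two_solo hdeg hq hTA ((hA u).2 huacc) huT hTne hTs hBs hB hT hstuck
    obtain ⟨g, hgA, hgp, hgs⟩ := hg y₁ hy₁
    have hzA := hTA hz
    obtain ⟨c, hcA, hfree⟩ : ∃ c ∉ A, ∀ x, G.Adj z x → f x ∉ A → x ≠ y₁ → g x ≠ c := by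
      have h1 := degree_lower (G := G) (f := f) (x := z) (erase_subset (f z) A) (fun c hc =>
        hstuck y₁ z hz hy₁ hs₁ c (mem_of_mem_erase hc) (ne_of_mem_erase hc))
      have h2 := card_erase_add_one hzA
      have h3 := hdeg z
      have hy₁mem : y₁ ∈ ({w | G.Adj z w ∧ f w ∉ A} : Finset V) := by
        simpa using ⟨hs₁.1.symm, hy₁⟩
      have h4 := card_erase_add_one hy₁mem
      have h5 : #((({w | G.Adj z w ∧ f w ∉ A} : Finset V).erase y₁).image g) < #Aᶜ :=
        card_image_le.trans_lt (by omega)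
      obtain ⟨c, hc, hcg⟩ := exists_mem_notMem_of_card_lt_card h5
      refine ⟨c, mem_compl.1 hc, fun x hzx hx hxy h => hcg ?_⟩
      exact mem_image.2 ⟨x, by simpa using ⟨hxy, hzx, hx⟩, h⟩
    have hcz : c ≠ f z := fun h => hcA (h ▸ hzA)
    have hp : Proper G (swap f g A y₁ z c) := swap_proper hf hzA hgA hgp hs₁.2 hcz
      (fun x _ hx h => hcA (h ▸ hx)) hfree
    have hn : NearEq s (swap f g A y₁ z c) a c := swap_nearEq hs haA hbA hzA hy₁ hgA hgs
    refine ⟨swap f g A y₁ z c, c, hp, hn, ?_⟩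
    have hav : ∀ d, AccAvoid G f a (f z) d → Accessible G (swap f g A y₁ z c) a d := by
      intro d hd
      induction hd using ReflTransGen.head_induction_on with
      | refl => exact ReflTransGen.refl
      | @head d e h h' ih =>
        obtain ⟨⟨x, hx, hxfree⟩, hdz, hez⟩ := h
        have hdA : d ∈ A := (hA d).2 (AccAvoid.acc
          (ReflTransGen.head ⟨⟨x, hx, hxfree⟩, hdz, hez⟩ h'))
        have heA : e ∈ A := (hA e).2 (AccAvoid.acc h')
        subst hx
        exact ReflTransGen.head (swap_movable hy₁ hgA hdA (fun h => hdz (h ▸ rfl)) heA hez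
          (fun h => hcA (h ▸ heA)) hxfree) ih
    have hzacc : Accessible G (swap f g A y₁ z c) a (f z) := by
      obtain ⟨d, ⟨x, hx, hxfree⟩, hdz, hdav⟩ := exists_movable_accAvoid (hTacc _ hz)
        (fun h => haT (h ▸ hz))
      have hdA : d ∈ A := (hA d).2 hdav.acc
      have hxz : x ≠ z := by
        rintro rfl
        obtain ⟨w, hw, hwd⟩ := hstuck y₁ x hz hy₁ hs₁ d hdA hdz
        exact hxfree w hw hwd
      have := swap_movable (G := G) (c := c) hy₁ hgA (x := x) (hx ▸ hzA) hxz hdA hdz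
        (fun h => hcA (h ▸ hdA)) hxfree
      rw [hx] at this
      exact ReflTransGen.head this (hav d hdav)
    have hold : ∀ d, Accessible G f a d → Accessible G (swap f g A y₁ z c) a d := by
      intro d hd
      by_cases hdz : d = f z
      · exact hdz ▸ hzacc
      · exact hav d (hterm _ hz d hd hdz)
    have hy₂z : y₂ ≠ z := fun h => hy₂ (h ▸ hzA)
    have hnew : Accessible G (swap f g A y₁ z c) a (g y₂) := by
      refine ReflTransGen.head ⟨y₂, by simp [swap, hy₂z, hne.symm, hy₂], fun w hw => ?_⟩ hzacc
      unfold swap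
      split_ifs with h1 h2 h3
      · exact hcz
      · subst h2
        exact absurd hw.symm hnadj
      · exact fun h => h1 (hs₂.2 w hw h)
      · exact fun h => hgA w h3 h2 (h ▸ hzA)
    have hgy₂ : ¬ Accessible G f a (g y₂) := fun h => hgA y₂ hy₂ hne.symm ((hA _).2 h)
    refine card_lt_card ((ssubset_iff_of_subset fun d hd => ?_).2 ⟨g y₂, ?_, ?_⟩)
    · simp only [mem_filter, mem_univ, true_and] at hd ⊢
      exact fun h => hd (hold d h)
    · simpa using hgy₂
    · simpa using hnew

lemma exists_equitable_of_nearEq [Fintype V] [Fintype C] {G : SimpleGraph V} {s r : ℕ}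
    (hC : Fintype.card C = r + 1) (hdeg : ∀ x, #{w | G.Adj x w} ≤ r)
    (hsmall : SmallerEquitable G C s) {a : C} :
    ∀ (n : ℕ) (f : V → C) (b : C), #{c | ¬ Accessible G f a c} = n → Proper G f →
      NearEq s f a b → ∃ f' : V → C, Proper G f' ∧ NearEq s f' a a := by
  intro n
  induction n using Nat.strong_induction_on with
  | _ n ih =>
    intro f b hn hf hs
    by_cases hb : Accessible G f a b
    · obtain ⟨ρ, hρ⟩ := exists_rank (Movable G f) a
      exact exists_equitable_of_rank ρ (Accessible G f a) (ρ b) f b le_rfl hb hf hs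
        fun c hc _ hca => hρ c hc hca
    · rcases equitable_or_improve hC hdeg hsmall hf hs hb with h | ⟨f', b', hf', hs', hlt⟩
      · exact h
      · exact ih _ (hn ▸ hlt) f' b' rfl hf' hs'

/-- The Hajnal–Szemerédi theorem when the number of colours divides the number of vertices. -/
theorem exists_equitable_of_card_eq_mul (N : ℕ) :
    ∀ (V C : Type) [Fintype V] [Fintype C] (G : SimpleGraph V) (s : ℕ), Fintype.card V = N →
      Fintype.card V = s * Fintype.card C → (∀ x, #{w | G.Adj x w} < Fintype.card C) →
      ∃ f : V → C, Proper G f ∧ ∀ c, #{x | f x = c} = s := by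
  induction N using Nat.strong_induction_on with
  | _ N ih =>
    intro V C _ _ G s hN hcard hdeg
    have hsmall : ∀ G' : SimpleGraph V, SmallerEquitable G' C s := by
      intro G' X K hX hXK hdX
      obtain ⟨g, hg, hgs⟩ := ih #X (hN ▸ hX) X K (G'.comap Subtype.val) s (by simp)
        (by simpa using hXK) (by
          intro x
          rw [Fintype.card_coe]
          refine lt_of_eq_of_lt ?_ (hdX x x.2)
          rw [← card_map (Function.Embedding.subtype (· ∈ X))]
          congr 1
          ext w
          simp [and_comm])
      by_cases hXe : X.Nonempty
      · obtain ⟨x₀, hx₀⟩ := hXe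
        have hval : ∀ (x : V) (hx : x ∈ X),
            (if hx : x ∈ X then (g ⟨x, hx⟩ : C) else g ⟨x₀, hx₀⟩) = g ⟨x, hx⟩ :=
          fun x hx => dif_pos hx
        refine ⟨fun x => if hx : x ∈ X then g ⟨x, hx⟩ else g ⟨x₀, hx₀⟩, fun x hx => ?_,
          fun x hx x' hx' hadj => ?_, fun c hc => ?_⟩
        · beta_reduce
          rw [hval x hx]
          exact (g ⟨x, hx⟩).2
        · beta_reduce
          rw [hval x hx, hval x' hx']
          exact fun h => hg ⟨x, hx⟩ ⟨x', hx'⟩ hadj (Subtype.ext h)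
        · rw [← hgs ⟨c, hc⟩, ← card_map (Function.Embedding.subtype (· ∈ X))]
          congr 1
          ext w
          simp only [mem_filter, mem_map, mem_univ, true_and, Function.Embedding.subtype_apply]
          constructor
          · rintro ⟨hw, h⟩
            rw [hval w hw] at h
            exact ⟨⟨w, hw⟩, Subtype.ext h, rfl⟩
          · rintro ⟨⟨w', hw'⟩, h, rfl⟩
            refine ⟨hw', ?_⟩
            rw [hval w' hw', h]
      · rw [not_nonempty_iff_eq_empty] at hXe
        subst hXe
        have hV : Nonempty V := Fintype.card_pos_iff.1 (by simpa using hX)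
        obtain ⟨v⟩ := hV
        have hCpos : 0 < Fintype.card C := lt_of_le_of_lt (Nat.zero_le _) (hdeg v)
        obtain ⟨c₀⟩ := Fintype.card_pos_iff.1 hCpos
        refine ⟨fun _ => c₀, by simp, by simp, fun c hc => ?_⟩
        have := card_pos.2 ⟨c, hc⟩
        have h0 : s * #K = 0 := by simpa using hXK.symm
        rcases Nat.mul_eq_zero.1 h0 with h | h
        · simp [h]
        · omega
    by_cases hCe : IsEmpty C
    · have hV : IsEmpty V := by
        rw [← Fintype.card_eq_zero_iff, hcard, Fintype.card_eq_zero, mul_zero]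
      exact ⟨fun v => hV.elim v, fun v => hV.elim v, fun c => hCe.elim c⟩
    rw [not_isEmpty_iff] at hCe
    obtain ⟨r, hr⟩ : ∃ r, Fintype.card C = r + 1 :=
      Nat.exists_eq_succ_of_ne_zero Fintype.card_ne_zero
    have hind : ∀ Y : Finset V, ∃ f : V → C,
        (∀ x ∈ Y, ∀ y ∈ Y, G.Adj x y → f x ≠ f y) ∧ ∀ c, #{x | f x = c} = s := by
      intro Y
      induction Y using Finset.induction_on with
      | empty =>
        have e : V ≃ C × Fin s := Fintype.equivOfCardEq (by simp [hcard, mul_comm])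
        refine ⟨fun x => (e x).1, by simp, fun c => ?_⟩
        have : ({x | (e x).1 = c} : Finset V)
            = (univ.map ⟨fun i : Fin s => (c, i), fun i j h => by simpa using h⟩).map
              e.symm.toEmbedding := by
          ext x
          simp only [mem_filter, mem_univ, true_and, mem_map]
          constructor
          · rintro rfl
            exact ⟨e x, ⟨(e x).2, rfl⟩, by simp⟩
          · rintro ⟨p, ⟨i, rfl⟩, rfl⟩
            rw [Equiv.coe_toEmbedding, Equiv.apply_symm_apply]
            rfl
        rw [this, card_map, card_map, card_univ, Fintype.card_fin]
      | insert u Y hu ihY =>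
        obtain ⟨f, hf, hfs⟩ := ihY
        obtain ⟨G', hG'⟩ : ∃ G' : SimpleGraph V,
            ∀ x y, G'.Adj x y ↔ G.Adj x y ∧ x ∈ insert u Y ∧ y ∈ insert u Y :=
          ⟨{ Adj := fun x y => G.Adj x y ∧ x ∈ insert u Y ∧ y ∈ insert u Y
             symm := ⟨fun x y h => ⟨h.1.symm, h.2.2, h.2.1⟩⟩
             loopless := ⟨fun x h => G.irrefl h.1⟩ }, fun x y => Iff.rfl⟩
        have hdeg' : ∀ x, #{w | G'.Adj x w} ≤ r := by
          intro x
          have h1 := hdeg x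
          have h2 : #{w | G'.Adj x w} ≤ #{w | G.Adj x w} :=
            card_le_card fun w hw => by
              simp only [mem_filter, mem_univ, true_and] at hw ⊢
              exact ((hG' x w).1 hw).1
          omega
        obtain ⟨c, hc⟩ : ∃ c, ∀ w, G'.Adj u w → f w ≠ c := by
          have h1 : #(({w | G'.Adj u w} : Finset V).image f) < #(univ : Finset C) := by
            have := card_image_le (s := ({w | G'.Adj u w} : Finset V)) (f := f)
            have := hdeg' u
            rw [card_univ]
            omega
          obtain ⟨c, -, hcg⟩ := exists_mem_notMem_of_card_lt_card h1
          exact ⟨c, fun w hw h => hcg (mem_image.2 ⟨w, by simpa using hw, h⟩)⟩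
        have hp : Proper G' (Function.update f u c) := by
          intro x y hxy
          by_cases hx : x = u
          · subst hx
            rw [Function.update_self, Function.update_of_ne hxy.ne']
            exact (hc y hxy).symm
          by_cases hy : y = u
          · subst hy
            rw [Function.update_self, Function.update_of_ne hx]
            exact hc x hxy.symm
          · rw [Function.update_of_ne hx, Function.update_of_ne hy]
            obtain ⟨hadj, hxY, hyY⟩ := (hG' x y).1 hxy
            exact hf x (mem_of_mem_insert_of_ne hxY hx) y (mem_of_mem_insert_of_ne hyY hy) hadj
        have hn : NearEq s (Function.update f u c) (f u) c :=
          NearEq.update (fun d => by rw [hfs d]) c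
        obtain ⟨f', hf', hs'⟩ :=
          exists_equitable_of_nearEq hr hdeg' (hsmall G') _ _ c rfl hp hn
        exact ⟨f', fun x hx y hy hxy => hf' x y ((hG' x y).2 ⟨hxy, hx, hy⟩),
          fun d => Nat.add_right_cancel (hs' d)⟩
    obtain ⟨f, hf, hfs⟩ := hind univ
    exact ⟨f, fun x y => hf x (mem_univ x) y (mem_univ y), hfs⟩

/-- The Hajnal–Szemerédi theorem: a graph with maximum degree less than the number `r + 1` of
colours has a proper colouring whose classes have sizes `⌊n / (r + 1)⌋` or `⌈n / (r + 1)⌉`. -/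
theorem exists_equitable_coloring {V : Type} [Fintype V] (G : SimpleGraph V) (r : ℕ)
    (hdeg : ∀ x, #{w | G.Adj x w} ≤ r) :
    ∃ f : V → Fin (r + 1), Proper G f ∧ ∀ c,
      #{x | f x = c} = Fintype.card V / (r + 1) ∨
        #{x | f x = c} = (Fintype.card V + r) / (r + 1) := by
  set n := Fintype.card V with hn
  obtain ⟨s, hs⟩ : ∃ s, s = (n + r) / (r + 1) := ⟨_, rfl⟩
  have hdm := Nat.div_add_mod (n + r) (r + 1)
  have hml := Nat.mod_lt (n + r) (show r + 1 > 0 by omega)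
  rw [← hs, mul_comm] at hdm
  obtain ⟨p, hp⟩ : ∃ p, n + p = s * (r + 1) := ⟨s * (r + 1) - n, by omega⟩
  have hpr : p ≤ r := by omega
  let G' : SimpleGraph (V ⊕ Fin p) := G ⊕g ⊤
  have hinl : ∀ x y, G'.Adj (Sum.inl x) (Sum.inl y) ↔ G.Adj x y := fun x y => Iff.rfl
  have hinr : ∀ i j : Fin p, G'.Adj (Sum.inr i) (Sum.inr j) ↔ i ≠ j := fun i j => Iff.rfl
  obtain ⟨f, hf, hfs⟩ := exists_equitable_of_card_eq_mul (n + p) (V ⊕ Fin p) (Fin (r + 1))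
    G' s (by simp [hn]) (by simpa [hn] using hp) (by
      intro x
      rw [Fintype.card_fin, Nat.lt_succ_iff]
      rcases x with x | i
      · refine le_trans ?_ (hdeg x)
        rw [← card_map (Function.Embedding.inl (β := Fin p)) (s := ({w | G.Adj x w} : Finset V))]
        refine card_le_card fun w hw => ?_
        rcases w with w | j
        · simpa [G'] using hw
        · simp [G'] at hw
      · refine le_trans ?_ hpr
        refine le_trans (card_le_card (t := (univ : Finset (Fin p)).map Function.Embedding.inr)
          fun w hw => ?_) (by simp)
        rcases w with w | j
        · simp [G'] at hw
        · simp)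
  refine ⟨fun x => f (Sum.inl x), fun x y hxy => hf _ _ ((hinl x y).2 hxy), fun c => ?_⟩
  beta_reduce
  have hsplit : #{x | f (Sum.inl x) = c} + #{i : Fin p | f (Sum.inr i) = c} = s := by
    rw [← hfs c]
    simp only [card_filter]
    rw [Fintype.sum_sum_type]
    congr!
  have hone : #{i : Fin p | f (Sum.inr i) = c} ≤ 1 := by
    refine card_le_one.2 fun i hi j hj => ?_
    simp only [mem_filter, mem_univ, true_and] at hi hj
    by_contra hij
    exact hf _ _ ((hinr i j).2 hij) (hi.trans hj.symm)
  have hle : #{i : Fin p | f (Sum.inr i) = c} ≤ p := by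
    simpa using card_le_univ ({i : Fin p | f (Sum.inr i) = c} : Finset (Fin p))
  rcases Nat.eq_zero_or_pos #{i : Fin p | f (Sum.inr i) = c} with h0 | h0
  · right
    omega
  · left
    obtain ⟨m, rfl⟩ : ∃ m, s = m + 1 := ⟨s - 1, by omega⟩
    have : n / (r + 1) = m := by
      refine Nat.div_eq_of_lt_le ?_ ?_
      · rw [add_mul, one_mul] at hp
        omega
      · omega
    omega

end EquitableColoring

/-- Each agent reviewing the next `k` submissions in cyclic order is an assignment. -/
lemma exists_isAssignment {n k : ℕ} (hkn : k < n) : ∃ M, IsAssignment n k M := by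
  have : NeZero n := ⟨by omega⟩
  have hcard : (Finset.univ.filter fun d : Fin n => 1 ≤ d.val ∧ d.val ≤ k).card = k := by
    rw [← Finset.card_map Fin.valEmbedding]
    have : (Finset.univ.filter fun d : Fin n => 1 ≤ d.val ∧ d.val ≤ k).map Fin.valEmbedding
        = Finset.Icc 1 k := by
      ext m
      simp only [Finset.mem_map, Finset.mem_filter, Finset.mem_univ, true_and,
        Fin.valEmbedding_apply, Finset.mem_Icc]
      constructor
      · rintro ⟨d, hd, rfl⟩
        exact hd
      · intro hm
        exact ⟨⟨m, by omega⟩, hm, rfl⟩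
    rw [this, Nat.card_Icc]
    omega
  refine ⟨Finset.univ.filter fun p => 1 ≤ (p.2 - p.1).val ∧ (p.2 - p.1).val ≤ k,
    fun i => ?_, fun j => ?_, fun i => by simp⟩
  · refine Eq.trans (Finset.card_nbij' (fun p => p.2 - p.1) (fun d => (i, i + d)) ?_ ?_ ?_ ?_) hcard
    · rintro ⟨p₁, p₂⟩ hp
      simp only [Finset.coe_filter, Finset.mem_filter, Finset.mem_univ, true_and,
        Set.mem_ofPred_eq] at hp ⊢
      exact hp.1
    · intro d hd
      simp_all
    · rintro ⟨p₁, p₂⟩ hp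
      simp_all
    · intro d hd
      simp
  · refine Eq.trans (Finset.card_nbij' (fun p => p.2 - p.1) (fun d => (j - d, j)) ?_ ?_ ?_ ?_) hcard
    · rintro ⟨p₁, p₂⟩ hp
      simp only [Finset.coe_filter, Finset.mem_filter, Finset.mem_univ, true_and,
        Set.mem_ofPred_eq] at hp ⊢
      exact hp.1
    · intro d hd
      simp_all
    · rintro ⟨p₁, p₂⟩ hp
      simp_all
    · intro d hd
      simp

lemma exists_isAssignment_simVal_eq {n k : ℕ} (hkn : k < n) (S : Fin n → Fin n → ℝ) :
    ∃ M, IsAssignment n k M ∧ simVal S M = OptSim n k S := by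
  have hfin : {x : ℝ | ∃ M : Finset (Fin n × Fin n), IsAssignment n k M ∧ simVal S M = x}.Finite :=
    (Set.finite_range (simVal S)).subset (by
      rintro x ⟨M, -, rfl⟩
      exact ⟨M, rfl⟩)
  obtain ⟨M, hM⟩ := exists_isAssignment hkn
  have hne : {x : ℝ | ∃ M : Finset (Fin n × Fin n), IsAssignment n k M ∧ simVal S M = x}.Nonempty :=
    ⟨simVal S M, M, hM, rfl⟩
  exact hne.csSup_mem hfin

theorem stmt3 (n k : ℕ) (hk : 1 ≤ k) (hn : 0 < n) (hkn : k ≤ n / 2)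
    (S : Fin n → Fin n → ℝ) (hS : ∀ i j, 0 ≤ S i j ∧ S i j ≤ 1) :
    ∃ (P : Fin (2 * k + 1) → Finset (Fin n)) (M : Finset (Fin n × Fin n)),
      (∀ t₁ t₂ : Fin (2 * k + 1), t₁ ≠ t₂ → Disjoint (P t₁) (P t₂)) ∧
      Finset.univ.biUnion P = Finset.univ ∧
      (∀ t, (P t).card = n / (2 * k + 1) ∨ (P t).card = (n + 2 * k) / (2 * k + 1)) ∧
      IsAssignment n k M ∧ simVal S M = OptSim n k S ∧
      ∀ p ∈ M, ∀ t : Fin (2 * k + 1), ¬(p.1 ∈ P t ∧ p.2 ∈ P t) := by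
  obtain ⟨M, hM, hopt⟩ := exists_isAssignment_simVal_eq (show k < n by omega) S
  let G : SimpleGraph (Fin n) :=
    { Adj := fun i j => (i, j) ∈ M ∨ (j, i) ∈ M
      symm := ⟨fun i j h => h.symm⟩
      loopless := ⟨fun i h => hM.2.2 i (h.elim id id)⟩ }
  obtain ⟨f, hf, hfs⟩ := EquitableColoring.exists_equitable_coloring G (2 * k) (by
    intro i
    have hsub : ∀ j, G.Adj i j → j ∈ ((M.filter fun p => p.1 = i).image Prod.snd) ∪
        ((M.filter fun p => p.2 = i).image Prod.fst) := by
      intro j hj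
      rcases hj with h | h
      · exact Finset.mem_union_left _ (Finset.mem_image.2 ⟨(i, j), by simpa using h, rfl⟩)
      · exact Finset.mem_union_right _ (Finset.mem_image.2 ⟨(j, i), by simpa using h, rfl⟩)
    refine (Finset.card_le_card fun j hj => hsub j (by simpa using hj)).trans
      ((Finset.card_union_le _ _).trans ?_)
    have h1 := Finset.card_image_le (s := M.filter fun p => p.1 = i) (f := Prod.snd)
    have h2 := Finset.card_image_le (s := M.filter fun p => p.2 = i) (f := Prod.fst)
    rw [hM.1 i] at h1
    rw [hM.2.1 i] at h2
    omega)
  refine ⟨fun t => Finset.univ.filter fun i => f i = t, M, fun t₁ t₂ hne => ?_, ?_, fun t => ?_,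
    hM, hopt, fun p hp t ht => ?_⟩
  · refine Finset.disjoint_left.2 fun i h₁ h₂ => hne ?_
    rw [← (Finset.mem_filter.1 h₁).2, ← (Finset.mem_filter.1 h₂).2]
  · ext i
    simp
  · convert hfs t using 3 <;> simp
  · simp only [Finset.mem_filter, Finset.mem_univ, true_and] at ht
    exact hf p.1 p.2 (Or.inl hp) (ht.1.trans ht.2.symm)
end

section
/- For every integer k ≥ 1 and every even integer n ≥ 6 with k ≤ n/2, there exists a similarity matrix S ∈ [0,1]^{n×n} such that: (a) there exists an assignment M with loads k for which min_{j ∈ [n]} Σ_{i : (i,j) ∈ M} S_{ij} > 0; and (b) for every partition of [n] into two subsets and every assignment M with loads k respecting this partition, there exists j ∈ [n] with Σ_{i : (i,j) ∈ M} S_{ij} = 0. -/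
open Fin.CommRing in
/-- The permutation `(0 1 2)(3 4 … n-1)` of `Fin n`, for `n = m + 6`. -/
def threeCyclePerm (m : ℕ) : Equiv.Perm (Fin (m + 6)) :=
  (Equiv.swap 2 (-1)).trans (Equiv.addRight 1)

open Fin.CommRing in
theorem threeCyclePerm_displacement (m : ℕ) (j : Fin (m + 6)) :
    threeCyclePerm m j - j ∈ ({1, -2, 4} : Finset (Fin (m + 6))) := by
  simp only [threeCyclePerm, Equiv.trans_apply, Equiv.coe_addRight, Equiv.swap_apply_def,
    Finset.mem_insert, Finset.mem_singleton]
  split_ifs with h₁ h₂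
  · subst h₁; right; left; ring
  · subst h₂; right; right; ring
  · left; ring

open Fin.CommRing in
theorem threeCyclePerm_cycle (m : ℕ) :
    threeCyclePerm m 0 = 1 ∧ threeCyclePerm m 1 = 2 ∧ threeCyclePerm m 2 = 0 := by
  have h02 : (0 : Fin (m + 6)) ≠ 2 := by
    simp [Fin.ext_iff, Nat.mod_eq_of_lt (show 2 < m + 6 by omega)]
  have h12 : (1 : Fin (m + 6)) ≠ 2 := by
    simp [Fin.ext_iff, Nat.mod_eq_of_lt (show 2 < m + 6 by omega)]
  have h0 : (0 : Fin (m + 6)) ≠ -1 := fun h => by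
    have : (0 : Fin (m + 6)) = 1 := by linear_combination -h
    simp at this
  have h1 : (1 : Fin (m + 6)) ≠ -1 := fun h => h02 (by linear_combination -h)
  refine ⟨?_, ?_, ?_⟩
  · simp [threeCyclePerm, Equiv.swap_apply_of_ne_of_ne h02 h0]
  · simp only [threeCyclePerm, Equiv.trans_apply, Equiv.swap_apply_of_ne_of_ne h12 h1,
      Equiv.coe_addRight]
    ring
  · simp [threeCyclePerm]

open Fin.CommRing in
/-- For `k ≤ n / 2` there is an assignment with loads `k` in which every submission `j` is
reviewed by `threeCyclePerm m j`. -/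
theorem exists_isAssignment_threeCyclePerm (m k : ℕ) (hk : 1 ≤ k) (hkn : k ≤ (m + 6) / 2) :
    ∃ M : Finset (Fin (m + 6) × Fin (m + 6)), IsAssignment (m + 6) k M ∧
      ∀ j, (threeCyclePerm m j, j) ∈ M := by
  set σ := threeCyclePerm m
  have h0 : (0 : Fin (m + 6)) ∉ ({1, -2, 4} : Finset (Fin (m + 6))) := by
    simp only [Finset.mem_insert, Finset.mem_singleton, not_or]
    have h2 : (2 : Fin (m + 6)) ≠ 0 := by
      simp [Fin.ext_iff, Nat.mod_eq_of_lt (show 2 < m + 6 by omega)]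
    refine ⟨by simp, fun h => h2 (by linear_combination h), ?_⟩
    simp [Fin.ext_iff, Nat.mod_eq_of_lt (show 4 < m + 6 by omega)]
  have hcard : k ≤ ({1, -2, 4} : Finset (Fin (m + 6)))ᶜ.card := by
    have := Finset.card_le_three (a := (1 : Fin (m + 6))) (b := -2) (c := 4)
    rw [Finset.card_compl, Fintype.card_fin]
    omega
  obtain ⟨D, hD0, hD, hDk⟩ := Finset.exists_subsuperset_card_eq
    (s := {0}) (t := ({1, -2, 4} : Finset (Fin (m + 6)))ᶜ) (n := k)
    (by simpa using h0) (by simpa using hk) hcard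
  refine ⟨Finset.univ.filter fun p => σ p.2 - p.1 ∈ D, ⟨fun i => ?_, fun j => ?_, fun i hi => ?_⟩,
    fun j => ?_⟩
  · subst hDk
    refine Finset.card_bij' (fun p _ => σ p.2 - p.1) (fun d _ => (i, σ.symm (d + i))) ?_ ?_ ?_ ?_
    · exact fun p hp => (Finset.mem_filter.1 (Finset.mem_filter.1 hp).1).2
    · simp
    · rintro ⟨a, b⟩ h
      simp only [Finset.mem_filter] at h
      simp [← h.2]
    · simp
  · subst hDk
    refine Finset.card_bij' (fun p _ => σ p.2 - p.1) (fun d _ => (σ j - d, j)) ?_ ?_ ?_ ?_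
    · exact fun p hp => (Finset.mem_filter.1 (Finset.mem_filter.1 hp).1).2
    · simp
    · rintro ⟨a, b⟩ h
      simp only [Finset.mem_filter] at h
      simp [← h.2]
    · simp
  · exact Finset.mem_compl.1 (hD (Finset.mem_filter.1 hi).2) (threeCyclePerm_displacement m i)
  · simpa using hD0

theorem stmt4 (k n : ℕ) (hk : 1 ≤ k) (hn : 6 ≤ n) (heven : Even n) (hkn : k ≤ n / 2) :
    ∃ S : Fin n → Fin n → ℝ,
      (∀ i j, 0 ≤ S i j ∧ S i j ≤ 1) ∧
      (∃ M : Finset (Fin n × Fin n), IsAssignment n k M ∧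
        ∀ j : Fin n, 0 < ∑ p ∈ M.filter (fun p => p.2 = j), S p.1 p.2) ∧
      (∀ (A₁ A₂ : Finset (Fin n)) (M : Finset (Fin n × Fin n)),
        Disjoint A₁ A₂ → A₁ ∪ A₂ = Finset.univ →
        IsAssignment n k M → Respects A₁ A₂ M →
        ∃ j : Fin n, ∑ p ∈ M.filter (fun p => p.2 = j), S p.1 p.2 = 0) := by
  obtain ⟨m, rfl⟩ := Nat.exists_eq_add_of_le' hn
  refine ⟨fun i j => if threeCyclePerm m j = i then 1 else 0, fun i j => ?_, ?_, ?_⟩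
  · dsimp only
    split_ifs <;> norm_num
  · obtain ⟨M, hM, hmem⟩ := exists_isAssignment_threeCyclePerm m k hk hkn
    refine ⟨M, hM, fun j => Finset.sum_pos' (fun p _ => ?_) ⟨(threeCyclePerm m j, j), ?_, ?_⟩⟩
    · dsimp only
      split_ifs <;> norm_num
    · simpa using hmem j
    · simp
  · intro A₁ A₂ M hdisj _ _ hresp
    by_contra! hne
    have hmem (j) : (threeCyclePerm m j, j) ∈ M := by
      obtain ⟨⟨a, b⟩, hp, hp'⟩ := Finset.exists_ne_zero_of_sum_ne_zero (hne j)
      simp only [Finset.mem_filter] at hp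
      obtain ⟨hp, rfl⟩ := hp
      have hab : threeCyclePerm m b = a := by simpa using hp'
      rwa [hab]
    obtain ⟨c₀, c₁, c₂⟩ := threeCyclePerm_cycle m
    have h₀ := hresp _ (hmem 0)
    have h₁ := hresp _ (hmem 1)
    have h₂ := hresp _ (hmem 2)
    simp only [c₀, c₁, c₂] at h₀ h₁ h₂
    have hd (x) (h : x ∈ A₁) : x ∉ A₂ := Finset.disjoint_left.1 hdisj h
    have := hd 0
    have := hd 1
    have := hd 2
    tauto
end

section
/- Let n ≥ 2 be even and let k be a positive integer with k ≤ n/2. For every similarity matrix S ∈ [0,1]^{n×n}, the average over all subsets A₁ ⊆ [n] of size n/2 (with A₂ = [n] \ A₁) of the maximum similarity of an assignment with loads k respecting (A₁, A₂) is at least (1/2)·Opt_S. That is, (1/C(n, n/2))·Σ_{A₁ ⊆ [n], |A₁| = n/2} max{ Σ_{(i,j)∈M} S_{ij} : M an assignment with loads k respecting (A₁, [n]\A₁) } ≥ (1/2)·Opt_S. -/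
lemma two_mul_sq_sub_le_pow_four {s x : ℝ} (hs0 : 0 ≤ s) (hs1 : s ≤ 1)
    (hxs : x ≤ s) (hxk : x ≤ 1 - s ^ 2) (h : s * (1 - s ^ 2) ≤ x) :
    2 * (x - s * (1 - s ^ 2)) ^ 2 ≤ x ^ 4 := by
  obtain ⟨μ, hμ0, hμ2⟩ : ∃ μ : ℝ, 0 < μ ∧ μ ^ 2 = 2 :=
    ⟨√2, Real.sqrt_pos.2 (by norm_num), Real.sq_sqrt (by norm_num)⟩
  have hμ1 : 1 ≤ μ := by nlinarith only [hμ0, hμ2]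
  have hμ3 : μ ≤ 3 / 2 := by nlinarith only [hμ0, hμ2]
  have key : μ * (x - s * (1 - s ^ 2)) ≤ x ^ 2 := by
    rcases le_total (μ * s) 1 with hms | hms
    · have hs' : s ≤ μ / 2 := by nlinarith only [hμ0, hμ2, hms]
      have h1 : 0 ≤ (s - x) * (μ - s - x) := mul_nonneg (by linarith) (by linarith)
      have h2 : 0 ≤ s ^ 2 * (1 - μ * s) := mul_nonneg (sq_nonneg s) (by linarith)
      linarith only [h1, h2]
    · have hs2 : 1 ≤ 2 * s ^ 2 := by
        have := pow_le_pow_left₀ zero_le_one hms 2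
        rwa [mul_pow, hμ2, one_pow] at this
      have hs3 : 1 / 2 ≤ s := by nlinarith only [hs2, hs0]
      have h1 : 0 ≤ (1 - s ^ 2 - x) * (μ - (1 - s ^ 2) - x) :=
        mul_nonneg (by linarith) (by linarith)
      have h2 : 0 ≤ (1 - s ^ 2) * ((1 - s) * (1 + s - μ)) :=
        mul_nonneg (by nlinarith only [hs0, hs1]) (mul_nonneg (by linarith) (by linarith))
      linarith only [h1, h2]
  have := pow_le_pow_left₀ (mul_nonneg hμ0.le (sub_nonneg.2 h)) key 2
  rw [mul_pow, hμ2] at this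
  linarith only [this]

/-- Lower bound for the unconstrained minimum over the two side lengths, in normalised form. -/
lemma loss_core {s k r c x : ℝ} (hs0 : 0 ≤ s) (hs1 : s ≤ 1) (hk : k = 1 - s ^ 2)
    (hr0 : 0 < r) (hc0 : 0 < c) (hrk : r ≤ k) (hck : c ≤ k) (hx0 : 0 ≤ x) (hx : x ^ 2 = r * c)
    (hxs : x ≤ s) (hrc : s ^ 2 * r ≤ c) (hcr : s ^ 2 * c ≤ r) :
    0 ≤ 4 * s * x - 2 * s ^ 2 * (r + c) - 2 * x ^ 2 + k * (max (r + c - k) 0) ^ 2 := by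
  have hk0 : 0 < k := hr0.trans_le hrk
  have hσ : s * (r + c) ≤ x * (1 + s ^ 2) := by
    refine abs_le_of_sq_le_sq' ?_ (by positivity) |>.2
    rw [mul_pow, mul_pow, hx]
    linarith only [mul_nonneg (sub_nonneg.2 hrc) (sub_nonneg.2 hcr)]
  rcases le_total x (s * k) with h | h
  · have h1 : 0 ≤ 4 * s * x - 2 * s ^ 2 * (r + c) - 2 * x ^ 2 := by
      have : 0 ≤ x * (s * k - x) := mul_nonneg hx0 (sub_nonneg.2 h)
      subst hk
      linarith only [this, mul_le_mul_of_nonneg_left hσ hs0]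
    positivity
  · have hxk : x ≤ k := by
      refine abs_le_of_sq_le_sq' ?_ hk0.le |>.2
      rw [hx, sq]
      exact mul_le_mul hrk hck hc0.le hk0.le
    rcases le_total (r + c - k) 0 with hw | hw
    · rw [max_eq_right hw]
      have h1 : x * (1 - s) ≤ s * k := by subst hk; nlinarith only [hxs, hs0, hs1]
      have h2 : (x - s * k) ^ 2 ≤ (s * x) ^ 2 := by
        apply pow_le_pow_left₀ (by linarith); linarith
      have h3 : 0 ≤ k * (4 * s * x - 2 * s ^ 2 * k - 2 * x ^ 2) := by
        have : k * (4 * s * x - 2 * s ^ 2 * k - 2 * x ^ 2)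
          = 2 * ((s * x) ^ 2 - (x - s * k) ^ 2) + 2 * x ^ 2 * (1 - s ^ 2 - k) := by ring
        rw [this, hk]; rw [hk] at h2; linarith
      have h4 := nonneg_of_mul_nonneg_right h3 hk0
      linarith only [h4, mul_nonneg (sq_nonneg s) (neg_nonneg.2 hw)]
    · rw [max_eq_left hw]
      obtain ⟨w, hwdef⟩ : ∃ w, w = r + c - k := ⟨_, rfl⟩
      rw [← hwdef] at hw ⊢
      have hkw : k * w ≤ x ^ 2 := by
        rw [hx, hwdef]; linarith only [mul_nonneg (sub_nonneg.2 hrk) (sub_nonneg.2 hck)]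
      have hq : 2 * (x - s * k) ^ 2 ≤ x ^ 4 := by
        subst hk
        exact two_mul_sq_sub_le_pow_four hs0 hs1 hxs hxk h
      have h1 : 0 ≤ k * (4 * s * x - 2 * s ^ 2 * (k + w) - 2 * x ^ 2 + k * w ^ 2) := by
        have h7 : (s ^ 2 - x ^ 2) ^ 2 ≤ (s ^ 2 - k * w) ^ 2 := by
          apply pow_le_pow_left₀ _ (by linarith)
          linarith [pow_le_pow_left₀ hx0 hxs 2]
        have : k * (4 * s * x - 2 * s ^ 2 * (k + w) - 2 * x ^ 2 + k * w ^ 2) =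
          (x ^ 4 - 2 * (x - s * k) ^ 2) + ((s ^ 2 - k * w) ^ 2 - (s ^ 2 - x ^ 2) ^ 2)
          + 2 * x ^ 2 * (1 - s ^ 2 - k) := by ring
        rw [this]
        have : 1 - s ^ 2 - k = 0 := by rw [hk]; ring
        rw [this]; linarith
      have h4 := nonneg_of_mul_nonneg_right h1 hk0
      have : r + c = k + w := by rw [hwdef]; ring
      rw [this]; exact h4

lemma loss_of_le {p k r c a y g h : ℝ} (hk : k = 1 - p) (hr0 : 0 < r) (hc0 : 0 < c)
    (hrk : r ≤ k) (hpa : p ≤ a) (hy1 : y ≤ 1) (hga : g * a = p) (hhy : h * y = p) (hg1 : g ≤ 1)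
    (hph : p ≤ h) (hcr : c ≤ p * r) :
    2 * (r * c) ≤ c * (y - 2 * p + g) + r * (a - 2 * p + h) := by
  have e1 : 0 ≤ (a * r - c) * (1 - g) :=
    mul_nonneg (by linarith [mul_le_mul_of_nonneg_right hpa hr0.le]) (by linarith)
  have e2 : 0 ≤ (1 - y) * (r * h - c) :=
    mul_nonneg (by linarith) (by linarith [mul_le_mul_of_nonneg_left hph hr0.le])
  have e3 : 0 ≤ c * (k - r) := mul_nonneg hc0.le (by linarith)
  subst hk
  linear_combination e1 + e2 + 2 * e3 - r * hga - r * hhy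

/-- The linear upper bound on the retained fraction of an edge, in normalised form. -/
lemma loss_normalised {p k a y r c : ℝ} (hp : 0 ≤ p) (hk : k = 1 - p)
    (hr0 : 0 < r) (hc0 : 0 < c) (hrk : r ≤ k) (hck : c ≤ k) (hca : c ≤ a) (hry : r ≤ y)
    (hpa : p ≤ a) (hpy : p ≤ y) (ha1 : a ≤ 1) (hy1 : y ≤ 1) :
    2 * (r * c) - k * (max (r + c - k) 0) ^ 2 ≤
      c * (y - 2 * p + p / a) + r * (a - 2 * p + p / y) := by
  have ha0 : 0 < a := hc0.trans_le hca
  have hy0 : 0 < y := hr0.trans_le hry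
  have hk0 : 0 < k := hr0.trans_le hrk
  have hw0 : 0 ≤ k * (max (r + c - k) 0) ^ 2 := by positivity
  have hga : p / a * a = p := div_mul_cancel₀ _ ha0.ne'
  have hhy : p / y * y = p := div_mul_cancel₀ _ hy0.ne'
  have hg0 : 0 ≤ p / a := by positivity
  have hh0 : 0 ≤ p / y := by positivity
  have hg1 : p / a ≤ 1 := by rw [div_le_one ha0]; exact hpa
  have hh1 : p / y ≤ 1 := by rw [div_le_one hy0]; exact hpy
  generalize p / a = g at *
  generalize p / y = h at *
  have hpg : p ≤ g := by nlinarith only [hga, hg0, ha1]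
  have hph : p ≤ h := by nlinarith only [hhy, hh0, hy1]
  by_cases h1 : c ≤ p * r
  · linarith only [hw0, loss_of_le hk hr0 hc0 hrk hpa hy1 hga hhy hg1 hph h1]
  by_cases h2 : r ≤ p * c
  · linarith only [hw0, loss_of_le hk hc0 hr0 hck hpy ha1 hhy hga hh1 hpg h2]
  push Not at h1 h2
  by_cases h3 : r * c ≤ p
  · have hs2 : √p ^ 2 = p := Real.sq_sqrt hp
    have hx2 : √(r * c) ^ 2 = r * c := Real.sq_sqrt (by positivity)
    have hxs : √(r * c) ≤ √p := Real.sqrt_le_sqrt h3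
    have hs0 := Real.sqrt_nonneg p
    have hx0 := Real.sqrt_nonneg (r * c)
    generalize √p = s at *
    generalize √(r * c) = x at *
    have main := loss_core hs0 (by nlinarith only [hs2, hk, hk0, hs0]) (by rw [hs2, hk])
      hr0 hc0 hrk hck hx0 hx2 hxs (by rw [hs2]; exact h1.le) (by rw [hs2]; exact h2.le)
    rw [hs2, hx2] at main
    have amgm : ∀ u v : ℝ, 0 ≤ u → 0 ≤ v → u * v = (s * x) ^ 2 → 2 * (s * x) ≤ u + v := by
      intro u v hu hv huv
      refine abs_le_of_sq_le_sq' ?_ (by positivity) |>.2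
      nlinarith only [sq_nonneg (u - v), huv]
    have e1 := amgm (c * g) (r * a) (by positivity) (by positivity) (by
      rw [mul_pow, hs2, hx2]; linear_combination r * c * hga)
    have e2 := amgm (r * h) (c * y) (by positivity) (by positivity) (by
      rw [mul_pow, hs2, hx2]; linear_combination r * c * hhy)
    linarith only [main, e1, e2]
  · push Not at h3
    have e1 : 0 ≤ (a - c) * (r - g) := mul_nonneg (by linarith) (by
      have : g * a ≤ r * a := by rw [hga]; nlinarith only [h3, hca, hr0]
      linarith [le_of_mul_le_mul_right this ha0])
    have e2 : 0 ≤ (y - r) * (c - h) := mul_nonneg (by linarith) (by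
      have : h * y ≤ c * y := by rw [hhy]; nlinarith only [h3, hry, hc0]
      linarith [le_of_mul_le_mul_right this hy0])
    have e3 : 0 ≤ 2 * p * (1 - r - c) + k * (max (r + c - k) 0) ^ 2 := by
      rcases le_total (r + c - k) 0 with hw | hw
      · have : 0 ≤ p * (1 - r - c) := mul_nonneg hp (by linarith)
        linarith
      · rw [max_eq_left hw]
        have hkk : 1 / 2 ≤ k := by nlinarith only [h3, hrk, hck, hr0, hc0, hk]
        obtain ⟨w, hwd⟩ : ∃ w, w = r + c - k := ⟨_, rfl⟩
        rw [← hwd]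
        have : 1 - r - c = p - w := by rw [hwd, hk]; ring
        rw [this]
        nlinarith only [sq_nonneg (w - 2 * p), sq_nonneg w, hkk]
    linarith only [e1, e2, e3, hga, hhy]

/-- The fraction of an edge that may be lost when its endpoints have degrees `r` and `c`. -/
noncomputable def edgeLoss (m k r c : ℕ) : ℝ :=
  k / (2 * m) * (max ((r : ℝ) + c - k) 0) ^ 2 / (r * c)

lemma edgeLoss_nonneg (m k r c : ℕ) : 0 ≤ edgeLoss m k r c := by
  unfold edgeLoss; positivity

lemma edgeLoss_comm (m k r c : ℕ) : edgeLoss m k r c = edgeLoss m k c r := by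
  unfold edgeLoss; rw [add_comm (r : ℝ), mul_comm (r : ℝ)]

lemma edgeLoss_le_one {m k r c : ℕ} (hkm : k ≤ m) (hrk : r ≤ k) (hck : c ≤ k) :
    edgeLoss m k r c ≤ 1 := by
  unfold edgeLoss
  rcases Nat.eq_zero_or_pos r with rfl | hr
  · simp
  rcases Nat.eq_zero_or_pos c with rfl | hc
  · simp
  have hr' : (0 : ℝ) < r := by exact_mod_cast hr
  have hc' : (0 : ℝ) < c := by exact_mod_cast hc
  have hrk' : (r : ℝ) ≤ k := by exact_mod_cast hrk
  have hck' : (c : ℝ) ≤ k := by exact_mod_cast hck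
  have hkm' : (k : ℝ) ≤ m := by exact_mod_cast hkm
  have hm : (0 : ℝ) < m := by linarith
  rw [div_le_one (by positivity)]
  have h1 : (k : ℝ) / (2 * m) ≤ 1 := by rw [div_le_one (by positivity)]; linarith
  have h2 : max ((r : ℝ) + c - k) 0 ^ 2 ≤ r * c := by
    rcases le_total ((r : ℝ) + c - k) 0 with h | h
    · rw [max_eq_right h, zero_pow two_ne_zero]; positivity
    · rw [max_eq_left h]
      nlinarith [mul_nonneg (sub_nonneg.2 hrk') (sub_nonneg.2 hck')]
  calc _ ≤ 1 * (max ((r : ℝ) + c - k) 0 ^ 2) := by gcongr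
    _ ≤ _ := by linarith

lemma edgeLoss_mono_left {m k r r' c : ℕ} (h0 : 0 < r) (hc : 0 < c) (hrr : r ≤ r')
    (hck : c ≤ k) : edgeLoss m k r c ≤ edgeLoss m k r' c := by
  unfold edgeLoss
  have hr' : (0 : ℝ) < r := by exact_mod_cast h0
  have hc' : (0 : ℝ) < c := by exact_mod_cast hc
  have hrr' : (r : ℝ) ≤ r' := by exact_mod_cast hrr
  have hck' : (c : ℝ) ≤ k := by exact_mod_cast hck
  rw [div_le_div_iff₀ (by positivity) (by nlinarith), mul_assoc, mul_assoc]
  refine mul_le_mul_of_nonneg_left ?_ (by positivity)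
  rcases le_total ((r : ℝ) + c - k) 0 with h | h
  · rw [max_eq_right h, zero_pow two_ne_zero, zero_mul]; positivity
  · rw [max_eq_left h, max_eq_left (by linarith)]
    obtain ⟨u, hu⟩ : ∃ u : ℝ, u = k - c := ⟨_, rfl⟩
    obtain ⟨v, hv⟩ : ∃ v : ℝ, v = r' - r := ⟨_, rfl⟩
    have hu0 : 0 ≤ u := by linarith
    have hv0 : 0 ≤ v := by linarith
    have e1 : (r : ℝ) + c - k = r - u := by rw [hu]; ring
    have e2 : (r' : ℝ) + c - k = r + v - u := by rw [hu, hv]; ring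
    have e3 : (r' : ℝ) = r + v := by rw [hv]; ring
    rw [e1] at h
    rw [e1, e2, e3]
    have : (r - u) ^ 2 * (r + v) ≤ (r + v - u) ^ 2 * r := by
      have : 0 ≤ v * ((r - u) * (r + u)) := mul_nonneg hv0 (mul_nonneg h (by linarith))
      have h2 : 0 ≤ v * (v * r) := by positivity
      linarith only [this, h2]
    linarith only [mul_le_mul_of_nonneg_right this hc'.le]

lemma edgeLoss_mono {m k r r' c c' : ℕ} (hr : 0 < r) (hc : 0 < c) (hrr : r ≤ r') (hcc : c ≤ c')
    (hrk : r' ≤ k) (hck : c' ≤ k) : edgeLoss m k r c ≤ edgeLoss m k r' c' :=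
  (edgeLoss_mono_left hr hc hrr (hcc.trans hck)).trans <| by
    rw [edgeLoss_comm m k r', edgeLoss_comm m k r']
    exact edgeLoss_mono_left hc (hr.trans_le hrr) hcc hrk

lemma one_sub_edgeLoss_le {m k r c : ℕ} {a y : ℝ} (hr0 : 0 < r) (hc0 : 0 < c) (hkm : k ≤ m)
    (hrk : r ≤ k) (hck : c ≤ k) (hca : c ≤ a) (hry : r ≤ y) (hpa : (m : ℝ) - k ≤ a)
    (hpy : (m : ℝ) - k ≤ y) (ha1 : a ≤ m) (hy1 : y ≤ m) :
    1 - edgeLoss m k r c ≤ (y - 2 * (m - k) + (m - k) * m / a) / 2 / r +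
      (a - 2 * (m - k) + (m - k) * m / y) / 2 / c := by
  have hr' : (0 : ℝ) < r := by exact_mod_cast hr0
  have hc' : (0 : ℝ) < c := by exact_mod_cast hc0
  have hrk' : (r : ℝ) ≤ k := by exact_mod_cast hrk
  have hck' : (c : ℝ) ≤ k := by exact_mod_cast hck
  have hkm' : (k : ℝ) ≤ m := by exact_mod_cast hkm
  have hm : (0 : ℝ) < m := by linarith
  have ha : 0 < a := hc'.trans_le hca
  have hy : 0 < y := hr'.trans_le hry
  have key := loss_normalised (p := (m - k) / m) (k := k / m) (a := a / m) (y := y / m)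
    (r := r / m) (c := c / m) (div_nonneg (by linarith) hm.le) (by field_simp; ring)
    (by positivity) (by positivity) (by gcongr) (by gcongr) (by gcongr) (by gcongr) (by gcongr)
    (by gcongr) ((div_le_one hm).2 ha1) ((div_le_one hm).2 hy1)
  have hmax : max ((r : ℝ) / m + c / m - k / m) 0 = max ((r : ℝ) + c - k) 0 / m := by
    rw [← add_div, ← sub_div, ← max_div_div_right hm.le, zero_div]
  rw [hmax] at key
  unfold edgeLoss
  generalize max ((r : ℝ) + c - k) 0 = w at *
  have e1 : (1 - k / (2 * m) * w ^ 2 / (r * c)) =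
    (2 * (r / m * (c / m)) - k / m * (w / m) ^ 2) * (m ^ 2 / (2 * r * c)) := by
    field_simp
  have e2 : (y - 2 * (m - k) + (m - k) * m / a) / 2 / r +
      (a - 2 * (m - k) + (m - k) * m / y) / 2 / c =
    (c / m * (y / m - 2 * ((m - k) / m) + (m - k) / m / (a / m)) +
      r / m * (a / m - 2 * ((m - k) / m) + (m - k) / m / (y / m))) * (m ^ 2 / (2 * r * c)) := by
    field_simp
  rw [e1, e2]
  exact mul_le_mul_of_nonneg_right key (by positivity)

open Finset in
/-- The cut condition: edges weighted by their retained fraction never overload a rectangle. -/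
lemma sum_retained_le_cut {I J : Type*} [Fintype I] [Fintype J] {m k : ℕ}
    (hI : Fintype.card I = m) (hJ : Fintype.card J = m) (hkm : k ≤ m)
    (H : I → J → Prop) [∀ i j, Decidable (H i j)]
    (hr : ∀ i, #{j | H i j} ≤ k) (hc : ∀ j, #{i | H i j} ≤ k) (P : Finset I) (Y : Finset J) :
    ∑ i ∈ P, ∑ j ∈ Y, (if H i j then 1 - edgeLoss m k #{j | H i j} #{i | H i j} else 0) ≤
      (#P : ℝ) * #Y - (m - k) * (#P + #Y - m) := by
  have hPm : (#P : ℝ) ≤ m := by exact_mod_cast hI ▸ card_le_univ P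
  have hYm : (#Y : ℝ) ≤ m := by exact_mod_cast hJ ▸ card_le_univ Y
  have hle1 : ∀ i j, (if H i j then 1 - edgeLoss m k #{j | H i j} #{i | H i j} else 0) ≤
      (if H i j then (1 : ℝ) else 0) := by
    intro i j
    split_ifs
    · linarith [edgeLoss_nonneg m k #{j | H i j} #{i | H i j}]
    · rfl
  have hif : ∀ (i : I) (j : J), 0 ≤ (if H i j then (1 : ℝ) else 0) := by
    intro i j; split_ifs <;> norm_num
  by_cases hPk : (#P : ℝ) ≤ m - k
  · have : ∑ i ∈ P, ∑ j ∈ Y, (if H i j then 1 - edgeLoss m k #{j | H i j} #{i | H i j} else 0) ≤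
        ∑ i ∈ P, (k : ℝ) := by
      refine sum_le_sum fun i _ => (sum_le_sum fun j _ => hle1 i j).trans ?_
      refine (sum_le_univ_sum_of_nonneg (hif i)).trans ?_
      rw [sum_boole]; exact_mod_cast hr i
    rw [sum_const, nsmul_eq_mul] at this
    linarith [mul_nonneg (sub_nonneg.2 hPk) (sub_nonneg.2 hYm)]
  by_cases hYk : (#Y : ℝ) ≤ m - k
  · have : ∑ i ∈ P, ∑ j ∈ Y, (if H i j then 1 - edgeLoss m k #{j | H i j} #{i | H i j} else 0) ≤
        ∑ j ∈ Y, (k : ℝ) := by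
      rw [sum_comm]
      refine sum_le_sum fun j _ => (sum_le_sum fun i _ => hle1 i j).trans ?_
      refine (sum_le_univ_sum_of_nonneg (hif · j)).trans ?_
      rw [sum_boole]; exact_mod_cast hc j
    rw [sum_const, nsmul_eq_mul] at this
    linarith [mul_nonneg (sub_nonneg.2 hYk) (sub_nonneg.2 hPm)]
  push Not at hPk hYk
  have hkm' : (k : ℝ) ≤ m := by exact_mod_cast hkm
  have hP0 : (0 : ℝ) < #P := by linarith
  have hY0 : (0 : ℝ) < #Y := by linarith
  set α : ℝ := (#Y - 2 * (m - k) + (m - k) * m / #P) / 2 with hα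
  set β : ℝ := (#P - 2 * (m - k) + (m - k) * m / #Y) / 2 with hβ
  have hα0 : 0 ≤ α := by
    have : (m : ℝ) - k ≤ (m - k) * m / #P := by
      rw [le_div_iff₀ hP0]; exact mul_le_mul_of_nonneg_left hPm (by linarith)
    linarith
  have hβ0 : 0 ≤ β := by
    have : (m : ℝ) - k ≤ (m - k) * m / #Y := by
      rw [le_div_iff₀ hY0]; exact mul_le_mul_of_nonneg_left hYm (by linarith)
    linarith
  have hpt : ∀ i ∈ P, ∀ j ∈ Y,
      (if H i j then 1 - edgeLoss m k #{j | H i j} #{i | H i j} else 0) ≤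
      (if H i j then α / #{j ∈ Y | H i j} else 0) +
        (if H i j then β / #{i ∈ P | H i j} else 0) := by
    intro i hi j hj
    split_ifs with h
    · have h1 : 0 < #{j ∈ Y | H i j} := card_pos.2 ⟨j, by simp [hj, h]⟩
      have h2 : 0 < #{i ∈ P | H i j} := card_pos.2 ⟨i, by simp [hi, h]⟩
      have h3 : #{j ∈ Y | H i j} ≤ #{j | H i j} :=
        card_le_card (filter_subset_filter _ (subset_univ _))
      have h4 : #{i ∈ P | H i j} ≤ #{i | H i j} :=
        card_le_card (filter_subset_filter _ (subset_univ _))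
      have h5 := edgeLoss_mono (m := m) h1 h2 h3 h4 (hr i) (hc j)
      have h6 := one_sub_edgeLoss_le (a := #P) (y := #Y) h1 h2 hkm (h3.trans (hr i))
        (h4.trans (hc j))
        (by exact_mod_cast card_filter_le _ _) (by exact_mod_cast card_filter_le _ _)
        hPk.le hYk.le hPm hYm
      linarith
    · simp
  have hsum : ∀ (γ : ℝ), 0 ≤ γ → ∀ t : ℕ, (t : ℝ) * (γ / t) ≤ γ := by
    intro γ hγ t
    rcases Nat.eq_zero_or_pos t with rfl | ht
    · simpa using hγ
    · have : (t : ℝ) ≠ 0 := by positivity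
      exact (mul_div_cancel₀ _ this).le
  calc _ ≤ ∑ i ∈ P, ∑ j ∈ Y, ((if H i j then α / #{j ∈ Y | H i j} else 0) +
        (if H i j then β / #{i ∈ P | H i j} else 0)) :=
        sum_le_sum fun i hi => sum_le_sum fun j hj => hpt i hi j hj
    _ = ∑ i ∈ P, ∑ j ∈ Y, (if H i j then α / #{j ∈ Y | H i j} else 0) +
        ∑ j ∈ Y, ∑ i ∈ P, (if H i j then β / #{i ∈ P | H i j} else 0) := by
        simp only [sum_add_distrib]; congr 1; exact sum_comm
    _ ≤ ∑ i ∈ P, α + ∑ j ∈ Y, β := by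
        refine add_le_add (sum_le_sum fun i _ => ?_) (sum_le_sum fun j _ => ?_)
        · rw [← sum_filter, sum_const, nsmul_eq_mul]; exact hsum α hα0 _
        · rw [← sum_filter, sum_const, nsmul_eq_mul]; exact hsum β hβ0 _
    _ = _ := by
        rw [sum_const, sum_const, nsmul_eq_mul, nsmul_eq_mul, hα, hβ]
        field_simp
        ring

open Finset MeasureTheory in
lemma sum_potential_le_of_cut {I J : Type*} [Fintype I] [Fintype J] [DecidableEq I] [DecidableEq J]
    {l : I → J → ℝ} {κ : ℝ} (hIJ : Fintype.card I = Fintype.card J)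
    (hcut : ∀ (P : Finset I) (Y : Finset J),
      ∑ i ∈ P, ∑ j ∈ Y, l i j + κ * #Pᶜ ≤ (#Pᶜ : ℝ) * #Yᶜ + κ * #Y)
    (u : I → ℝ) (b : J → ℝ) :
    κ * (∑ i, u i - ∑ j, b j) ≤
      ∑ i, ∑ j, (max (u i - b j) 0 - l i j * max (b j - u i) 0) := by
  obtain ⟨L, hLu, hLb⟩ : ∃ L, (∀ i, L ≤ u i) ∧ ∀ j, L ≤ b j := by
    obtain ⟨L₁, h₁⟩ := (Set.finite_range u).bddBelow
    obtain ⟨L₂, h₂⟩ := (Set.finite_range b).bddBelow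
    exact ⟨min L₁ L₂, fun i => (min_le_left _ _).trans (h₁ ⟨i, rfl⟩),
      fun j => (min_le_right _ _).trans (h₂ ⟨j, rfl⟩)⟩
  let χ : ℝ → ℝ → ℝ → ℝ := fun s t => (Set.Ico s t).indicator 1
  have hχi : ∀ s t, Integrable (χ s t) := fun s t =>
    (integrable_indicator_iff measurableSet_Ico).2
      (integrableOn_const (by simp) (by simp))
  have hχ : ∀ s t, ∫ θ, χ s t θ = max (t - s) 0 := fun s t => by
    rw [integral_indicator_one measurableSet_Ico, Real.volume_real_Ico]
  have hχe : ∀ s t θ, χ s t θ = if s ≤ θ ∧ θ < t then 1 else 0 := fun s t θ => by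
    simp [χ, Set.indicator_apply]
  let F : ℝ → ℝ := fun θ => ∑ i, ∑ j, (χ (b j) (u i) θ - l i j * χ (u i) (b j) θ) -
    κ * (∑ i, χ L (u i) θ - ∑ j, χ L (b j) θ)
  have hF : ∫ θ, F θ = ∑ i, ∑ j, (max (u i - b j) 0 - l i j * max (b j - u i) 0) -
      κ * (∑ i, (u i - L) - ∑ j, (b j - L)) := by
    have h1 : ∀ i j, Integrable fun θ => χ (b j) (u i) θ - l i j * χ (u i) (b j) θ :=
      fun i j => (hχi _ _).sub ((hχi _ _).const_mul _)
    have h2 : Integrable fun θ => ∑ i, χ L (u i) θ := integrable_finsetSum _ fun i _ => hχi _ _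
    have h3 : Integrable fun θ => ∑ j, χ L (b j) θ := integrable_finsetSum _ fun i _ => hχi _ _
    have h4 : ∀ i, Integrable fun θ => ∑ j, (χ (b j) (u i) θ - l i j * χ (u i) (b j) θ) :=
      fun i => integrable_finsetSum _ fun j _ => h1 i j
    have h5 : Integrable fun θ => κ * (∑ i, χ L (u i) θ - ∑ j, χ L (b j) θ) :=
      (h2.sub h3).const_mul κ
    simp only [F]
    rw [integral_sub (integrable_finsetSum _ fun i _ => h4 i) h5, integral_const_mul,
      integral_sub h2 h3, integral_finsetSum _ fun i _ => h4 i,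
      integral_finsetSum _ fun i _ => hχi _ _, integral_finsetSum _ fun i _ => hχi _ _]
    congr 1
    · refine sum_congr rfl fun i _ => ?_
      rw [integral_finsetSum _ fun j _ => h1 i j]
      refine sum_congr rfl fun j _ => ?_
      rw [integral_sub (hχi _ _) ((hχi _ _).const_mul _), integral_const_mul, hχ, hχ]
    · simp only [hχ]
      congr 2 <;> refine sum_congr rfl fun i _ => max_eq_left ?_
      · linarith [hLu i]
      · linarith [hLb i]
  have hF0 : 0 ≤ ∫ θ, F θ := by
    refine integral_nonneg fun θ => ?_
    simp only [F, hχe, Pi.zero_apply]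
    rcases lt_or_ge θ L with hθ | hθ
    · have e1 : ∀ i, ¬ u i ≤ θ := fun i => by linarith [hLu i]
      have e2 : ∀ j, ¬ b j ≤ θ := fun j => by linarith [hLb j]
      simp [e1, e2, not_le.2 hθ]
    · have key := hcut {i | u i ≤ θ} {j | θ < b j}
      have c1 : ({i | u i ≤ θ} : Finset I)ᶜ = ({i | θ < u i} : Finset I) := by ext; simp
      have c2 : ({j | θ < b j} : Finset J)ᶜ = ({j | b j ≤ θ} : Finset J) := by ext; simp
      rw [c1, c2] at key
      have s1 : ∑ i, ∑ j, (if b j ≤ θ ∧ θ < u i then (1 : ℝ) else 0) =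
          #{i | θ < u i} * #{j | b j ≤ θ} := by
        rw [← sum_boole, ← sum_boole, sum_mul_sum]
        refine sum_congr rfl fun i _ => sum_congr rfl fun j _ => ?_
        by_cases h1 : b j ≤ θ <;> by_cases h2 : θ < u i <;> simp [h1, h2]
      have s2 : ∑ i, ∑ j, l i j * (if u i ≤ θ ∧ θ < b j then (1 : ℝ) else 0) =
          ∑ i with u i ≤ θ, ∑ j with θ < b j, l i j := by
        rw [sum_filter]
        refine sum_congr rfl fun i _ => ?_
        by_cases h1 : u i ≤ θ <;> simp [h1, sum_filter]
      have s3 : ∑ i, (if L ≤ θ ∧ θ < u i then (1 : ℝ) else 0) = #{i | θ < u i} := by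
        simp [hθ]
      have s4 : ∑ j, (if L ≤ θ ∧ θ < b j then (1 : ℝ) else 0) = #{j | θ < b j} := by
        simp [hθ]
      simp only [sum_sub_distrib]
      rw [s1, s2, s3, s4]
      linarith
  rw [hF] at hF0
  simp only [sum_sub_distrib, sum_const, card_univ, hIJ] at hF0 ⊢
  linarith

open Finset in
/-- A box-constrained transportation polytope with constant margins is nonempty as soon as the
cut condition holds. -/
lemma exists_margins_of_cut {I J : Type*} [Fintype I] [Fintype J] [DecidableEq I]
    [DecidableEq J] {l : I → J → ℝ} {κ : ℝ} (hIJ : Fintype.card I = Fintype.card J)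
    (hl : ∀ i j, l i j ≤ 1)
    (hcut : ∀ (P : Finset I) (Y : Finset J),
      ∑ i ∈ P, ∑ j ∈ Y, l i j + κ * #Pᶜ ≤ (#Pᶜ : ℝ) * #Yᶜ + κ * #Y) :
    ∃ x : I → J → ℝ, (∀ i j, l i j ≤ x i j) ∧ (∀ i j, x i j ≤ 1) ∧
      (∀ i, ∑ j, x i j = κ) ∧ ∀ j, ∑ i, x i j = κ := by
  let T : (I → J → ℝ) →ₗ[ℝ] (I → ℝ) × (J → ℝ) :=
    { toFun := fun x => (fun i => ∑ j, x i j, fun j => ∑ i, x i j)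
      map_add' := fun x y => by ext <;> simp [sum_add_distrib]
      map_smul' := fun c x => by ext <;> simp [mul_sum] }
  by_contra hno
  have hmem : ((fun _ => κ, fun _ => κ) : (I → ℝ) × (J → ℝ)) ∉ T '' Set.Icc l (fun _ _ => 1) := by
    rintro ⟨x, ⟨hx1, hx2⟩, hx⟩
    refine hno ⟨x, fun i j => hx1 i j, fun i j => hx2 i j, fun i => ?_, fun j => ?_⟩
    · exact congrFun (congrArg Prod.fst hx) i
    · exact congrFun (congrArg Prod.snd hx) j
  have hT : Continuous T := LinearMap.continuous_of_finiteDimensional T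
  have hcpt : IsCompact (T '' Set.Icc l (fun _ _ => 1)) := isCompact_Icc.image hT
  obtain ⟨f, t, hf1, hf2⟩ := geometric_hahn_banach_closed_point
    ((convex_Icc l (fun _ _ => 1)).linear_image T) hcpt.isClosed hmem
  let u : I → ℝ := fun i => f (Pi.single i 1, 0)
  let b : J → ℝ := fun j => - f (0, Pi.single j 1)
  have hf : ∀ (r : I → ℝ) (c : J → ℝ), f (r, c) = ∑ i, r i * u i - ∑ j, c j * b j := by
    intro r c
    have h1 : f (r, 0) = ∑ i, r i * u i := by
      have := LinearMap.pi_apply_eq_sum_univ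
        ((f : (I → ℝ) × (J → ℝ) →ₗ[ℝ] ℝ) ∘ₗ LinearMap.inl ℝ (I → ℝ) (J → ℝ)) r
      have e : ∀ i : I, (fun j => if i = j then (1 : ℝ) else 0) = Pi.single i 1 := fun i => by
        ext j; simp [Pi.single_apply, eq_comm]
      simpa [u, e] using this
    have h2 : f (0, c) = - ∑ j, c j * b j := by
      have := LinearMap.pi_apply_eq_sum_univ
        ((f : (I → ℝ) × (J → ℝ) →ₗ[ℝ] ℝ) ∘ₗ LinearMap.inr ℝ (I → ℝ) (J → ℝ)) c
      have e : ∀ i : J, (fun j => if i = j then (1 : ℝ) else 0) = Pi.single i 1 := fun i => by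
        ext j; simp [Pi.single_apply, eq_comm]
      simpa [b, e] using this
    rw [sub_eq_add_neg, ← h1, ← h2, ← map_add]
    simp
  let x : I → J → ℝ := fun i j => if b j < u i then 1 else l i j
  have hx : x ∈ Set.Icc l (fun _ _ => 1) := by
    constructor <;> intro i j <;> simp only [x] <;> split_ifs <;> simp [hl]
  have h1 := (hf1 _ ⟨x, hx, rfl⟩).trans hf2
  have h2 : f (T x) = ∑ i, ∑ j, (max (u i - b j) 0 - l i j * max (b j - u i) 0) := by
    change f (fun i => ∑ j, x i j, fun j => ∑ i, x i j) = _
    rw [hf]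
    simp only [sum_mul]
    rw [sum_comm (f := fun j i => x i j * b j), ← sum_sub_distrib]
    refine sum_congr rfl fun i _ => ?_
    rw [← sum_sub_distrib]
    refine sum_congr rfl fun j _ => ?_
    simp only [x]
    split_ifs with h
    · rw [max_eq_left (by linarith), max_eq_right (by linarith)]; ring
    · rw [max_eq_right (by linarith), max_eq_left (by linarith)]; ring
  have h3 := sum_potential_le_of_cut hIJ hcut u b
  rw [h2, hf] at h1
  simp only [← mul_sum] at h1
  linarith

open Finset in
lemma exists_pos_weight_le {ι : Type*} [Fintype ι] {w g : ι → ℝ} (hw : ∀ s, 0 ≤ w s)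
    (hw1 : ∑ s, w s = 1) : ∃ s, 0 < w s ∧ ∑ s, w s * g s ≤ g s := by
  by_contra! h
  set G := ∑ s, w s * g s with hG
  have hle : ∀ s, w s * g s ≤ w s * G := fun s => by
    rcases (hw s).eq_or_lt with h0 | h0
    · simp [← h0]
    · exact mul_le_mul_of_nonneg_left (h s h0).le h0.le
  obtain ⟨s, hs⟩ : ∃ s, 0 < w s := by
    by_contra! h0
    have : ∑ s, w s ≤ 0 := sum_nonpos fun s _ => h0 s
    linarith
  have : ∑ s, w s * g s < ∑ s, w s * G :=
    sum_lt_sum (fun s _ => hle s) ⟨s, mem_univ _, mul_lt_mul_of_pos_left (h s hs) hs⟩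
  rw [← sum_mul, hw1, one_mul] at this
  exact this.ne hG.symm

open Finset in
/-- A fractional `k`-regular bipartite graph with edge multiplicities at most one dominates
no more weight than some integral `k`-regular one. -/
lemma exists_regular_of_fractional {T : Type*} [Fintype T] [DecidableEq T] {k : ℕ} (hk : 1 ≤ k)
    {x W : T → T → ℝ} (hx0 : ∀ i j, 0 ≤ x i j) (hx1 : ∀ i j, x i j ≤ 1)
    (hrow : ∀ i, ∑ j, x i j = k) (hcol : ∀ j, ∑ i, x i j = k) :
    ∃ F : Finset (T × T), (∀ i, #{p ∈ F | p.1 = i} = k) ∧ (∀ j, #{p ∈ F | p.2 = j} = k) ∧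
      ∑ i, ∑ j, W i j * x i j ≤ ∑ p ∈ F, W p.1 p.2 := by
  have hk0 : (k : ℝ) ≠ 0 := by positivity
  obtain ⟨N, h11, h12, h21, h22⟩ :
      ∃ N : Matrix ((T × Fin k) ⊕ (T × T)) ((T × Fin k) ⊕ (T × T)) ℝ,
      (∀ q q', N (.inl q) (.inl q') = 0) ∧
      (∀ q p, N (.inl q) (.inr p) = if q.1 = p.1 then x p.1 p.2 / k else 0) ∧
      (∀ p q, N (.inr p) (.inl q) = if q.1 = p.2 then x p.1 p.2 / k else 0) ∧
      ∀ p p', N (.inr p) (.inr p') = if p = p' then 1 - x p.1 p.2 else 0 :=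
    ⟨Matrix.fromBlocks 0 (Matrix.of fun q p => if q.1 = p.1 then x p.1 p.2 / k else 0)
      (Matrix.of fun p q => if q.1 = p.2 then x p.1 p.2 / k else 0)
      (Matrix.of fun p p' => if p = p' then 1 - x p.1 p.2 else 0),
      fun _ _ => rfl, fun _ _ => rfl, fun _ _ => rfl, fun _ _ => rfl⟩
  have hN : N ∈ doublyStochastic ℝ ((T × Fin k) ⊕ (T × T)) := by
    rw [mem_doublyStochastic_iff_sum]
    refine ⟨?_, ?_, ?_⟩
    · rintro (q | p) (q' | p') <;> simp only [h11, h12, h21, h22] <;>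
        first | exact le_rfl | split_ifs <;> first
          | exact le_rfl
          | exact div_nonneg (hx0 _ _) (by positivity)
          | exact sub_nonneg.2 (hx1 _ _)
    · rintro (⟨i, f⟩ | ⟨i, j⟩)
      · simp only [Fintype.sum_sum_type, Fintype.sum_prod_type, h11, h12]
        rw [sum_eq_single i (by rintro i' - h; simp) (by simp)]
        simp [← sum_div, hrow, hk0]
      · simp only [Fintype.sum_sum_type, h21, h22]
        rw [Fintype.sum_prod_type, sum_comm]
        simp [mul_div_cancel₀, hk0]
    · rintro (⟨j, f⟩ | ⟨i, j⟩)
      · simp only [Fintype.sum_sum_type, Fintype.sum_prod_type, h11, h21]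
        simp [← sum_div, hcol, hk0]
      · simp only [Fintype.sum_sum_type, h12, h22]
        rw [Fintype.sum_prod_type, sum_comm]
        simp [mul_div_cancel₀, hk0]
  obtain ⟨w, hw0, hw1, hwN⟩ := exists_eq_sum_perm_of_mem_doublyStochastic hN
  have hNe : ∀ a b, N a b = ∑ σ : Equiv.Perm _, w σ * if σ a = b then 1 else 0 := by
    intro a b
    rw [← hwN, Matrix.sum_apply]
    refine sum_congr rfl fun σ _ => ?_
    simp [Equiv.Perm.permMatrix, PEquiv.toMatrix_apply]
  obtain ⟨σ, hσ, hσW⟩ := exists_pos_weight_le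
    (g := fun σ : Equiv.Perm ((T × Fin k) ⊕ (T × T)) => ∑ p : T × T,
      W p.1 p.2 * (1 - if σ (Sum.inr p) = Sum.inr p then 1 else 0))
    hw0 hw1
  have hsupp : ∀ a, N a (σ a) ≠ 0 := fun a => by
    rw [hNe]
    refine (lt_of_lt_of_le hσ ?_).ne'
    have := single_le_sum (f := fun τ : Equiv.Perm _ => w τ * if τ a = σ a then 1 else 0)
      (fun τ _ => mul_nonneg (hw0 τ) (by split_ifs <;> simp)) (mem_univ σ)
    simpa using this
  have hl : ∀ i f, ∃ p : T × T, σ (Sum.inl (i, f)) = Sum.inr p ∧ p.1 = i := fun i f => by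
    have := hsupp (Sum.inl (i, f))
    rcases h : σ (Sum.inl (i, f)) with q | p
    · simp [h11, h] at this
    · refine ⟨p, rfl, ?_⟩
      by_contra hne
      simp [h12, h, Ne.symm hne] at this
  have hr : ∀ p : T × T, σ (Sum.inr p) ≠ Sum.inr p → ∃ f, σ (Sum.inr p) = Sum.inl (p.2, f) := by
    intro p hp
    have hp' := hsupp (Sum.inr p)
    rcases h : σ (Sum.inr p) with ⟨j, f⟩ | p'
    · rw [h, h21] at hp'
      have hj : j = p.2 := by
        by_contra hne
        exact hp' (if_neg hne)
      exact ⟨f, by rw [hj]⟩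
    · rw [h, h22] at hp'
      refine absurd (if_neg ?_) hp'
      rintro rfl
      exact hp h
  refine ⟨({p | σ (Sum.inr p) ≠ Sum.inr p} : Finset (T × T)), fun i => ?_, fun j => ?_, ?_⟩
  · choose g hg1 hg2 using hl i
    have : ({p ∈ ({p | σ (Sum.inr p) ≠ Sum.inr p} : Finset (T × T)) | p.1 = i}) =
        univ.image g := by
      ext p
      simp only [mem_filter, mem_univ, true_and, mem_image]
      constructor
      · rintro ⟨hp, rfl⟩
        rcases h : σ.symm (Sum.inr p) with ⟨i', f⟩ | p'
        · have h' : σ (Sum.inl (i', f)) = Sum.inr p := by rw [← h]; simp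
          obtain ⟨q, hq1, hq2⟩ := hl i' f
          rw [h'] at hq1
          obtain rfl := Sum.inr_injective hq1
          subst hq2
          exact ⟨f, Sum.inr_injective ((hg1 f).symm.trans h')⟩
        · have h' : σ (Sum.inr p') = Sum.inr p := by rw [← h]; simp
          by_cases hpp : σ (Sum.inr p') = Sum.inr p'
          · rw [h'] at hpp
            obtain rfl := Sum.inr_injective hpp
            exact absurd h' hp
          · obtain ⟨f, hf⟩ := hr p' hpp
            rw [h'] at hf
            cases hf
      · rintro ⟨f, rfl⟩
        refine ⟨fun h => ?_, hg2 f⟩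
        rw [← hg1 f] at h
        have := σ.injective h
        rw [hg1 f] at this
        cases this
    rw [this, card_image_of_injective, card_univ, Fintype.card_fin]
    intro f f' h
    have := (hg1 f).trans ((congrArg Sum.inr h).trans (hg1 f').symm)
    simpa using σ.injective this
  · have hc : ∀ f : Fin k, ∃ p : T × T, σ (Sum.inr p) = Sum.inl (j, f) ∧ p.2 = j := fun f => by
      rcases h : σ.symm (Sum.inl (j, f)) with ⟨i', f'⟩ | p
      · have h' : σ (Sum.inl (i', f')) = Sum.inl (j, f) := by rw [← h]; simp
        obtain ⟨q, hq1, -⟩ := hl i' f'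
        rw [h'] at hq1
        cases hq1
      · have h' : σ (Sum.inr p) = Sum.inl (j, f) := by rw [← h]; simp
        obtain ⟨f', hf'⟩ := hr p (by rw [h']; simp)
        rw [h'] at hf'
        refine ⟨p, h', ?_⟩
        simpa using (congrArg Prod.fst (Sum.inl_injective hf')).symm
    choose g hg1 hg2 using hc
    have : ({p ∈ ({p | σ (Sum.inr p) ≠ Sum.inr p} : Finset (T × T)) | p.2 = j}) =
        univ.image g := by
      ext p
      simp only [mem_filter, mem_univ, true_and, mem_image]
      constructor
      · rintro ⟨hp, rfl⟩
        obtain ⟨f, hf⟩ := hr p hp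
        exact ⟨f, Sum.inr_injective (σ.injective ((hg1 f).trans hf.symm))⟩
      · rintro ⟨f, rfl⟩
        exact ⟨by rw [hg1 f]; simp, hg2 f⟩
    rw [this, card_image_of_injective, card_univ, Fintype.card_fin]
    intro f f' h
    have := (hg1 f).symm.trans ((congrArg (fun p => σ (Sum.inr p)) h).trans (hg1 f'))
    simpa using this
  · have e1 : ∑ i, ∑ j, W i j * x i j =
        ∑ τ, w τ * ∑ p : T × T, W p.1 p.2 * (1 - if τ (Sum.inr p) = Sum.inr p then 1 else 0) := by
      simp only [mul_sum]
      rw [sum_comm (s := univ (α := Equiv.Perm _)), Fintype.sum_prod_type]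
      refine sum_congr rfl fun i _ => sum_congr rfl fun j _ => ?_
      have h1 : N (Sum.inr (i, j)) (Sum.inr (i, j)) = 1 - x i j := by simp [h22]
      have h2 : x i j = ∑ τ, w τ - N (Sum.inr (i, j)) (Sum.inr (i, j)) := by
        rw [hw1, h1]; ring
      rw [h2, hNe, ← sum_sub_distrib, mul_sum]
      exact sum_congr rfl fun τ _ => by ring
    rw [e1]
    refine hσW.trans (le_of_eq ?_)
    rw [sum_filter]
    refine sum_congr rfl fun p _ => ?_
    by_cases h : σ (Sum.inr p) = Sum.inr p <;> simp [h]

open Finset in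
lemma Finset.exists_injective_image_eq {V : Type*} [DecidableEq V] {m : ℕ} {A : Finset V}
    (hA : #A = m) : ∃ a : Fin m → V, Function.Injective a ∧ univ.image a = A := by
  refine ⟨fun i => (A.equivFinOfCardEq hA).symm i,
    Subtype.val_injective.comp (Equiv.injective _), ?_⟩
  ext v
  simp only [mem_image, mem_univ, true_and]
  exact ⟨by rintro ⟨i, rfl⟩; exact Subtype.property _,
    fun hv => ⟨A.equivFinOfCardEq hA ⟨v, hv⟩, by simp⟩⟩

open Finset in
/-- Between two sets of `m` vertices there is a `k`-regular bipartite graph retaining most of the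
weight of a given graph of degree at most `k`. -/
lemma exists_regular_between {V : Type*} [DecidableEq V] {m k : ℕ} (hk : 1 ≤ k)
    (hkm : k ≤ m) {A B : Finset V} (hA : #A = m) (hB : #B = m) (M : Finset (V × V))
    (hrow : ∀ i, #{j ∈ B | (i, j) ∈ M} ≤ k) (hcol : ∀ j, #{i ∈ A | (i, j) ∈ M} ≤ k)
    {S : V → V → ℝ} (hS : ∀ i j, 0 ≤ S i j) :
    ∃ F ⊆ A ×ˢ B, (∀ i ∈ A, #{p ∈ F | p.1 = i} = k) ∧ (∀ j ∈ B, #{p ∈ F | p.2 = j} = k) ∧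
      ∑ p ∈ A ×ˢ B with p ∈ M, S p.1 p.2 *
        (1 - edgeLoss m k #{j ∈ B | (p.1, j) ∈ M} #{i ∈ A | (i, p.2) ∈ M}) ≤
      ∑ p ∈ F, S p.1 p.2 := by
  obtain ⟨a, ha, rfl⟩ := exists_injective_image_eq hA
  obtain ⟨b, hb, rfl⟩ := exists_injective_image_eq hB
  have hab : Function.Injective (Prod.map a b) := ha.prodMap hb
  have er : ∀ i, #{j ∈ univ.image b | (i, j) ∈ M} = #{j | (i, b j) ∈ M} := fun i => by
    rw [filter_image, card_image_of_injective _ hb]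
  have ec : ∀ j, #{i ∈ univ.image a | (i, j) ∈ M} = #{i | (a i, j) ∈ M} := fun j => by
    rw [filter_image, card_image_of_injective _ ha]
  simp only [er, ec] at hrow hcol ⊢
  let l : Fin m → Fin m → ℝ := fun i j => if (a i, b j) ∈ M then
    1 - edgeLoss m k #{j | (a i, b j) ∈ M} #{i | (a i, b j) ∈ M} else 0
  have hl0 : ∀ i j, 0 ≤ l i j := fun i j => by
    simp only [l]; split_ifs
    · exact sub_nonneg.2 (edgeLoss_le_one hkm (hrow _) (hcol _))
    · exact le_rfl
  have hl1 : ∀ i j, l i j ≤ 1 := fun i j => by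
    simp only [l]; split_ifs
    · linarith [edgeLoss_nonneg m k #{j | (a i, b j) ∈ M} #{i | (a i, b j) ∈ M}]
    · exact zero_le_one
  have hcut : ∀ P Y : Finset (Fin m),
      ∑ i ∈ P, ∑ j ∈ Y, l i j + k * #Pᶜ ≤ (#Pᶜ : ℝ) * #Yᶜ + k * #Y := by
    intro P Y
    have h := sum_retained_le_cut (Fintype.card_fin m) (Fintype.card_fin m) hkm
      (fun i j => (a i, b j) ∈ M) (fun i => hrow (a i)) (fun j => hcol (b j)) P Y
    have hP : (#Pᶜ : ℝ) = m - #P := by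
      rw [card_compl, Fintype.card_fin, Nat.cast_sub (card_finset_fin_le _)]
    have hY : (#Yᶜ : ℝ) = m - #Y := by
      rw [card_compl, Fintype.card_fin, Nat.cast_sub (card_finset_fin_le _)]
    rw [hP, hY]
    linarith
  obtain ⟨x, hlx, hx1, hxr, hxc⟩ := exists_margins_of_cut rfl hl1 hcut
  obtain ⟨F, hFr, hFc, hFW⟩ := exists_regular_of_fractional (W := fun i j => S (a i) (b j)) hk
    (fun i j => (hl0 i j).trans (hlx i j)) hx1 hxr hxc
  refine ⟨F.image (Prod.map a b), ?_, ?_, ?_, ?_⟩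
  · intro p hp
    obtain ⟨q, -, rfl⟩ := mem_image.1 hp
    simp
  · intro i hi
    obtain ⟨i, -, rfl⟩ := mem_image.1 hi
    rw [filter_image, card_image_of_injective _ hab, ← hFr i]
    simp [ha.eq_iff]
  · intro j hj
    obtain ⟨j, -, rfl⟩ := mem_image.1 hj
    rw [filter_image, card_image_of_injective _ hab, ← hFc j]
    simp [hb.eq_iff]
  · rw [sum_image hab.injOn]
    refine le_trans ?_ hFW
    rw [← prodMap_image_product, sum_filter, sum_image hab.injOn, univ_product_univ,
      Fintype.sum_prod_type]
    refine sum_le_sum fun i _ => sum_le_sum fun j _ => ?_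
    refine le_trans (le_of_eq ?_) (mul_le_mul_of_nonneg_left (hlx i j) (hS _ _))
    simp [l]

section HalfSets

open Finset

lemma card_powersetCard_separating {V : Type*} [Fintype V] [DecidableEq V] {m : ℕ}
    (hV : Fintype.card V = 2 * (m + 1)) {u v : V}
    (huv : u ≠ v) :
    #{A ∈ (univ : Finset V).powersetCard (m + 1) | u ∈ A ∧ v ∉ A} = m.centralBinom := by
  have h : ({A ∈ (univ : Finset V).powersetCard (m + 1) | u ∈ A ∧ v ∉ A}) =
      (powersetCard m ({u, v}ᶜ : Finset V)).image (insert u) := by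
    ext A
    simp only [mem_filter, mem_powersetCard, subset_univ, true_and, mem_image]
    constructor
    · rintro ⟨hA, hu, hv⟩
      refine ⟨A.erase u, ⟨fun x hx => ?_, ?_⟩, insert_erase hu⟩
      · have hx' := mem_erase.1 hx
        have : x ≠ v := by rintro rfl; exact hv hx'.2
        simp [hx'.1, this]
      · rw [card_erase_of_mem hu, hA, Nat.add_sub_cancel]
    · rintro ⟨B, ⟨hB, hBc⟩, rfl⟩
      have hu : u ∉ B := fun h => by simpa using hB h
      have hv : v ∉ B := fun h => by simpa using hB h
      refine ⟨by rw [card_insert_of_notMem hu, hBc], mem_insert_self _ _, ?_⟩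
      simp [huv.symm, hv]
  rw [h, card_image_of_injOn, card_powersetCard, card_compl, hV, card_pair huv,
    Nat.centralBinom_eq_two_mul_choose]
  · rfl
  · intro B hB B' hB' hBB
    have hu : u ∉ B := fun h => by simpa using (mem_powersetCard.1 hB).1 h
    have hu' : u ∉ B' := fun h => by simpa using (mem_powersetCard.1 hB').1 h
    rw [← erase_insert hu, ← erase_insert hu']
    exact congrArg (fun s => s.erase u) hBB

lemma sum_powersetCard_map_equiv {V : Type*} [Fintype V] (m : ℕ) (π : Equiv.Perm V)
    (h : Finset V → ℝ) :
    ∑ A ∈ (univ : Finset V).powersetCard m, h (A.map π.toEmbedding) =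
      ∑ A ∈ (univ : Finset V).powersetCard m, h A := by
  refine sum_bij' (fun A _ => A.map π.toEmbedding) (fun A _ => A.map π.symm.toEmbedding)
    ?_ ?_ ?_ ?_ ?_
  · simp
  · simp
  · intro A _; ext x; simp
  · intro A _; ext x; simp
  · simp

lemma sum_powersetCard_compl {V : Type*} [Fintype V] [DecidableEq V] {m : ℕ}
    (hV : Fintype.card V = 2 * m) (h : Finset V → ℝ) :
    ∑ A ∈ (univ : Finset V).powersetCard m, h Aᶜ =
      ∑ A ∈ (univ : Finset V).powersetCard m, h A := by
  have hc : ∀ A ∈ (univ : Finset V).powersetCard m, Aᶜ ∈ (univ : Finset V).powersetCard m := by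
    intro A hA
    rw [mem_powersetCard_univ] at hA ⊢
    rw [card_compl, hA, hV]
    omega
  exact sum_bij' (fun A _ => Aᶜ) (fun A _ => Aᶜ) hc hc (by simp) (by simp) (by simp)

/-- The second moment of a balanced linear statistic of a uniformly random half. -/
lemma sum_powersetCard_sq {V : Type*} [Fintype V] [DecidableEq V] {m : ℕ}
    (hV : Fintype.card V = 2 * (m + 1)) {e : V → ℝ}
    (he : ∑ u, e u = 0) :
    ∑ A ∈ (univ : Finset V).powersetCard (m + 1), (∑ u ∈ A, e u) ^ 2 =
      m.centralBinom * ∑ u, e u ^ 2 := by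
  have h1 : ∀ A : Finset V, (∑ u ∈ A, e u) ^ 2 =
      - ∑ u, ∑ v, e u * e v * if u ∈ A ∧ v ∉ A then 1 else 0 := by
    intro A
    have e1 : ∑ v ∈ Aᶜ, e v = - ∑ u ∈ A, e u := by
      linarith [sum_add_sum_compl A e]
    have e2 : ∑ u, ∑ v, (e u * e v * if u ∈ A ∧ v ∉ A then 1 else 0) =
        (∑ u ∈ A, e u) * ∑ v ∈ Aᶜ, e v := by
      rw [sum_mul_sum, ← sum_subset (subset_univ A) (by intro u _ hu; simp [hu])]
      refine sum_congr rfl fun u hu => ?_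
      rw [← sum_subset (subset_univ Aᶜ) (by intro v _ hv; simp_all)]
      refine sum_congr rfl fun v hv => ?_
      simp [hu, mem_compl.1 hv]
    rw [e2, e1]; ring
  simp only [h1, sum_neg_distrib]
  rw [sum_comm]
  have h2 : ∀ u, ∑ A ∈ (univ : Finset V).powersetCard (m + 1),
      ∑ v, (e u * e v * if u ∈ A ∧ v ∉ A then 1 else 0) = - (m.centralBinom * e u ^ 2) := by
    intro u
    rw [sum_comm]
    have h3 : ∀ v, ∑ A ∈ (univ : Finset V).powersetCard (m + 1),
        (e u * e v * if u ∈ A ∧ v ∉ A then (1 : ℝ) else 0) =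
        m.centralBinom * e u * e v - if v = u then m.centralBinom * e u * e v else 0 := by
      intro v
      rw [← mul_sum, sum_boole]
      by_cases huv : v = u
      · subst huv; simp
      · rw [card_powersetCard_separating hV (Ne.symm huv), if_neg huv]; ring
    simp only [h3, sum_sub_distrib, ← mul_sum, he]
    simp; ring
  rw [sum_congr rfl fun u _ => h2 u, sum_neg_distrib, neg_neg, mul_sum]

lemma mul_mul_edgeLoss_le {m k κ a y t₁ t₂ : ℕ} (ha : a ≤ κ) (hy : y ≤ κ)
    (hk : κ + (t₁ + t₂) = k) :
    (a : ℝ) * y * edgeLoss m k (y + t₂) (a + t₁) ≤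
      κ / (2 * m) * max ((a : ℝ) + y - κ) 0 ^ 2 := by
  rcases Nat.eq_zero_or_pos a with rfl | ha0
  · simp only [Nat.cast_zero, zero_mul]; positivity
  rcases Nat.eq_zero_or_pos y with rfl | hy0
  · simp only [Nat.cast_zero, mul_zero, zero_mul]; positivity
  have ha' : (a : ℝ) ≤ κ := by exact_mod_cast ha
  have hy' : (y : ℝ) ≤ κ := by exact_mod_cast hy
  have ha0' : (0 : ℝ) < a := by exact_mod_cast ha0
  have hy0' : (0 : ℝ) < y := by exact_mod_cast hy0
  have hk' : (k : ℝ) = κ + (t₁ + t₂) := by exact_mod_cast hk.symm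
  unfold edgeLoss
  push_cast
  have hz : (y : ℝ) + t₂ + (a + t₁) - k = a + y - κ := by rw [hk']; ring
  rw [hz]
  set z := max ((a : ℝ) + y - κ) 0 ^ 2
  have hz0 : 0 ≤ z := by positivity
  have key : (a : ℝ) * y * k ≤ κ * ((y + t₂) * (a + t₁)) := by
    have h1 : 0 ≤ (y : ℝ) * t₁ * (κ - a) := mul_nonneg (by positivity) (by linarith)
    have h2 : 0 ≤ (a : ℝ) * t₂ * (κ - y) := mul_nonneg (by positivity) (by linarith)
    have h3 : 0 ≤ (κ : ℝ) * (t₁ * t₂) := by positivity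
    rw [hk']; linarith
  have e : (a : ℝ) * y * (k / (2 * m) * z / ((y + t₂) * (a + t₁))) =
      (a * y * k) / ((y + t₂) * (a + t₁)) * (z / (2 * m)) := by
    field_simp
  rw [e]
  calc _ ≤ (κ : ℝ) * (z / (2 * m)) := by
        refine mul_le_mul_of_nonneg_right ?_ (by positivity)
        rwa [div_le_iff₀ (by positivity)]
    _ = _ := by ring

lemma swap_apply_mem_iff {V : Type*} [DecidableEq V] {s : Finset V} {a b : V} (h : a ∈ s ↔ b ∈ s)
    (x : V) :
    Equiv.swap a b x ∈ s ↔ x ∈ s := by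
  rw [Equiv.swap_apply_def]
  split_ifs with h1 h2 <;> simp_all

lemma map_eq_of_apply_mem_iff {V : Type*} {s : Finset V} {π : Equiv.Perm V}
    (h : ∀ x, π x ∈ s ↔ x ∈ s) :
    s.map π.toEmbedding = s := by
  ext x
  rw [mem_map_equiv, ← h, Equiv.apply_symm_apply]

/-- Averaged over all halves separating `i` from `j`, an edge loses at most a `1 / (2 m)`
fraction. -/
lemma sum_edgeLoss_le {V : Type*} [Fintype V] [DecidableEq V] {m k : ℕ}
    (hV : Fintype.card V = 2 * (m + 1)) {R C : Finset V}
    (hR : #R = k) (hC : #C = k) {i j : V} (hiR : i ∈ R) (hiC : i ∉ C) (hjC : j ∈ C)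
    (hjR : j ∉ R) :
    ∑ A ∈ (univ : Finset V).powersetCard (m + 1) with i ∈ A ∧ j ∉ A,
      edgeLoss (m + 1) k #(C \ A) #(R ∩ A) ≤ m.centralBinom / (2 * (m + 1)) := by
  set R₀ := R \ C with hR₀
  set C₀ := C \ R with hC₀
  set κ := #R₀ with hκ
  have hκC : #C₀ = κ := by
    have h1 := card_sdiff_add_card_inter R C
    have h2 := card_sdiff_add_card_inter C R
    rw [inter_comm, ← hC₀] at h2
    rw [← hR₀] at h1
    omega
  have hκ0 : 0 < κ := card_pos.2 ⟨i, by simp [hR₀, hiR, hiC]⟩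
  set g : Finset V → ℝ := fun A => edgeLoss (m + 1) k #(C \ A) #(R ∩ A) with hg
  obtain ⟨total, htotal⟩ : ∃ t, ∑ A ∈ (univ : Finset V).powersetCard (m + 1) with i ∈ A ∧ j ∉ A,
      g A = t := ⟨_, rfl⟩
  have hsym : ∀ i' ∈ R₀, ∀ j' ∈ C₀,
      ∑ A ∈ (univ : Finset V).powersetCard (m + 1), (if i' ∈ A ∧ j' ∉ A then g A else 0) =
        total := by
    intro i' hi' j' hj'
    obtain ⟨hi'R, hi'C⟩ := mem_sdiff.1 hi'
    obtain ⟨hj'C, hj'R⟩ := mem_sdiff.1 hj'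
    have ne : ∀ {u v : V}, u ∈ R → v ∉ R → u ≠ v := fun hu hv h => hv (h ▸ hu)
    let π : Equiv.Perm V := Equiv.swap i i' * Equiv.swap j j'
    have hπi : π i = i' := by
      simp [π, Equiv.swap_apply_of_ne_of_ne (ne hiR hjR) (ne hiR hj'R)]
    have hπj : π j = j' := by
      simp [π, Equiv.swap_apply_of_ne_of_ne (ne hiR hj'R).symm (ne hi'R hj'R).symm]
    have hπR : R.map π.toEmbedding = R := map_eq_of_apply_mem_iff fun x => by
      simp only [π, Equiv.Perm.mul_apply]
      rw [swap_apply_mem_iff (by tauto), swap_apply_mem_iff (by tauto)]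
    have hπC : C.map π.toEmbedding = C := map_eq_of_apply_mem_iff fun x => by
      simp only [π, Equiv.Perm.mul_apply]
      rw [swap_apply_mem_iff (by tauto), swap_apply_mem_iff (by tauto)]
    rw [← sum_powersetCard_map_equiv (m + 1) π, ← htotal, sum_filter]
    refine sum_congr rfl fun A _ => ?_
    have h1 : g (A.map π.toEmbedding) = g A := by
      simp only [hg]
      nth_rewrite 1 [← hπR, ← hπC]
      rw [← Finset.map_sdiff, ← map_inter, card_map, card_map]
    have h2 : π.symm i' = i := by rw [← hπi, Equiv.symm_apply_apply]
    have h3 : π.symm j' = j := by rw [← hπj, Equiv.symm_apply_apply]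
    simp only [h1, mem_map_equiv, h2, h3]
  have hcount : (κ : ℝ) ^ 2 * total =
      ∑ A ∈ (univ : Finset V).powersetCard (m + 1), (#(R₀ ∩ A) : ℝ) * #(C₀ \ A) * g A := by
    have : (κ : ℝ) ^ 2 * total = ∑ i' ∈ R₀, ∑ j' ∈ C₀, total := by
      simp [hκC, ← hκ]; ring
    rw [this, sum_congr rfl fun i' hi' => sum_congr rfl fun j' hj' => (hsym i' hi' j' hj').symm]
    simp only [sum_comm (s := C₀)]
    rw [sum_comm]
    refine sum_congr rfl fun A _ => ?_
    rw [← filter_mem_eq_inter, sdiff_eq_filter, ← sum_boole, ← sum_boole, sum_mul_sum, sum_mul]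
    refine sum_congr rfl fun i' _ => ?_
    rw [sum_mul]
    refine sum_congr rfl fun j' _ => ?_
    by_cases h1 : i' ∈ A <;> by_cases h2 : j' ∈ A <;> simp [h1, h2]
  set e : V → ℝ := fun u => (if u ∈ R₀ then 1 else 0) - if u ∈ C₀ then 1 else 0 with he
  have hz : ∀ A : Finset V, ∑ u ∈ A, e u = (#(R₀ ∩ A) : ℝ) - #(C₀ ∩ A) := by
    intro A
    simp [he, sum_sub_distrib, inter_comm]
  have he0 : ∑ u, e u = 0 := by rw [hz]; simp [hκC, ← hκ]
  have he2 : ∑ u, e u ^ 2 = 2 * κ := by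
    have : ∀ u, e u ^ 2 = (if u ∈ R₀ then 1 else 0) + if u ∈ C₀ then 1 else 0 := by
      intro u
      simp only [he]
      by_cases h1 : u ∈ R₀ <;> by_cases h2 : u ∈ C₀
      · exact absurd (mem_sdiff.1 h2).1 (mem_sdiff.1 h1).2
      all_goals simp [h1, h2]
    simp only [this, sum_add_distrib]
    simp [hκC, ← hκ]; ring
  have hpt : ∀ A : Finset V, (#(R₀ ∩ A) : ℝ) * #(C₀ \ A) * g A ≤
      κ / (2 * (m + 1 : ℕ)) * max (∑ u ∈ A, e u) 0 ^ 2 := by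
    intro A
    have c1 : #(C \ A) = #(C₀ \ A) + #((R ∩ C) \ A) := by
      rw [← card_union_of_disjoint]
      · congr 1; ext x; simp [hC₀]; tauto
      · rw [disjoint_left]; intro x; simp [hC₀]; tauto
    have c2 : #(R ∩ A) = #(R₀ ∩ A) + #((R ∩ C) ∩ A) := by
      rw [← card_union_of_disjoint]
      · congr 1; ext x; simp [hR₀]; tauto
      · rw [disjoint_left]; intro x; simp [hR₀]; tauto
    have c3 : κ + (#((R ∩ C) ∩ A) + #((R ∩ C) \ A)) = k := by
      rw [add_comm #((R ∩ C) ∩ A), card_sdiff_add_card_inter, hκ, card_sdiff_add_card_inter, hR]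
    have c4 := card_sdiff_add_card_inter C₀ A
    have c5 : ∑ u ∈ A, e u = (#(R₀ ∩ A) : ℝ) + #(C₀ \ A) - κ := by
      rw [hz, ← hκC, ← c4]; push_cast; ring
    rw [c5]
    simp only [hg]
    rw [c1, c2]
    exact mul_mul_edgeLoss_le (card_le_card inter_subset_left)
      (hκC ▸ card_le_card sdiff_subset) c3
  have hhalf : ∑ A ∈ (univ : Finset V).powersetCard (m + 1), max (∑ u ∈ A, e u) 0 ^ 2 =
      m.centralBinom * κ := by
    have h1 := sum_powersetCard_compl hV fun A => max (∑ u ∈ A, e u) 0 ^ 2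
    have h2 := sum_powersetCard_sq hV he0
    have h3 : ∀ A : Finset V, (∑ u ∈ A, e u) ^ 2 =
        max (∑ u ∈ A, e u) 0 ^ 2 + max (∑ u ∈ Aᶜ, e u) 0 ^ 2 := by
      intro A
      have : ∑ u ∈ Aᶜ, e u = - ∑ u ∈ A, e u := by linarith [sum_add_sum_compl A e]
      rw [this]
      rcases le_total (∑ u ∈ A, e u) 0 with h | h
      · rw [max_eq_right h, max_eq_left (by linarith)]; ring
      · rw [max_eq_left h, max_eq_right (by linarith)]; ring
    simp only [h3, sum_add_distrib, he2] at h2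
    linarith
  have hκ' : (0 : ℝ) < κ := by exact_mod_cast hκ0
  have hfin := hcount.trans_le (sum_le_sum fun A _ => hpt A)
  rw [← mul_sum, hhalf] at hfin
  push_cast at hfin
  rw [htotal]
  refine le_of_mul_le_mul_left (hfin.trans (le_of_eq ?_)) (pow_pos hκ' 2)
  ring

end HalfSets

section Retained

open Finset

/-- The weight of `M` from `A` to `B` that is guaranteed to survive a completion to a `k`-regular
bipartite graph. -/
noncomputable def retainedWeight {V : Type*} [DecidableEq V] (m k : ℕ) (S : V → V → ℝ)
    (M : Finset (V × V)) (A B : Finset V) : ℝ :=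
  ∑ p ∈ A ×ˢ B with p ∈ M, S p.1 p.2 *
    (1 - edgeLoss m k #{j ∈ B | (p.1, j) ∈ M} #{i ∈ A | (i, p.2) ∈ M})

lemma IsAssignment.card_row {n k : ℕ} {M : Finset (Fin n × Fin n)} (hM : IsAssignment n k M)
    (i : Fin n) : #{j | (i, j) ∈ M} = k := by
  rw [← hM.1 i, ← card_map ⟨Prod.mk i, Prod.mk_right_injective i⟩]
  congr 1
  ext ⟨a, b⟩
  simp only [mem_map, mem_filter, mem_univ, true_and, Function.Embedding.coeFn_mk, Prod.mk.injEq]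
  constructor
  · rintro ⟨j, hj, rfl, rfl⟩; exact ⟨hj, rfl⟩
  · rintro ⟨h, rfl⟩; exact ⟨b, h, rfl, rfl⟩

lemma IsAssignment.card_col {n k : ℕ} {M : Finset (Fin n × Fin n)} (hM : IsAssignment n k M)
    (j : Fin n) : #{i | (i, j) ∈ M} = k := by
  rw [← hM.2.1 j, ← card_map ⟨fun i => (i, j), Prod.mk_left_injective j⟩]
  congr 1
  ext ⟨a, b⟩
  simp only [mem_map, mem_filter, mem_univ, true_and, Function.Embedding.coeFn_mk, Prod.mk.injEq]
  constructor
  · rintro ⟨i, hi, rfl, rfl⟩; exact ⟨hi, rfl⟩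
  · rintro ⟨h, rfl⟩; exact ⟨a, h, rfl, rfl⟩

lemma exists_respects_of_half {n m k : ℕ} (hk : 1 ≤ k) (hkm : k ≤ m) {S : Fin n → Fin n → ℝ}
    (hS : ∀ i j, 0 ≤ S i j) {M : Finset (Fin n × Fin n)} (hM : IsAssignment n k M)
    {A : Finset (Fin n)} (hA : #A = m) (hA' : #Aᶜ = m) :
    ∃ M', IsAssignment n k M' ∧ Respects A Aᶜ M' ∧
      retainedWeight m k S M A Aᶜ + retainedWeight m k S M Aᶜ A ≤ simVal S M' := by
  have hr : ∀ (B : Finset (Fin n)) i, #{j ∈ B | (i, j) ∈ M} ≤ k := fun B i =>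
    (card_le_card (filter_subset_filter _ (subset_univ B))).trans_eq (hM.card_row i)
  have hc : ∀ (B : Finset (Fin n)) j, #{i ∈ B | (i, j) ∈ M} ≤ k := fun B j =>
    (card_le_card (filter_subset_filter _ (subset_univ B))).trans_eq (hM.card_col j)
  obtain ⟨F, hF, hFr, hFc, hFS⟩ := exists_regular_between hk hkm hA hA' M (hr _) (hc _) hS
  obtain ⟨G, hG, hGr, hGc, hGS⟩ := exists_regular_between hk hkm hA' hA M (hr _) (hc _) hS
  have hF' : ∀ p ∈ F, p.1 ∈ A ∧ p.2 ∉ A := fun p hp => by simpa using hF hp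
  have hG' : ∀ p ∈ G, p.1 ∉ A ∧ p.2 ∈ A := fun p hp => by simpa using hG hp
  have hFG : Disjoint F G := disjoint_left.2 fun p hp hp' => (hG' p hp').1 (hF' p hp).1
  refine ⟨F ∪ G, ⟨fun i => ?_, fun j => ?_, fun i hi => ?_⟩, fun p hp => ?_, ?_⟩
  · rw [filter_union]
    by_cases hi : i ∈ A
    · have hGi : ({p ∈ G | p.1 = i}) = ∅ := filter_eq_empty_iff.2 (by
        rintro p hp rfl; exact (hG' p hp).1 hi)
      rw [hGi, union_empty, hFr i hi]
    · have hFi : ({p ∈ F | p.1 = i}) = ∅ := filter_eq_empty_iff.2 (by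
        rintro p hp rfl; exact hi (hF' p hp).1)
      rw [hFi, empty_union, hGr i (mem_compl.2 hi)]
  · rw [filter_union]
    by_cases hj : j ∈ A
    · have hFj : ({p ∈ F | p.2 = j}) = ∅ := filter_eq_empty_iff.2 (by
        rintro p hp rfl; exact (hF' p hp).2 hj)
      rw [hFj, empty_union, hGc j hj]
    · have hGj : ({p ∈ G | p.2 = j}) = ∅ := filter_eq_empty_iff.2 (by
        rintro p hp rfl; exact hj (hG' p hp).2)
      rw [hGj, union_empty, hFc j (mem_compl.2 hj)]
  · rcases mem_union.1 hi with h | h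
    · exact (hF' _ h).2 (hF' _ h).1
    · exact (hG' _ h).1 (hG' _ h).2
  · rw [mem_compl, mem_compl]
    rcases mem_union.1 hp with h | h
    · exact Or.inl (hF' _ h)
    · exact Or.inr (hG' _ h)
  · rw [simVal, sum_union hFG]
    exact add_le_add hFS hGS

lemma centralBinom_le_sum_retained {m k : ℕ} {M : Finset (Fin (2 * (m + 1)) × Fin (2 * (m + 1)))}
    (hM : IsAssignment (2 * (m + 1)) k M) {p : Fin (2 * (m + 1)) × Fin (2 * (m + 1))}
    (hp : p ∈ M) :
    ((m + 1).centralBinom : ℝ) / 4 ≤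
      ∑ A ∈ univ.powersetCard (m + 1) with p.1 ∈ A ∧ p.2 ∉ A,
        (1 - edgeLoss (m + 1) k #{j ∈ Aᶜ | (p.1, j) ∈ M} #{i ∈ A | (i, p.2) ∈ M}) := by
  have hV : Fintype.card (Fin (2 * (m + 1))) = 2 * (m + 1) := Fintype.card_fin _
  have hne : p.1 ≠ p.2 := by
    intro h
    apply hM.2.2 p.1
    nth_rewrite 2 [h]
    exact hp
  have hloss := sum_edgeLoss_le hV (hM.card_col p.2) (hM.card_row p.1) (i := p.1) (j := p.2)
    (by simpa using hp) (by simpa using hM.2.2 p.1) (by simpa using hp) (by simpa using hM.2.2 p.2)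
  have e1 : ∀ A : Finset (Fin (2 * (m + 1))),
      ({j ∈ Aᶜ | (p.1, j) ∈ M}) = ({j | (p.1, j) ∈ M} : Finset _) \ A := fun A => by
    ext; simp [and_comm]
  have e2 : ∀ A : Finset (Fin (2 * (m + 1))),
      ({i ∈ A | (i, p.2) ∈ M}) = ({i | (i, p.2) ∈ M} : Finset _) ∩ A := fun A => by
    ext; simp [and_comm]
  have hloss' : ∑ A ∈ univ.powersetCard (m + 1) with p.1 ∈ A ∧ p.2 ∉ A,
      edgeLoss (m + 1) k #{j ∈ Aᶜ | (p.1, j) ∈ M} #{i ∈ A | (i, p.2) ∈ M} ≤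
      m.centralBinom / (2 * (m + 1)) :=
    (sum_congr rfl fun A _ => by rw [e1 A, e2 A]).trans_le hloss
  rw [sum_sub_distrib, sum_const, card_powersetCard_separating hV hne, nsmul_eq_mul, mul_one]
  refine le_trans ?_ (sub_le_sub_left hloss' _)
  have hrec : ((m : ℝ) + 1) * (m + 1).centralBinom = 2 * (2 * m + 1) * m.centralBinom := by
    exact_mod_cast Nat.succ_mul_centralBinom_succ m
  have hm : (0 : ℝ) < m + 1 := by positivity
  refine le_of_eq ?_
  field_simp
  linarith

lemma simVal_mul_le_sum_retainedWeight {m k : ℕ}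
    {M : Finset (Fin (2 * (m + 1)) × Fin (2 * (m + 1)))}
    (hM : IsAssignment (2 * (m + 1)) k M) {S : Fin (2 * (m + 1)) → Fin (2 * (m + 1)) → ℝ}
    (hS : ∀ i j, 0 ≤ S i j) :
    simVal S M * ((m + 1).centralBinom / 4) ≤
      ∑ A ∈ univ.powersetCard (m + 1), retainedWeight (m + 1) k S M A Aᶜ := by
  have h : ∑ A ∈ univ.powersetCard (m + 1), retainedWeight (m + 1) k S M A Aᶜ =
      ∑ p ∈ M, S p.1 p.2 * ∑ A ∈ univ.powersetCard (m + 1) with p.1 ∈ A ∧ p.2 ∉ A,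
        (1 - edgeLoss (m + 1) k #{j ∈ Aᶜ | (p.1, j) ∈ M} #{i ∈ A | (i, p.2) ∈ M}) := by
    simp only [mul_sum, retainedWeight]
    refine sum_comm' fun A p => ?_
    simp only [mem_filter, mem_product, mem_compl]
    tauto
  rw [h, simVal, sum_mul]
  exact sum_le_sum fun p hp =>
    mul_le_mul_of_nonneg_left (centralBinom_le_sum_retained hM hp) (hS _ _)

end Retained

theorem stmt5 (n k : ℕ) (hn : 2 ≤ n) (heven : Even n) (hk : 1 ≤ k) (hkn : k ≤ n / 2)
    (S : Fin n → Fin n → ℝ) (hS : ∀ i j, 0 ≤ S i j ∧ S i j ≤ 1) :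
    (1 / 2 : ℝ) * OptSim n k S ≤
      (1 / (n.choose (n / 2) : ℝ)) *
        ∑ A₁ ∈ (Finset.univ : Finset (Fin n)).powersetCard (n / 2),
          sSup {x : ℝ | ∃ M : Finset (Fin n × Fin n),
            IsAssignment n k M ∧ Respects A₁ A₁ᶜ M ∧ simVal S M = x} := by
  obtain ⟨m, rfl⟩ : ∃ m, n = 2 * (m + 1) := by
    obtain ⟨r, hr⟩ := heven
    exact ⟨r - 1, by omega⟩
  have hhalf : 2 * (m + 1) / 2 = m + 1 := by omega
  rw [hhalf] at hkn ⊢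
  rw [← Nat.centralBinom_eq_two_mul_choose]
  have hS0 : ∀ i j, 0 ≤ S i j := fun i j => (hS i j).1
  have hsim0 : ∀ M, 0 ≤ simVal S M := fun M => Finset.sum_nonneg fun p _ => hS0 _ _
  set best : Finset (Fin (2 * (m + 1))) → ℝ := fun A => sSup {x : ℝ | ∃ M,
    IsAssignment (2 * (m + 1)) k M ∧ Respects A Aᶜ M ∧ simVal S M = x} with hbest
  have hb0 : ∀ A, 0 ≤ best A := fun A => Real.sSup_nonneg <| by
    rintro x ⟨M, -, -, rfl⟩
    exact hsim0 M
  have hle : ∀ A M, IsAssignment (2 * (m + 1)) k M → Respects A Aᶜ M → simVal S M ≤ best A := by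
    intro A M h1 h2
    refine le_csSup (Set.Finite.bddAbove ((Set.finite_range (simVal S)).subset ?_)) ⟨M, h1, h2, rfl⟩
    rintro x ⟨M, -, -, rfl⟩
    exact ⟨M, rfl⟩
  have hX : (0 : ℝ) < (m + 1).centralBinom := by exact_mod_cast Nat.centralBinom_pos _
  have key : ∀ M, IsAssignment (2 * (m + 1)) k M → simVal S M ≤
      2 * (1 / ((m + 1).centralBinom : ℝ) * ∑ A ∈ Finset.univ.powersetCard (m + 1), best A) := by
    intro M hM
    have h1 := simVal_mul_le_sum_retainedWeight hM hS0
    have h2 := sum_powersetCard_compl (Fintype.card_fin (2 * (m + 1)))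
      fun A => retainedWeight (m + 1) k S M A Aᶜ
    simp only [compl_compl] at h2
    have h3 : ∀ A ∈ (Finset.univ : Finset (Fin (2 * (m + 1)))).powersetCard (m + 1),
        retainedWeight (m + 1) k S M A Aᶜ + retainedWeight (m + 1) k S M Aᶜ A ≤ best A := by
      intro A hA
      rw [Finset.mem_powersetCard_univ] at hA
      have hA' : Aᶜ.card = m + 1 := by
        rw [Finset.card_compl, hA, Fintype.card_fin]; omega
      obtain ⟨M', hM', hr, hs⟩ := exists_respects_of_half hk hkn hS0 hM hA hA'
      exact hs.trans (hle A M' hM' hr)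
    have h4 := Finset.sum_le_sum h3
    rw [Finset.sum_add_distrib, h2] at h4
    rw [one_div, ← div_eq_inv_mul, ← mul_div_assoc, le_div_iff₀ hX]
    linarith
  have hopt : OptSim (2 * (m + 1)) k S ≤
      2 * (1 / ((m + 1).centralBinom : ℝ) * ∑ A ∈ Finset.univ.powersetCard (m + 1), best A) := by
    refine Real.sSup_le ?_ ?_
    · rintro x ⟨M, hM, rfl⟩
      exact key M hM
    · have := Finset.sum_nonneg fun A (_ : A ∈ Finset.univ.powersetCard (m + 1)) => hb0 A
      positivity
  linarith
end

section
/- (Hajnal–Szemerédi) Every finite simple graph G on a vertex set V in which every vertex has degree at most Δ admits an equitable (Δ+1)-coloring: a function f : V → {1,…,Δ+1} such that f(u) ≠ f(v) for every edge {u,v} of G, and the sizes of any two color classes |f⁻¹(x)| and |f⁻¹(y)| differ by at most 1. -/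
namespace HajnalSzemeredi

open Finset

open scoped Classical

section Digraph

variable {C : Type*}

/-- `SimplePath H a S x` says that the relation `H` has a simple path from `x` to `a` whose
vertex set is `S`. -/
inductive SimplePath (H : C → C → Prop) (a : C) : Finset C → C → Prop
  | nil : SimplePath H a {a} a
  | cons {S : Finset C} {x y : C} (hp : SimplePath H a S y) (hxy : H x y) (hx : x ∉ S) :
      SimplePath H a (insert x S) x

variable {H H' : C → C → Prop} {a x y : C} {S : Finset C}

lemma SimplePath.start_mem (h : SimplePath H a S x) : x ∈ S := by
  cases h <;> simp

lemma SimplePath.target_mem (h : SimplePath H a S x) : a ∈ S := by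
  induction h with
  | nil => simp
  | cons _ _ _ ih => simp [ih]

lemma SimplePath.exists_subpath (h : SimplePath H a S x) :
    ∀ w ∈ S, ∃ S' ⊆ S, SimplePath H a S' w := by
  induction h with
  | nil => intro w hw; rw [mem_singleton] at hw; subst hw; exact ⟨_, Subset.rfl, .nil⟩
  | @cons S x y hp hxy hx ih =>
    intro w hw
    rcases mem_insert.1 hw with rfl | hw
    · exact ⟨_, Subset.rfl, .cons hp hxy hx⟩
    · obtain ⟨S', hS', h'⟩ := ih w hw
      exact ⟨S', hS'.trans (subset_insert _ _), h'⟩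

lemma SimplePath.exists_subpath_avoiding_start (h : SimplePath H a S x) {w : C} (hw : w ∈ S)
    (hwx : w ≠ x) : ∃ S' ⊆ S, SimplePath H a S' w ∧ x ∉ S' := by
  cases h with
  | nil => exact absurd (mem_singleton.1 hw) hwx
  | @cons S x y hp hxy hx =>
    obtain ⟨S', hS', h'⟩ := hp.exists_subpath w ((mem_insert.1 hw).resolve_left hwx)
    exact ⟨S', hS'.trans (subset_insert _ _), h', fun hx' => hx (hS' hx')⟩

lemma SimplePath.exists_cons (h : SimplePath H a S y) (hxy : H x y) :
    ∃ S' ⊆ insert x S, SimplePath H a S' x := by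
  by_cases hx : x ∈ S
  · obtain ⟨S', hS', h'⟩ := h.exists_subpath x hx
    exact ⟨S', hS'.trans (subset_insert _ _), h'⟩
  · exact ⟨_, Subset.rfl, .cons h hxy hx⟩

lemma SimplePath.mono (h : SimplePath H a S x) (hH : ∀ u ∈ S, ∀ v ∈ S, H u v → H' u v) :
    SimplePath H' a S x := by
  induction h with
  | nil => exact .nil
  | @cons S x y hp hxy hx ih =>
    refine .cons (ih fun u hu v hv => hH u (mem_insert_of_mem hu) v (mem_insert_of_mem hv)) ?_ hx
    exact hH x (mem_insert_self _ _) y (mem_insert_of_mem hp.start_mem) hxy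

variable [Fintype C]

/-- The vertices from which `a` can be reached along `H`. -/
noncomputable def accessible (H : C → C → Prop) (a : C) : Finset C :=
  {x | ∃ S, SimplePath H a S x}

lemma mem_accessible : x ∈ accessible H a ↔ ∃ S, SimplePath H a S x := by simp [accessible]

lemma target_mem_accessible (H : C → C → Prop) (a : C) : a ∈ accessible H a :=
  mem_accessible.2 ⟨_, .nil⟩

lemma mem_accessible_of_rel (hxy : H x y) (hy : y ∈ accessible H a) : x ∈ accessible H a := by
  obtain ⟨S, hS⟩ := mem_accessible.1 hy
  obtain ⟨S', -, h'⟩ := hS.exists_cons hxy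
  exact mem_accessible.2 ⟨S', h'⟩

lemma SimplePath.subset_accessible (h : SimplePath H a S x) : S ⊆ accessible H a := by
  intro w hw
  obtain ⟨S', -, h'⟩ := h.exists_subpath w hw
  exact mem_accessible.2 ⟨S', h'⟩

/-- If some vertex other than `a` reaches `a`, there are a vertex `u` and a nonempty set `T` of
accessible vertices such that deleting any `w ∈ T` leaves all other accessible vertices accessible,
and no vertex of `T` is related to an accessible vertex outside `T ∪ {u}`. -/
lemma exists_terminal_set (hx : x ∈ accessible H a) (hxa : x ≠ a) :
    ∃ u ∈ accessible H a, ∃ T ⊆ accessible H a, T.Nonempty ∧ u ∉ T ∧ a ∉ T ∧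
      (∀ w ∈ T, ∀ y ∈ accessible H a, y ≠ w → ∃ S, SimplePath H a S y ∧ w ∉ S) ∧
      ∀ w ∈ T, ∀ y ∈ accessible H a, y ≠ u → y ∉ T → ¬ H w y := by
  let T : C → Finset C := fun u =>
    {y ∈ accessible H a | y ≠ u ∧ ¬ ∃ S, SimplePath H a S y ∧ u ∉ S}
  have hT : ∀ u y, y ∈ T u ↔ y ∈ accessible H a ∧ y ≠ u ∧ ¬ ∃ S, SimplePath H a S y ∧ u ∉ S := by
    intro u y; simp only [T, mem_filter]
  obtain ⟨u, hu, hmin⟩ := exists_min_image {u ∈ accessible H a | (T u).Nonempty}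
    (fun u => #(T u)) ⟨a, by
      rw [mem_filter]
      refine ⟨target_mem_accessible H a, x, (hT _ _).2 ⟨hx, hxa, ?_⟩⟩
      rintro ⟨S, hS, haS⟩
      exact haS hS.target_mem⟩
  rw [mem_filter] at hu
  refine ⟨u, hu.1, T u, fun y hy => ((hT _ _).1 hy).1, hu.2, fun h => ((hT _ _).1 h).2.1 rfl,
    ?_, ?_, ?_⟩
  · intro h
    obtain ⟨-, hau, h⟩ := (hT _ _).1 h
    exact h ⟨_, .nil, by simpa using hau.symm⟩
  · intro w hw y hy hyw
    by_contra hno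
    obtain ⟨hwA, hwu, hwno⟩ := (hT _ _).1 hw
    have hyT : y ∈ T w := (hT _ _).2 ⟨hy, hyw, hno⟩
    have hle := hmin w (by rw [mem_filter]; exact ⟨hwA, y, hyT⟩)
    refine absurd (card_lt_card (s := T w) (t := T u) ?_) (not_lt.2 hle)
    rw [ssubset_iff_of_subset]
    · exact ⟨w, hw, fun h => ((hT _ _).1 h).2.1 rfl⟩
    · intro v hv
      obtain ⟨hvA, hvw, hvno⟩ := (hT _ _).1 hv
      refine (hT _ _).2 ⟨hvA, ?_, ?_⟩
      · rintro rfl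
        obtain ⟨S, hS⟩ := mem_accessible.1 hvA
        by_cases hwS : w ∈ S
        · obtain ⟨S', -, h', hv'⟩ := hS.exists_subpath_avoiding_start hwS hwu
          exact hwno ⟨S', h', hv'⟩
        · exact hvno ⟨S, hS, hwS⟩
      · rintro ⟨S, hS, huS⟩
        by_cases hwS : w ∈ S
        · obtain ⟨S', hS', h'⟩ := hS.exists_subpath w hwS
          exact hwno ⟨S', h', fun h => huS (hS' h)⟩
        · exact hvno ⟨S, hS, hwS⟩
  · intro w hw y hy hyu hyT hwy
    obtain ⟨hwA, hwu, hwno⟩ := (hT _ _).1 hw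
    have : ∃ S, SimplePath H a S y ∧ u ∉ S := by
      by_contra h
      exact hyT ((hT _ _).2 ⟨hy, hyu, h⟩)
    obtain ⟨S, hS, huS⟩ := this
    obtain ⟨S', hS', h'⟩ := hS.exists_cons hwy
    refine hwno ⟨S', h', fun h => ?_⟩
    rcases mem_insert.1 (hS' h) with h | h
    · exact hwu h.symm
    · exact huS h

end Digraph

section Recolor

variable {V C : Type*}

/-- Recolour `z` by `X`, `y` by the former colour of `z`, and all other vertices with colour
outside `A` by `g`. -/
noncomputable def recolor (f g : V → C) (A : Finset C) (z y : V) (X : C) : V → C :=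
  Function.update (fun v => if v = y then f z else if f v ∈ A then f v else g v) z X

variable {f g : V → C} {A : Finset C} {z y v : V} {X : C}

lemma recolor_self : recolor f g A z y X z = X := by
  simp [recolor]

lemma recolor_of_mem (hy : f y ∉ A) (hv : f v ∈ A) (hvz : v ≠ z) :
    recolor f g A z y X v = f v := by
  simp only [recolor, Function.update_apply]
  grind

lemma recolor_of_notMem (hz : f z ∈ A) (hv : f v ∉ A) (hvy : v ≠ y) :
    recolor f g A z y X v = g v := by
  simp only [recolor, Function.update_apply]
  grind

lemma recolor_eq_of_mem (hgA : ∀ v, f v ∉ A → v ≠ y → g v ∉ A)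
    (hv : recolor f g A z y X v ∈ A) (hvX : recolor f g A z y X v ≠ X)
    (hvz : recolor f g A z y X v ≠ f z) : recolor f g A z y X v = f v := by
  simp only [recolor, Function.update_apply] at *
  grind

end Recolor

section Coloring

lemma sum_sum_neighbors {V : Type*} (G : SimpleGraph V) (P Q : Finset V) (μ : V → ℕ) :
    ∑ y ∈ P, ∑ z ∈ Q with G.Adj y z, μ z = ∑ z ∈ Q, μ z * #{y ∈ P | G.Adj z y} := by
  rw [sum_comm' (t' := Q) (s' := fun z => {y ∈ P | G.Adj z y})]
  · simp [mul_comm]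
  · intro y z
    simp only [mem_filter, G.adj_comm y z]
    tauto

variable {V C : Type*} [Fintype V]

/-- A proper colouring all of whose classes have `s` vertices, except that the class `a` lacks one
vertex and the class `b` has one extra vertex. For `a = b` all classes have `s` vertices. -/
structure NearlyEquitable (G : SimpleGraph V) (s : ℕ) (f : V → C) (a b : C) : Prop where
  proper : ∀ u v, G.Adj u v → f u ≠ f v
  card : ∀ c, #{v | f v = c} + (if c = a then 1 else 0) = s + if c = b then 1 else 0

/-- `Shift G f x y` says that some vertex of colour `x` has no neighbour of colour `y`. -/
def Shift (G : SimpleGraph V) (f : V → C) (x y : C) : Prop :=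
  ∃ v, f v = x ∧ ∀ w, G.Adj v w → f w ≠ y

lemma card_fiber_update (f : V → C) (v : V) (x c : C) :
    #{w | Function.update f v x w = c} + (if c = f v then 1 else 0) =
      #{w | f w = c} + if c = x then 1 else 0 := by
  have h : ∀ g : V → C, #{w | g w = c} = (if c = g v then 1 else 0) +
      ∑ w ∈ univ.erase v, if g w = c then 1 else 0 := by
    intro g
    rw [card_filter, ← add_sum_erase univ _ (mem_univ v)]
    simp only [eq_comm]
  have h' : (∑ w ∈ univ.erase v, if Function.update f v x w = c then 1 else 0) =
      ∑ w ∈ univ.erase v, if f w = c then 1 else 0 :=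
    sum_congr rfl fun w hw => by rw [Function.update_of_ne (ne_of_mem_erase hw)]
  rw [h f, h (Function.update f v x), h', Function.update_self]
  ring

variable {G : SimpleGraph V} {s : ℕ} {f : V → C} {a b : C}

/-- Shifting one vertex along each edge of a path from `x` to `a`. The path may be taken with
respect to another colouring `f` that has the same classes along the path, except at `x`. -/
lemma NearlyEquitable.exists_of_simplePath {S : Finset C} {x : C}
    (h : SimplePath (Shift G f) a S x) :
    ∀ f' : V → C, (∀ v, f v ∈ S → f' v = f v) → (∀ v, f' v ∈ S → f' v ≠ x → f' v = f v) →
      NearlyEquitable G s f' a x → ∃ g : V → C, NearlyEquitable G s g a a := by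
  induction h with
  | nil => exact fun f' _ _ h => ⟨f', h⟩
  | @cons S x y hp hxy hx ih =>
    intro f' hf hf' hne
    obtain ⟨v, rfl, hv⟩ := hxy
    have hyS := hp.start_mem
    have hvy : f v ≠ y := fun h => hx (h ▸ hyS)
    have hfv : f' v = f v := hf v (mem_insert_self _ _)
    refine ih (Function.update f' v y) ?_ ?_ ⟨?_, ?_⟩
    · intro w hw
      have : w ≠ v := by rintro rfl; exact hx hw
      rw [Function.update_of_ne this]
      exact hf w (mem_insert_of_mem hw)
    · intro w hw hwy
      have : w ≠ v := by rintro rfl; simp at hwy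
      rw [Function.update_of_ne this] at hw hwy ⊢
      exact hf' w (mem_insert_of_mem hw) (fun h => hx (h ▸ hw))
    · have key : ∀ w, G.Adj v w → f' w ≠ y := by
        intro w hw h
        exact hv w hw ((hf' w (h ▸ mem_insert_of_mem hyS) (h ▸ hvy.symm)).symm.trans h)
      intro u w huw
      by_cases hu : u = v
      · subst hu
        rw [Function.update_self, Function.update_of_ne huw.ne']
        exact (key w huw).symm
      · by_cases hw : w = v
        · subst hw
          rw [Function.update_self, Function.update_of_ne hu]
          exact key u huw.symm
        · rw [Function.update_of_ne hu, Function.update_of_ne hw]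
          exact hne.proper u w huw
    · intro c
      have h1 := card_fiber_update f' v y c
      have h2 := hne.card c
      rw [hfv] at h1
      omega

lemma NearlyEquitable.nearlyEquitable_recolor (h : NearlyEquitable G s f a b) {A : Finset C}
    (hb : b ∉ A) (ha : a ∈ A) {z y : V} (hz : f z ∈ A) (hy : f y ∉ A)
    (hzy : ∀ w, G.Adj y w → f w = f z → w = z) {g : V → C}
    (hgA : ∀ v, f v ∉ A → v ≠ y → g v ∉ A)
    (hgp : ∀ u v, f u ∉ A → u ≠ y → f v ∉ A → v ≠ y → G.Adj u v → g u ≠ g v)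
    (hgc : ∀ c ∉ A, #{v | (f v ∉ A ∧ v ≠ y) ∧ g v = c} = s) {X : C} (hX : X ≠ f z)
    (hXz : ∀ w, G.Adj z w → w ≠ y → (if f w ∈ A then f w else g w) ≠ X) :
    NearlyEquitable G s (recolor f g A z y X) a X := by
  have hzy' : z ≠ y := by rintro rfl; exact hy hz
  constructor
  · have hp := h.proper
    have hsymm : ∀ u v, G.Adj u v → G.Adj v u := fun u v h => h.symm
    have hne : ∀ u v, G.Adj u v → u ≠ v := fun u v h => h.ne
    intro u v huv
    simp only [recolor, Function.update_apply]
    grind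
  · intro c
    have h1 : #{v | recolor f g A z y X v = c} + (if c = f z then 1 else 0) =
        #{v | (if v = y then f z else if f v ∈ A then f v else g v) = c} +
          if c = X then 1 else 0 := by
      have := card_fiber_update
        (fun v => if v = y then f z else if f v ∈ A then f v else g v) z X c
      rwa [if_neg hzy', if_pos hz] at this
    have h2 := h.card c
    have h3 : #{v | (if v = y then f z else if f v ∈ A then f v else g v) = c} +
        (if c = a then 1 else 0) = s + if c = f z then 1 else 0 := by
      by_cases hc : c ∈ A
      · have hcb : c ≠ b := by rintro rfl; exact hb hc
        rw [if_neg hcb] at h2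
        by_cases hcz : c = f z
        · have : ({v | (if v = y then f z else if f v ∈ A then f v else g v) = c} : Finset V) =
              insert y ({v | f v = c} : Finset V) := by
            ext v; simp only [mem_filter, mem_univ, true_and, mem_insert]; grind
          rw [this, card_insert_of_notMem (by rw [mem_filter]; grind), if_pos hcz]
          omega
        · have : ({v | (if v = y then f z else if f v ∈ A then f v else g v) = c} : Finset V) =
              ({v | f v = c} : Finset V) := by
            ext v; simp only [mem_filter, mem_univ, true_and]; grind
          rw [this, if_neg hcz]
          omega
      · have : ({v | (if v = y then f z else if f v ∈ A then f v else g v) = c} : Finset V) =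
              ({v | (f v ∉ A ∧ v ≠ y) ∧ g v = c} : Finset V) := by
            ext v; simp only [mem_filter, mem_univ, true_and]; grind
        rw [this, hgc c hc, if_neg (by grind), if_neg (by grind)]
    omega

lemma sum_card_neighbors_add (G : SimpleGraph V) (f : V → C) (A : Finset C) (v : V) :
    ∑ c ∈ A, #{w | G.Adj v w ∧ f w = c} + #{w | G.Adj v w ∧ f w ∉ A} = #{w | G.Adj v w} := by
  have h : #{w | G.Adj v w ∧ f w ∈ A} = ∑ c ∈ A, #{w | G.Adj v w ∧ f w = c} := by
    rw [card_eq_sum_card_fiberwise (f := f) (t := A) (fun w hw => by simpa using (by simpa using hw :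
      G.Adj v w ∧ f w ∈ A).2)]
    refine sum_congr rfl fun c hc => congrArg card ?_
    ext w
    simp only [mem_filter, mem_univ, true_and]
    grind
  rw [← h, ← filter_filter, ← filter_filter]
  exact card_filter_add_card_filter_not _

lemma NearlyEquitable.card_fiber (h : NearlyEquitable G s f a b) {c : C} (ha : c ≠ a)
    (hb : c ≠ b) : #{v | f v = c} = s := by
  simpa [ha, hb] using h.card c

end Coloring

section Counting

variable {V C : Type*} [Fintype V] [Fintype C] {G : SimpleGraph V} {s : ℕ} {f : V → C} {a b : C}
  {A T : Finset C}

lemma card_add_card_neighbors_lt (hdeg : ∀ v, #{w | G.Adj v w} < Fintype.card C) {K : Finset C}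
    (hKA : K ⊆ A) {v : V} (hK : ∀ c ∈ K, ∃ w, G.Adj v w ∧ f w = c) :
    #K + #{w | G.Adj v w ∧ f w ∉ A} < Fintype.card C := by
  have h1 := sum_card_neighbors_add G f A v
  have h2 : #K ≤ ∑ c ∈ A, #{w | G.Adj v w ∧ f w = c} := by
    refine le_trans ?_ (sum_le_sum_of_subset hKA)
    rw [card_eq_sum_ones]
    refine sum_le_sum fun c hc => ?_
    obtain ⟨w, hw⟩ := hK c hc
    exact card_pos.2 ⟨w, by simpa using hw⟩
  have h3 := hdeg v
  omega

lemma NearlyEquitable.card_compl (h : NearlyEquitable G s f a b) (ha : a ∈ A) (hb : b ∉ A) :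
    #{v | f v ∉ A} = #Aᶜ * s + 1 := by
  rw [card_eq_sum_card_fiberwise (f := f) (t := Aᶜ) (fun v hv => by simpa using hv)]
  have : ∀ c ∈ Aᶜ, #{v ∈ ({v | f v ∉ A} : Finset V) | f v = c} = s + if c = b then 1 else 0 := by
    intro c hc
    rw [mem_compl] at hc
    have hca : c ≠ a := by rintro rfl; exact hc ha
    have h1 := h.card c
    rw [if_neg hca, add_zero] at h1
    rw [← h1, filter_filter]
    congr 1
    ext v
    simp only [mem_filter, mem_univ, true_and]
    grind
  rw [sum_congr rfl this, sum_add_distrib, sum_ite_eq', if_pos (mem_compl.2 hb), sum_const,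
    smul_eq_mul]

lemma exists_neighbor_of_not_mem_accessible {v : V} (hv : f v ∉ accessible (Shift G f) a) {c : C}
    (hc : c ∈ accessible (Shift G f) a) : ∃ w, G.Adj v w ∧ f w = c := by
  by_contra! h
  exact hv (mem_accessible_of_rel ⟨v, rfl, h⟩ hc)

lemma NearlyEquitable.exists_mem_accessible_ne (h : NearlyEquitable G s f a b)
    (hdeg : ∀ v, #{w | G.Adj v w} < Fintype.card C) (hb : b ∉ accessible (Shift G f) a) :
    ∃ x ∈ accessible (Shift G f) a, x ≠ a := by
  by_contra! hall
  have haA := target_mem_accessible (Shift G f) a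
  have hA : accessible (Shift G f) a = {a} := eq_singleton_iff_unique_mem.2 ⟨haA, hall⟩
  have hB := h.card_compl haA hb
  have hab : a ≠ b := by rintro rfl; exact hb haA
  have hca := h.card a
  rw [if_pos rfl, if_neg hab] at hca
  have h1 : #{v | f v ∉ accessible (Shift G f) a} ≤
      ∑ z with f z = a, 1 * #{y ∈ ({v | f v ∉ accessible (Shift G f) a} : Finset V) | G.Adj z y} := by
    rw [← sum_sum_neighbors G _ _ (fun _ => 1), card_eq_sum_ones]
    refine sum_le_sum fun y hy => ?_
    obtain ⟨w, hw⟩ := exists_neighbor_of_not_mem_accessible (mem_filter.1 hy).2 haA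
    rw [← card_eq_sum_ones]
    exact card_pos.2 ⟨w, by simpa using hw.symm⟩
  have h2 : ∑ z with f z = a, 1 * #{y ∈ ({v | f v ∉ accessible (Shift G f) a} : Finset V) | G.Adj z y}
      ≤ #{z | f z = a} * (Fintype.card C - 1) := by
    rw [← smul_eq_mul]
    refine sum_le_card_nsmul _ _ _ fun z _ => ?_
    have := hdeg z
    have h3 : #{y ∈ ({v | f v ∉ accessible (Shift G f) a} : Finset V) | G.Adj z y} ≤
        #{w | G.Adj z w} := card_le_card (filter_subset_filter _ (subset_univ _))
    omega
  rw [Finset.card_compl, hA, card_singleton] at hB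
  rw [hA] at h1 h2
  have h3 : #{z | f z = a} * (Fintype.card C - 1) ≤ (Fintype.card C - 1) * s := by
    rw [mul_comm]
    exact Nat.mul_le_mul_left _ (by omega)
  omega

/-- `Solo G f A T z y` says that `y` has a colour outside `A`, that `z` has a colour in `T`, and
that `z` is the only neighbour of `y` in the colour class of `z`. -/
def Solo (G : SimpleGraph V) (f : V → C) (A T : Finset C) (z y : V) : Prop :=
  f z ∈ T ∧ f y ∉ A ∧ G.Adj y z ∧ ∀ w, G.Adj y w → f w = f z → w = z

lemma card_le_card_solo (hdeg : ∀ v, #{w | G.Adj v w} < Fintype.card C) (hTA : T ⊆ A) {y : V}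
    (hy : f y ∉ A) (hyA : ∀ c ∈ A, ∃ w, G.Adj y w ∧ f w = c) :
    #T + #{w | G.Adj y w ∧ f w ∉ A} + 1 ≤ #Aᶜ + #{z | Solo G f A T z y} := by
  have h1 := sum_card_neighbors_add G f A y
  have h2 := hdeg y
  have h3 : #A + #{c ∈ T | #{w | G.Adj y w ∧ f w = c} ≠ 1} ≤
      ∑ c ∈ A, #{w | G.Adj y w ∧ f w = c} := by
    calc _ ≤ ∑ c ∈ A, (1 + if c ∈ T ∧ #{w | G.Adj y w ∧ f w = c} ≠ 1 then 1 else 0) := by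
          rw [sum_add_distrib, ← card_eq_sum_ones, ← card_filter]
          gcongr
          intro c hc
          rw [mem_filter] at hc ⊢
          exact ⟨hTA hc.1, hc⟩
      _ ≤ _ := by
          refine sum_le_sum fun c hc => ?_
          obtain ⟨w, hw⟩ := hyA c hc
          have : 0 < #{w | G.Adj y w ∧ f w = c} := card_pos.2 ⟨w, by simpa using hw⟩
          split_ifs <;> omega
  have h4 : #{c ∈ T | #{w | G.Adj y w ∧ f w = c} = 1} ≤ #{z | Solo G f A T z y} := by
    refine le_trans (card_le_card (t := image f {z | Solo G f A T z y}) ?_) card_image_le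
    intro c hc
    obtain ⟨hcT, hc1⟩ := mem_filter.1 hc
    obtain ⟨z, hz⟩ := card_eq_one.1 hc1
    have hz' : ∀ w, (G.Adj y w ∧ f w = c) ↔ w = z := by simpa [Finset.ext_iff] using hz
    have hzc := (hz' z).2 rfl
    refine mem_image.2 ⟨z, ?_, hzc.2⟩
    simp only [mem_filter, mem_univ, true_and]
    refine ⟨hzc.2 ▸ hcT, hy, hzc.1, fun w hw hwz => (hz' w).1 ⟨hw, hwz.trans hzc.2⟩⟩
  have h5 := card_filter_add_card_filter_not (s := T) (fun c => #{w | G.Adj y w ∧ f w = c} = 1)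
  have h6 := card_add_card_compl A
  simp only [ne_eq] at h3
  omega

lemma card_compl_lt_card_of_solo (hdeg : ∀ v, #{w | G.Adj v w} < Fintype.card C) (hTA : T ⊆ A)
    {u W : C} (huA : u ∈ A) (huT : u ∉ T) (hW : W ∈ T)
    (hB : ∀ y, f y ∉ A → ∀ c ∈ A, ∃ w, G.Adj y w ∧ f w = c) (hBcard : #{v | f v ∉ A} = #Aᶜ * s + 1)
    (hWcard : #{v | f v = W} = s)
    (hWu : ∀ z, f z = W → ∀ c ∈ A, c ≠ u → c ∉ T → ∃ w, G.Adj z w ∧ f w = c)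
    (hsolo : ∀ z y, Solo G f A T z y → f z = W → ∀ c ∈ A, c ≠ W → ∃ w, G.Adj z w ∧ f w = c) :
    #Aᶜ < #T := by
  by_contra! hle
  have hcompl := card_add_card_compl A
  let μ : V → ℕ := fun z => if ∃ y, Solo G f A T z y then 2 else 1
  have h1 : #{v | f v ∉ A} * 2 ≤
      ∑ z with f z = W, μ z * #{y ∈ ({v | f v ∉ A} : Finset V) | G.Adj z y} := by
    rw [← sum_sum_neighbors G, ← smul_eq_mul]
    refine card_nsmul_le_sum _ _ _ fun y hy => ?_
    have hyA : f y ∉ A := (mem_filter.1 hy).2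
    obtain ⟨z, hyz, hzW⟩ := hB y hyA W (hTA hW)
    have hz : z ∈ ({z ∈ ({z | f z = W} : Finset V) | G.Adj y z} : Finset V) := by simp [hyz, hzW]
    by_cases hs : Solo G f A T z y
    · have : μ z = 2 := if_pos ⟨y, hs⟩
      rw [← this]
      exact single_le_sum (f := μ) (fun _ _ => Nat.zero_le _) hz
    · obtain ⟨w, hyw, hwz, hne⟩ : ∃ w, G.Adj y w ∧ f w = f z ∧ w ≠ z := by
        by_contra! hno
        exact hs ⟨hzW ▸ hW, hyA, hyz, hno⟩
      have hsub : ({z, w} : Finset V) ⊆ {z ∈ ({z | f z = W} : Finset V) | G.Adj y z} := by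
        intro v hv
        rcases mem_insert.1 hv with rfl | hv
        · exact hz
        · rw [mem_singleton] at hv
          subst hv
          simp [hyw, hwz, hzW]
      refine le_trans ?_ (sum_le_sum_of_subset hsub)
      rw [sum_pair hne.symm]
      have hμ : ∀ v, 1 ≤ μ v := fun v => by simp only [μ]; split_ifs <;> omega
      have := hμ z
      have := hμ w
      omega
  have h2 : ∑ z with f z = W, μ z * #{y ∈ ({v | f v ∉ A} : Finset V) | G.Adj z y} ≤
      s * (2 * #Aᶜ) := by
    rw [← hWcard, ← smul_eq_mul]
    refine sum_le_card_nsmul _ _ _ fun z hz => ?_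
    have hzW : f z = W := by simpa using hz
    have hd : #{y ∈ ({v | f v ∉ A} : Finset V) | G.Adj z y} = #{y | G.Adj z y ∧ f y ∉ A} := by
      rw [filter_filter]
      congr 1
      ext v
      simp [and_comm]
    rw [hd]
    by_cases hs : ∃ y, Solo G f A T z y
    · have hμ : μ z = 2 := if_pos hs
      obtain ⟨y, hy⟩ := hs
      have := card_add_card_neighbors_lt hdeg (erase_subset W A) (v := z) (f := f) (fun c hc =>
        hsolo z y hy hzW c (mem_of_mem_erase hc) (ne_of_mem_erase hc))
      have h3 := card_erase_add_one (hTA hW)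
      rw [hμ]
      omega
    · have hμ : μ z = 1 := if_neg hs
      have := card_add_card_neighbors_lt hdeg (sdiff_subset (s := A) (t := insert u T)) (v := z)
        (f := f) (fun c hc => by
          simp only [mem_sdiff, mem_insert, not_or] at hc
          exact hWu z hzW c hc.1 hc.2.1 hc.2.2)
      have h3 := card_sdiff_add_card_eq_card (insert_subset huA hTA)
      rw [card_insert_of_notMem huT] at h3
      rw [hμ]
      omega
  rw [hBcard] at h1
  have h3 : s * (2 * #Aᶜ) = #Aᶜ * s * 2 := by ring
  omega

lemma exists_solo_pair_not_adj (hdeg : ∀ v, #{w | G.Adj v w} < Fintype.card C) (hTA : T ⊆ A)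
    (hT : #Aᶜ < #T) (hB : ∀ y, f y ∉ A → ∀ c ∈ A, ∃ w, G.Adj y w ∧ f w = c)
    (hBcard : #{v | f v ∉ A} = #Aᶜ * s + 1) (hTcard : ∀ c ∈ T, #{v | f v = c} = s) :
    ∃ z y₁ y₂, Solo G f A T z y₁ ∧ Solo G f A T z y₂ ∧ y₁ ≠ y₂ ∧ ¬ G.Adj y₁ y₂ := by
  by_contra! hclique
  have hcompl := card_add_card_compl A
  have hTV : #{z | f z ∈ T} = #T * s := by
    rw [card_eq_sum_card_fiberwise (f := f) (t := T) (fun v hv => by simpa using hv),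
      ← smul_eq_mul, ← sum_const]
    refine sum_congr rfl fun c hc => ?_
    rw [← hTcard c hc, filter_filter]
    congr 1
    ext v
    simp only [mem_filter, mem_univ, true_and]
    grind
  let n : V → ℕ := fun z => #{y | Solo G f A T z y}
  have hupper : ∑ y with f y ∉ A, ∑ z with Solo G f A T z y, (1 : ℚ) / n z ≤ #T * s := by
    rw [sum_comm' (t' := {z | f z ∈ T}) (s' := fun z => {y | Solo G f A T z y})]
    · calc _ ≤ ∑ z with f z ∈ T, (1 : ℚ) := by
            refine sum_le_sum fun z _ => ?_
            rw [sum_const, nsmul_eq_mul, mul_one_div]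
            exact div_self_le_one _
        _ = _ := by
            rw [sum_const, hTV]
            simp
    · intro y z
      simp only [mem_filter, mem_univ, true_and]
      exact ⟨fun h => ⟨h.2, h.2.1⟩, fun h => ⟨h.1.2.1, h.1⟩⟩
  have hlower : ∀ y, f y ∉ A →
      (#T : ℚ) / #Aᶜ ≤ ∑ z with Solo G f A T z y, (1 : ℚ) / n z := by
    intro y hy
    set d := #{w | G.Adj y w ∧ f w ∉ A} with hd
    have h1 := card_le_card_solo hdeg hTA hy (hB y hy)
    have h2 : #A + d < Fintype.card C := card_add_card_neighbors_lt hdeg Subset.rfl (hB y hy)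
    have hdq : d + 1 ≤ #Aᶜ := by omega
    have hn : ∀ z, Solo G f A T z y → 0 < n z ∧ n z ≤ d + 1 := by
      intro z hz
      refine ⟨card_pos.2 ⟨y, by simpa using hz⟩, ?_⟩
      calc n z ≤ #(insert y ({w | G.Adj y w ∧ f w ∉ A} : Finset V)) := by
            refine card_le_card fun w hw => ?_
            have hw' : Solo G f A T z w := by simpa using hw
            by_cases hwy : w = y
            · exact hwy ▸ mem_insert_self _ _
            · refine mem_insert_of_mem ?_
              simp only [mem_filter, mem_univ, true_and]
              exact ⟨hclique z y w hz hw' (Ne.symm hwy), hw'.2.1⟩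
        _ ≤ _ := card_insert_le _ _
    have h3 : (#{z | Solo G f A T z y} : ℚ) * (1 / (d + 1)) ≤
        ∑ z with Solo G f A T z y, (1 : ℚ) / n z := by
      rw [← nsmul_eq_mul]
      refine card_nsmul_le_sum _ _ _ fun z hz => ?_
      obtain ⟨hpos, hle⟩ := hn z (by simpa using hz)
      have : (0 : ℚ) < n z := by exact_mod_cast hpos
      exact one_div_le_one_div_of_le this (by exact_mod_cast hle)
    refine le_trans ?_ h3
    have hq : (0 : ℚ) < #Aᶜ := by exact_mod_cast (by omega : 0 < #Aᶜ)
    have hd0 : (0 : ℚ) < d + 1 := by positivity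
    rw [mul_one_div, div_le_div_iff₀ hq hd0]
    have h1' : (#T : ℚ) + d + 1 ≤ #Aᶜ + #{z | Solo G f A T z y} := by exact_mod_cast h1
    have hdq' : (d : ℚ) + 1 ≤ #Aᶜ := by exact_mod_cast hdq
    have hT' : (#Aᶜ : ℚ) ≤ #T := by exact_mod_cast hT.le
    nlinarith [mul_nonneg (sub_nonneg.2 hdq') (sub_nonneg.2 hT')]
  have hsum : (#{v | f v ∉ A} : ℚ) * (#T / #Aᶜ) ≤ #T * s := by
    refine le_trans ?_ hupper
    rw [← nsmul_eq_mul]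
    exact card_nsmul_le_sum _ _ _ fun y hy => hlower y (mem_filter.1 hy).2
  obtain ⟨y, hy⟩ : ∃ y, f y ∉ A := by
    have : 0 < #{v | f v ∉ A} := by omega
    obtain ⟨y, hy⟩ := card_pos.1 this
    exact ⟨y, (mem_filter.1 hy).2⟩
  have h2 := card_add_card_neighbors_lt hdeg Subset.rfl (hB y hy)
  have hq : (0 : ℚ) < #Aᶜ := by exact_mod_cast (by omega : 0 < #Aᶜ)
  have hT0 : (0 : ℚ) < #T := by exact_mod_cast (by omega : 0 < #T)
  rw [hBcard, ← mul_div_assoc, div_le_iff₀ hq] at hsum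
  push_cast at hsum
  nlinarith

end Counting

section Main

variable {V C : Type*} [Fintype V] [Fintype C] {G : SimpleGraph V} {s : ℕ}

/-- A nearly equitable colouring can be made equitable, provided that every proper subset of the
vertices satisfying the analogous degree condition has an equitable colouring. -/
lemma NearlyEquitable.exists_equitable (hdeg : ∀ v, #{w | G.Adj v w} < Fintype.card C)
    (hsub : ∀ (X : Finset V) (K : Finset C), #X < Fintype.card V → #X = #K * s →
      (∀ v ∈ X, #{w ∈ X | G.Adj v w} < #K) → ∃ g : V → C, (∀ v ∈ X, g v ∈ K) ∧
        (∀ u ∈ X, ∀ v ∈ X, G.Adj u v → g u ≠ g v) ∧ ∀ c ∈ K, #{v ∈ X | g v = c} = s)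
    {f : V → C} {a b : C} (h : NearlyEquitable G s f a b) :
    ∃ g : V → C, NearlyEquitable G s g a a := by
  induction hn : #(accessible (Shift G f) a)ᶜ using Nat.strong_induction_on generalizing f b with
  | _ n ih
  by_cases hb : b ∈ accessible (Shift G f) a
  · obtain ⟨S, hS⟩ := mem_accessible.1 hb
    exact NearlyEquitable.exists_of_simplePath hS f (fun _ _ => rfl) (fun _ _ _ => rfl) h
  obtain ⟨x, hx, hxa⟩ := h.exists_mem_accessible_ne hdeg hb
  obtain ⟨u, huA, T, hTA, ⟨W₀, hW₀⟩, huT, haT, hterm, hTu⟩ := exists_terminal_set hx hxa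
  have haA := target_mem_accessible (Shift G f) a
  have hB : ∀ y, f y ∉ accessible (Shift G f) a → ∀ c ∈ accessible (Shift G f) a,
    ∃ w, G.Adj y w ∧ f w = c := fun y hy c hc => exists_neighbor_of_not_mem_accessible hy hc
  have hpath : ∀ {S c}, SimplePath (Shift G f) a S c → S ⊆ accessible (Shift G f) a :=
    fun h => h.subset_accessible
  have hcons : ∀ c ∈ accessible (Shift G f) a, c ≠ a → ∃ v d, f v = c ∧
      d ∈ accessible (Shift G f) a ∧ d ≠ c ∧ ∀ w, G.Adj v w → f w ≠ d := by
    intro c hc hca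
    obtain ⟨S, hS⟩ := mem_accessible.1 hc
    cases hS with
    | nil => exact absurd rfl hca
    | @cons S _ d hp hcd hcS =>
      obtain ⟨v, hv, hvd⟩ := hcd
      refine ⟨v, d, hv, mem_accessible.2 ⟨S, hp⟩, ?_, hvd⟩
      rintro rfl
      exact hcS hp.start_mem
  have hBcard := h.card_compl haA hb
  generalize accessible (Shift G f) a = A at *
  have hTcard : ∀ c ∈ T, #{v | f v = c} = s := fun c hc =>
    h.card_fiber (fun h => haT (h ▸ hc)) (fun h => hb (h ▸ hTA hc))
  have hcompl := card_add_card_compl A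
  have hg : ∀ y, f y ∉ A → ∃ g : V → C, (∀ v, f v ∉ A → v ≠ y → g v ∉ A) ∧
      (∀ u v, f u ∉ A → u ≠ y → f v ∉ A → v ≠ y → G.Adj u v → g u ≠ g v) ∧
      ∀ c ∉ A, #{v | (f v ∉ A ∧ v ≠ y) ∧ g v = c} = s := by
    intro y hy
    have hX : #{v | f v ∉ A ∧ v ≠ y} + 1 = #{v | f v ∉ A} := by
      rw [← card_erase_add_one (s := ({v | f v ∉ A} : Finset V)) (a := y) (by simpa using hy)]
      congr 2
      ext v
      simp [and_comm]
    obtain ⟨g, hgA, hgp, hgc⟩ := hsub {v | f v ∉ A ∧ v ≠ y} Aᶜ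
      (by have := card_le_univ ({v | f v ∉ A} : Finset V); omega) (by omega) (by
        intro v hv
        have hvA : f v ∉ A := (mem_filter.1 hv).2.1
        have h1 := card_add_card_neighbors_lt hdeg Subset.rfl (hB v hvA)
        have h2 : #{w ∈ ({v | f v ∉ A ∧ v ≠ y} : Finset V) | G.Adj v w} ≤
            #{w | G.Adj v w ∧ f w ∉ A} := by
          refine card_le_card fun w hw => ?_
          simp only [mem_filter, mem_univ, true_and] at hw ⊢
          exact ⟨hw.2, hw.1.1⟩
        omega)
    simp only [mem_filter, mem_univ, true_and, mem_compl, filter_filter] at hgA hgp hgc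
    exact ⟨g, fun v hv hvy => hgA v ⟨hv, hvy⟩,
      fun u v hu huy hv hvy => hgp u ⟨hu, huy⟩ v ⟨hv, hvy⟩, hgc⟩
  by_cases hmov : ∃ z y X, Solo G f A T z y ∧ X ∈ A ∧ X ≠ f z ∧ ∀ w, G.Adj z w → f w ≠ X
  · obtain ⟨z, y, X, ⟨hzT, hyA, -, hzy⟩, hXA, hXz, hzX⟩ := hmov
    obtain ⟨g, hgA, hgp, hgc⟩ := hg y hyA
    have hne := h.nearlyEquitable_recolor hb haA (hTA hzT) hyA hzy hgA hgp hgc hXz (by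
      intro w hw hwy
      split_ifs with hwA
      · exact hzX w hw
      · intro hwX
        exact hgA w hwA hwy (hwX ▸ hXA))
    obtain ⟨S, hS, hzS⟩ := hterm (f z) hzT X hXA hXz
    have hSA := hpath hS
    refine NearlyEquitable.exists_of_simplePath hS _ ?_ ?_ hne
    · intro v hv
      exact recolor_of_mem hyA (hSA hv) (by rintro rfl; exact hzS hv)
    · intro v hv hvX
      exact recolor_eq_of_mem hgA (hSA hv) hvX (fun h => hzS (h ▸ hv))
  push Not at hmov
  have hlt : #Aᶜ < #T := by
    refine card_compl_lt_card_of_solo hdeg hTA huA huT hW₀ hB hBcard (hTcard W₀ hW₀) ?_ ?_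
    · intro z hz c hc hcu hcT
      by_contra! hno
      exact hTu W₀ hW₀ c hc hcu hcT ⟨z, hz, hno⟩
    · intro z y hzy hz c hc hcW
      exact hmov z y c hzy hc (hz ▸ hcW)
  obtain ⟨z, y₁, y₂, h₁, h₂, hy, hadj⟩ := exists_solo_pair_not_adj hdeg hTA hlt hB hBcard hTcard
  have hznot := hmov z y₁
  obtain ⟨hzT, hy₁A, hy₁z, hzy₁⟩ := id h₁
  obtain ⟨-, hy₂A, hy₂z, hzy₂⟩ := h₂
  obtain ⟨g, hgA, hgp, hgc⟩ := hg y₁ hy₁A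
  obtain ⟨X, hXA, hX⟩ : ∃ X ∉ A, ∀ w, G.Adj z w → f w ∉ A → w ≠ y₁ → g w ≠ X := by
    have h1 := card_add_card_neighbors_lt hdeg (erase_subset (f z) A) (v := z) (f := f)
      (fun c hc => hznot c h₁ (mem_of_mem_erase hc) (ne_of_mem_erase hc))
    have h2 := card_erase_add_one (hTA hzT)
    have h3 := card_erase_add_one (s := ({w | G.Adj z w ∧ f w ∉ A} : Finset V)) (a := y₁)
      (by simpa using ⟨hy₁z.symm, hy₁A⟩)
    have h4 : #(image g (({w | G.Adj z w ∧ f w ∉ A} : Finset V).erase y₁)) < #Aᶜ :=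
      lt_of_le_of_lt card_image_le (by omega)
    obtain ⟨X, hX, hX'⟩ := exists_mem_notMem_of_card_lt_card h4
    refine ⟨X, mem_compl.1 hX, fun w hw hwA hwy hwX => hX' (mem_image.2 ⟨w, ?_, hwX⟩)⟩
    simp [hwy, hw, hwA]
  have hXz : X ≠ f z := by rintro rfl; exact hXA (hTA hzT)
  have hne := h.nearlyEquitable_recolor hb haA (hTA hzT) hy₁A hzy₁ hgA hgp hgc hXz (by
    intro w hw hwy
    split_ifs with hwA
    · rintro rfl; exact hXA hwA
    · exact hX w hw hwA hwy)
  refine ih _ ?_ hne rfl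
  have hkeep : ∀ w q, w ≠ z → f w ∈ A → q ∈ A → q ≠ f z → (∀ v, G.Adj w v → f v ≠ q) →
      recolor f g A z y₁ X w = f w ∧ ∀ v, G.Adj w v → recolor f g A z y₁ X v ≠ q := by
    intro w q hwz hwA hqA hqz hw
    refine ⟨?_, fun v hv => ?_⟩
    · exact recolor_of_mem hy₁A hwA hwz
    · rintro rfl
      exact hw v hv (recolor_eq_of_mem hgA hqA (fun h => hXA (h ▸ hqA)) hqz).symm
  have hAacc : ∀ c ∈ A, c ≠ f z → c ∈ accessible (Shift G (recolor f g A z y₁ X)) a := by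
    intro c hc hcz
    obtain ⟨S, hS, hzS⟩ := hterm (f z) hzT c hc hcz
    have hSA := hpath hS
    refine mem_accessible.2 ⟨S, hS.mono ?_⟩
    rintro p hp q hq ⟨w, rfl, hw⟩
    obtain ⟨h1, h2⟩ := hkeep w q (by rintro rfl; exact hzS hp) (hSA hp) (hSA hq)
      (by rintro rfl; exact hzS hq) hw
    exact ⟨w, h1, h2⟩
  have hzacc : f z ∈ accessible (Shift G (recolor f g A z y₁ X)) a := by
    obtain ⟨v, d, hv, hd, hdz, hvd⟩ := hcons (f z) (hTA hzT) (fun h => haT (h ▸ hzT))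
    have hvz : v ≠ z := by
      rintro rfl
      obtain ⟨w, hw, hwd⟩ := hznot d h₁ hd hdz
      exact hvd w hw hwd
    obtain ⟨h1, h2⟩ := hkeep v d hvz (hv ▸ hTA hzT) hd hdz hvd
    exact mem_accessible_of_rel ⟨v, h1.trans hv, h2⟩ (hAacc d hd hdz)
  have hy₂' : recolor f g A z y₁ X y₂ ∉ A := by
    rw [recolor_of_notMem (hTA hzT) hy₂A hy.symm]
    exact hgA y₂ hy₂A hy.symm
  have hy₂acc : recolor f g A z y₁ X y₂ ∈ accessible (Shift G (recolor f g A z y₁ X)) a := by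
    refine mem_accessible_of_rel ⟨y₂, rfl, fun w hw hwz => ?_⟩ hzacc
    have hwy₁ : w ≠ y₁ := by rintro rfl; exact hadj hw.symm
    have hwz' : w ≠ z := by rintro rfl; exact hXz (recolor_self.symm.trans hwz)
    by_cases hwA : f w ∈ A
    · rw [recolor_of_mem hy₁A hwA hwz'] at hwz
      exact hwz' (hzy₂ w hw hwz)
    · rw [recolor_of_notMem (hTA hzT) hwA hwy₁] at hwz
      exact hgA w hwA hwy₁ (hwz ▸ hTA hzT)
  rw [← hn]
  refine card_lt_card (compl_ssubset_compl.2 ((ssubset_iff_of_subset fun c hc => ?_).2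
    ⟨recolor f g A z y₁ X y₂, hy₂acc, hy₂'⟩))
  by_cases hcz : c = f z
  · exact hcz ▸ hzacc
  · exact hAacc c hc hcz

end Main

section Existence

lemma exists_coloring_fiber_card_eq (n : ℕ) : ∀ (V C : Type*) [Fintype V] [Fintype C]
    (G : SimpleGraph V) (s : ℕ), Fintype.card V = n → Fintype.card V = Fintype.card C * s →
    (∀ v, #{w | G.Adj v w} < Fintype.card C) →
    ∃ f : V → C, (∀ u v, G.Adj u v → f u ≠ f v) ∧ ∀ c, #{v | f v = c} = s := by
  induction n using Nat.strong_induction_on with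
  | _ n ih
  intro V C _ _ G s hn hcard hdeg
  have hC : ∀ v : V, Nonempty C := fun v => Fintype.card_pos_iff.1 (Nat.zero_lt_of_lt (hdeg v))
  have hsub : ∀ (G' : SimpleGraph V) (X : Finset V) (K : Finset C), #X < Fintype.card V →
      #X = #K * s → (∀ v ∈ X, #{w ∈ X | G'.Adj v w} < #K) → ∃ g : V → C, (∀ v ∈ X, g v ∈ K) ∧
        (∀ u ∈ X, ∀ v ∈ X, G'.Adj u v → g u ≠ g v) ∧ ∀ c ∈ K, #{v ∈ X | g v = c} = s := by
    intro G' X K hX hXK hXdeg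
    obtain ⟨g, hgp, hgc⟩ := ih (#X) (hn ▸ hX) X K (G'.comap Subtype.val) s (by simp)
      (by simpa using hXK) (by
        intro v
        rw [Fintype.card_coe]
        refine lt_of_le_of_lt ?_ (hXdeg v v.2)
        refine card_le_card_of_injOn Subtype.val ?_ Subtype.val_injective.injOn
        intro w hw
        simpa using hw)
    refine ⟨fun v => if h : v ∈ X then g ⟨v, h⟩ else Classical.choice (hC v), ?_, ?_, ?_⟩
    · intro v hv
      simp only [dif_pos hv]
      exact (g ⟨v, hv⟩).2
    · intro u hu v hv huv
      simp only [dif_pos hu, dif_pos hv]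
      exact fun h => hgp ⟨u, hu⟩ ⟨v, hv⟩ huv (Subtype.ext h)
    · intro c hc
      rw [← hgc ⟨c, hc⟩]
      symm
      refine card_bij (fun x _ => x.1) ?_ (fun x _ y _ h => Subtype.ext h) ?_
      · intro x hx
        have hxc : g x = ⟨c, hc⟩ := by simpa using hx
        exact mem_filter.2 ⟨x.2, by simp [hxc]⟩
      · intro v hv
        obtain ⟨hvX, hvc⟩ := mem_filter.1 hv
        simp only [dif_pos hvX] at hvc
        have hgv : g ⟨v, hvX⟩ = ⟨c, hc⟩ := Subtype.ext hvc
        exact ⟨⟨v, hvX⟩, by simpa using hgv, rfl⟩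
  let G' : Finset V → SimpleGraph V := fun Y =>
    { Adj := fun u v => G.Adj u v ∧ u ∈ Y ∧ v ∈ Y
      symm := ⟨fun _ _ h => ⟨h.1.symm, h.2.2, h.2.1⟩⟩
      loopless := ⟨fun _ h => h.1.ne rfl⟩ }
  have key : ∀ Y : Finset V, ∃ f : V → C, (∀ u v, (G' Y).Adj u v → f u ≠ f v) ∧
      ∀ c, #{v | f v = c} = s := by
    intro Y
    induction Y using Finset.induction_on with
    | empty =>
      let e : V ≃ C × Fin s := Fintype.equivOfCardEq (by simpa using hcard)
      refine ⟨fun v => (e v).1, fun u v h => absurd h.2.1 (notMem_empty u), fun c => ?_⟩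
      refine Eq.trans ?_ (card_fin s)
      refine card_bij (fun v _ => (e v).2) (fun _ _ => mem_univ _) ?_ ?_
      · intro u hu v hv h
        rw [mem_filter] at hu hv
        exact e.injective (Prod.ext (hu.2.trans hv.2.symm) h)
      · intro i _
        exact ⟨e.symm (c, i), by simp, by simp⟩
    | insert u Y hu ihY =>
      obtain ⟨f, hfp, hfc⟩ := ihY
      obtain ⟨X, -, hX⟩ := exists_mem_notMem_of_card_lt_card (s := image f {w | G.Adj u w})
        (t := univ) (lt_of_le_of_lt card_image_le (hdeg u))
      have hX' : ∀ w, G.Adj u w → f w ≠ X := fun w hw h => hX (mem_image.2 ⟨w, by simpa using hw, h⟩)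
      have hne : NearlyEquitable (G' (insert u Y)) s (Function.update f u X) (f u) X := by
        refine ⟨?_, fun c => ?_⟩
        · rintro v w ⟨hvw, hv, hw⟩
          by_cases hvu : v = u
          · subst hvu
            rw [Function.update_self, Function.update_of_ne hvw.ne']
            exact (hX' w hvw).symm
          · by_cases hwu : w = u
            · subst hwu
              rw [Function.update_self, Function.update_of_ne hvu]
              exact hX' v hvw.symm
            · rw [Function.update_of_ne hvu, Function.update_of_ne hwu]
              exact hfp v w ⟨hvw, mem_of_mem_insert_of_ne hv hvu, mem_of_mem_insert_of_ne hw hwu⟩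
        · rw [card_fiber_update, hfc]
      obtain ⟨g, hg⟩ := hne.exists_equitable (fun v => lt_of_le_of_lt (card_le_card fun w hw => by
        simp only [mem_filter, mem_univ, true_and] at hw ⊢
        exact hw.1) (hdeg v)) (hsub _)
      exact ⟨g, hg.proper, fun c => by simpa using hg.card c⟩
  obtain ⟨f, hfp, hfc⟩ := key univ
  exact ⟨f, fun u v h => hfp u v ⟨h, mem_univ _, mem_univ _⟩, hfc⟩

end Existence

end HajnalSzemeredi

/-- **Hajnal–Szemerédi.** Every finite simple graph with maximum degree at most `Δ`
admits an equitable `(Δ+1)`-coloring: a proper coloring whose color classes differ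
in size by at most 1. -/
theorem stmt6 {V : Type*} [Fintype V] [DecidableEq V] (G : SimpleGraph V)
    [DecidableRel G.Adj] (Δ : ℕ) (hΔ : ∀ v : V, G.degree v ≤ Δ) :
    ∃ f : V → Fin (Δ + 1),
      (∀ u v : V, G.Adj u v → f u ≠ f v) ∧
      ∀ x y : Fin (Δ + 1),
        (Finset.univ.filter fun v => f v = x).card ≤
          (Finset.univ.filter fun v => f v = y).card + 1 := by
  classical
  -- Adding a disjoint clique on `p ≤ Δ` vertices makes the number of vertices divisible by `Δ + 1`.
  obtain ⟨s, p, hp, hs⟩ : ∃ s p, p ≤ Δ ∧ Fintype.card V + p = (Δ + 1) * s := by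
    refine ⟨(Fintype.card V + Δ) / (Δ + 1), Δ - (Fintype.card V + Δ) % (Δ + 1), by omega, ?_⟩
    have h1 := Nat.div_add_mod (Fintype.card V + Δ) (Δ + 1)
    have h2 : (Fintype.card V + Δ) % (Δ + 1) < Δ + 1 := Nat.mod_lt _ (by omega)
    omega
  obtain ⟨f, hfp, hfc⟩ := HajnalSzemeredi.exists_coloring_fiber_card_eq _ (V ⊕ Fin p) (Fin (Δ + 1))
    (G ⊕g (⊤ : SimpleGraph (Fin p))) s rfl (by simpa using hs) (by
      rintro (v | i)
      · have h : ({w | (G ⊕g (⊤ : SimpleGraph (Fin p))).Adj (Sum.inl v) w} : Finset (V ⊕ Fin p)) =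
            (G.neighborFinset v).map Function.Embedding.inl := by
          ext (w | w) <;> simp
        have := hΔ v
        rw [← G.card_neighborFinset_eq_degree] at this
        rw [h, Finset.card_map, Fintype.card_fin]
        omega
      · refine lt_of_le_of_lt (b := p) ?_ (by rw [Fintype.card_fin]; omega)
        calc _ ≤ ((Finset.univ : Finset (Fin p)).map Function.Embedding.inr :
              Finset (V ⊕ Fin p)).card := by
              refine Finset.card_le_card ?_
              rintro (w | w) <;> simp
          _ = p := by simp)
  have hsplit : ∀ c, (Finset.univ.filter fun v => f (Sum.inl v) = c).card +
      (Finset.univ.filter fun i : Fin p => f (Sum.inr i) = c).card = s := by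
    intro c
    rw [← hfc c, Finset.card_filter, Finset.card_filter, Finset.card_filter, Fintype.sum_sum_type]
    congr!
  have hle : ∀ c, (Finset.univ.filter fun i : Fin p => f (Sum.inr i) = c).card ≤ 1 := by
    intro c
    rw [Finset.card_le_one]
    intro i hi j hj
    rw [Finset.mem_filter] at hi hj
    by_contra hij
    exact hfp (Sum.inr i) (Sum.inr j) (by simpa using hij) (hi.2.trans hj.2.symm)
  refine ⟨fun v => f (Sum.inl v), fun u v h => hfp _ _ (by simpa using h), fun x y => ?_⟩
  have := hsplit x
  have := hsplit y
  have := hle y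
  dsimp only
  omega
end
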